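/- arXiv:1911.09921 — 3 statements merged into one kernel-verified Lean document; each statement's English description precedes it below -/
import Mathlib

section
/- Let D be a domain in ℂⁿ admitting a psh peak function for a point p ∈ ∂D, and let U be a bounded open neighborhood of p. Then lim_{z→p} K_D(z;X)/K_{D∩U}(z;X) = 1 uniformly in X ∈ ℂⁿ∖{0}; that is, for every ε > 0 there is a neighborhood W of p such that (1−ε) K_{D∩U}(z;X) ≤ K_D(z;X) ≤ K_{D∩U}(z;X) for all z ∈ D ∩ W and all X ∈ ℂⁿ. -/
open Set Metric Filter Topology
open scoped Classical

noncomputable section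

/-- `ℂⁿ` with the Euclidean norm. -/
abbrev Cn (n : ℕ) := EuclideanSpace ℂ (Fin n)

/-- A function `u : ℂⁿ → [-∞,∞)` (with values in `EReal`) is plurisubharmonic on `D` if it
is upper semicontinuous on `D` and satisfies the sub-mean-value inequality on every closed
disc in a complex line contained in `D` (stated via continuous majorants on the boundary
circle, so as to handle the value `-∞`). -/
def PSHOn {n : ℕ} (u : Cn n → EReal) (D : Set (Cn n)) : Prop :=
  UpperSemicontinuousOn u D ∧
  ∀ a ∈ D, ∀ b : Cn n, ∀ r : ℝ, 0 < r →
    (∀ t : ℂ, ‖t‖ ≤ r → a + t • b ∈ D) →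
    ∀ g : ℝ → ℝ, Continuous g →
      (∀ θ : ℝ, u (a + ((r : ℂ) * Complex.exp (θ * Complex.I)) • b) ≤ (g θ : EReal)) →
      u a ≤ (((1 / (2 * Real.pi)) * ∫ θ in (0:ℝ)..(2 * Real.pi), g θ : ℝ) : EReal)

/-- `φ` is a plurisubharmonic peak function for `D` at the boundary point `p`:
`φ` is psh on `D`, `φ(z) → 0` as `z → p` in `D`, and `sup_{D∖U} φ < 0` for every
neighborhood `U` of `p`. -/
def IsPshPeakFn {n : ℕ} (D : Set (Cn n)) (p : Cn n) (φ : Cn n → EReal) : Prop :=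
  PSHOn φ D ∧ Tendsto φ (𝓝[D] p) (𝓝 (0 : EReal)) ∧
  ∀ U ∈ 𝓝 p, ∃ c : ℝ, c < 0 ∧ ∀ z ∈ D \ U, φ z ≤ (c : EReal)

/-- The Kobayashi metric of `D`:
`K_D(z;X) = inf {|α| : ∃ f : 𝔻 → D holomorphic, f 0 = z, α • f' 0 = X}`. -/
def kobayashi {n : ℕ} (D : Set (Cn n)) (z X : Cn n) : ℝ :=
  sInf {c : ℝ | ∃ α : ℂ, c = ‖α‖ ∧ ∃ f : ℂ → Cn n,
    DifferentiableOn ℂ f (ball (0:ℂ) 1) ∧ MapsTo f (ball (0:ℂ) 1) D ∧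
    f 0 = z ∧ α • deriv f 0 = X}


lemma avg_norm_sub_sq {E : Type*} [NormedAddCommGroup E] [InnerProductSpace ℂ E] [CompleteSpace E]
    (y : E) (e : ℂ → E) (c : ℂ) (s : ℝ) (hs : 0 < s)
    (he : DiffContOnCl ℂ e (ball c s)) (h0 : e c = 0) :
    Real.circleAverage (fun w => ‖y - e w‖ ^ 2) c s
      = ‖y‖ ^ 2 + Real.circleAverage (fun w => ‖e w‖ ^ 2) c s := by
  have hcont : ContinuousOn e (sphere c |s|) := by
    rw [abs_of_pos hs]
    exact he.continuousOn_ball.mono sphere_subset_closedBall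
  have h1 : (fun w => ‖y - e w‖ ^ 2) =
      (fun _ => ‖y‖ ^ 2) + (((-2 : ℝ) • fun w => (inner ℂ y (e w)).re) + (fun w => ‖e w‖ ^ 2)) := by
    funext w
    rw [@norm_sub_sq ℂ]
    simp only [Pi.add_apply, Pi.smul_apply, smul_eq_mul]
    simp only [RCLike.re_to_complex]
    ring
  have i2 : CircleIntegrable (fun w => (inner ℂ y (e w)).re) c s := by
    apply ContinuousOn.circleIntegrable'
    exact Complex.continuous_re.comp_continuousOn (continuousOn_const.inner hcont)
  have i3 : CircleIntegrable (fun w => ‖e w‖ ^ 2) c s := by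
    apply ContinuousOn.circleIntegrable'
    exact hcont.norm.pow 2
  have i1 : CircleIntegrable (fun _ : ℂ => ‖y‖ ^ 2) c s := by
    apply ContinuousOn.circleIntegrable'
    exact continuousOn_const
  have h3 : DiffContOnCl ℂ (fun w => inner ℂ y (e w)) (ball c |s|) := by
    rw [abs_of_pos hs]
    exact ((innerSL ℂ y).differentiable.comp_diffContOnCl he)
  have h4 := h3.circleAverage
  have h2 : Real.circleAverage (fun w => (inner ℂ y (e w)).re) c s = 0 := by
    have hi : CircleIntegrable (fun w => inner ℂ y (e w)) c s := by
      apply ContinuousOn.circleIntegrable'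
      exact (continuousOn_const.inner hcont)
    have := Complex.reCLM.circleAverage_comp_comm hi
    simp only [Function.comp_def, Complex.reCLM_apply] at this
    rw [this, h4, h0]; simp
  rw [h1, Real.circleAverage_add i1 ((i2.const_smul).add i3), Real.circleAverage_add i2.const_smul i3,
    Real.circleAverage_smul, h2, Real.circleAverage_const]
  simp

lemma avg_mono_const {g : ℂ → ℝ} {c : ℂ} {s C : ℝ} (hg : ContinuousOn g (sphere c |s|))
   (h : ∀ w ∈ sphere c |s|, g w ≤ C) : Real.circleAverage g c s ≤ C :=
  Real.circleAverage_mono_on_of_le_circle hg.circleIntegrable' h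

lemma no_local_max {E : Type*} [NormedAddCommGroup E] [InnerProductSpace ℂ E] [CompleteSpace E]
    (v : E → ℝ) (D : Set E)
    (hline : ∀ a ∈ D, ∀ b : E, ∀ r : ℝ, 0 < r → (∀ t : ℂ, ‖t‖ ≤ r → a + t • b ∈ D) →
      ∀ g : ℝ → ℝ, Continuous g →
      (∀ θ : ℝ, v (a + ((r : ℂ) * Complex.exp (θ * Complex.I)) • b) ≤ g θ) →
      v a ≤ (1 / (2 * Real.pi)) * ∫ θ in (0:ℝ)..(2 * Real.pi), g θ)
    (f : ℂ → E) (h : ℂ → ℝ) (x : E) (ζ : ℂ) (k η : ℝ) (hk : 0 ≤ k) (hη : 0 < η)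
    (hf : ∀ᶠ w in 𝓝 ζ, DifferentiableAt ℂ f w) (hDx : D ∈ 𝓝 x)
    (hh : ∀ᶠ w in 𝓝 ζ, ContinuousAt h w)
    (havg : ∀ᶠ s in 𝓝[>] (0:ℝ), Real.circleAverage h ζ s ≤ h ζ - η * s ^ 2)
    (hmax : ∀ᶠ q in 𝓝 (x, ζ), v q.1 - h q.2 - k * ‖q.1 - f q.2‖ ^ 2
      ≤ v x - h ζ - k * ‖x - f ζ‖ ^ 2) : False := by
  set b := deriv f ζ with hb
  set ε := Real.sqrt (η / (2 * (k + 1))) with hε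
  have hεpos : 0 < ε := Real.sqrt_pos.2 (by positivity)
  have hε2 : k * ε ^ 2 < η := by
    rw [hε, Real.sq_sqrt (by positivity), mul_div_assoc', div_lt_iff₀ (by positivity)]
    nlinarith
  have hder : HasDerivAt f b ζ := hf.self_of_nhds.hasDerivAt
  have hsmall : ∀ᶠ w in 𝓝 ζ, ‖f w - f ζ - (w - ζ) • b‖ ≤ ε * ‖w - ζ‖ :=
    hder.isLittleO.bound hεpos
  have hmap : Tendsto (fun w : ℂ => (x + (w - ζ) • b, w)) (𝓝 ζ) (𝓝 (x, ζ)) := by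
    have : ContinuousAt (fun w : ℂ => (x + (w - ζ) • b, w)) ζ := by fun_prop
    simpa [ContinuousAt] using this
  have hmapD : ∀ᶠ w in 𝓝 ζ, x + (w - ζ) • b ∈ D := by
    have : ContinuousAt (fun w : ℂ => x + (w - ζ) • b) ζ := by fun_prop
    exact this (by simpa using hDx)
  have hall := hf.and (hh.and (hsmall.and ((hmap.eventually hmax).and hmapD)))
  obtain ⟨δ, hδ, hball⟩ := Metric.eventually_nhds_iff_ball.1 hall
  obtain ⟨s, hs1, hs0, hsδ⟩ := (havg.and (Ioo_mem_nhdsGT hδ)).exists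
  set e : ℂ → E := fun w => f w - f ζ - (w - ζ) • b with he
  set y := x - f ζ with hy
  have hcb : closedBall ζ s ⊆ ball ζ δ := closedBall_subset_ball hsδ
  have hsph : sphere ζ |s| ⊆ ball ζ δ := by
    rw [abs_of_pos hs0]; exact sphere_subset_closedBall.trans hcb
  have hediff : ∀ w ∈ ball ζ δ, DifferentiableAt ℂ e w := fun w hw => by
    have := (hball w hw).1
    fun_prop
  have hecl : DiffContOnCl ℂ e (ball ζ s) := by
    apply DifferentiableOn.diffContOnCl
    rw [closure_ball _ hs0.ne']
    exact fun w hw => (hediff w (hcb hw)).differentiableWithinAt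
  have hec : ContinuousOn e (sphere ζ |s|) := fun w hw =>
    (hediff w (hsph hw)).continuousAt.continuousWithinAt
  have hhc : ContinuousOn h (sphere ζ |s|) := fun w hw =>
    (hball w (hsph hw)).2.1.continuousWithinAt
  set G : ℂ → ℝ := (fun w => h w) + ((fun _ => v x - h ζ - k * ‖y‖ ^ 2) +
    (k • fun w => ‖y - e w‖ ^ 2)) with hG
  have c1 : ContinuousOn (fun _ : ℂ => v x - h ζ - k * ‖y‖ ^ 2) (sphere ζ |s|) := continuousOn_const
  have c2 : ContinuousOn (fun w => ‖y - e w‖ ^ 2) (sphere ζ |s|) := by fun_prop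
  have c3 : ContinuousOn (k • fun w => ‖y - e w‖ ^ 2) (sphere ζ |s|) := c2.const_smul k
  have hGc : ContinuousOn G (sphere ζ |s|) := hhc.add (c1.add c3)
  have key := hline x (mem_of_mem_nhds hDx) b s hs0 (fun t ht => by
      have := (hball (ζ + t) (hcb (by simpa using ht))).2.2.2.2
      simpa using this) (fun θ => G (circleMap ζ s θ))
      (hGc.comp_continuous (continuous_circleMap ζ s) (fun θ => circleMap_mem_sphere' ζ s θ))
      (fun θ => by
        have := (hball (circleMap ζ s θ) (hsph (circleMap_mem_sphere' ζ s θ))).2.2.2.1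
        have e1 : x + (circleMap ζ s θ - ζ) • b - f (circleMap ζ s θ) = y - e (circleMap ζ s θ) := by
          simp only [he, hy]; abel
        simp only at this
        rw [e1] at this
        have e2 : (s : ℂ) * Complex.exp (θ * Complex.I) = circleMap ζ s θ - ζ := by
          simp [circleMap]
        rw [e2]
        simp only [hG, Pi.add_apply, Pi.smul_apply, smul_eq_mul]
        linarith)
  have hav : (1 / (2 * Real.pi)) * ∫ θ in (0:ℝ)..(2 * Real.pi), G (circleMap ζ s θ)
      = Real.circleAverage G ζ s := by
    simp [Real.circleAverage]
  rw [hav, hG, Real.circleAverage_add hhc.circleIntegrable' (c1.add c3).circleIntegrable',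
    Real.circleAverage_add c1.circleIntegrable' c3.circleIntegrable', Real.circleAverage_smul,
    Real.circleAverage_const, avg_norm_sub_sq y e ζ s hs0 hecl (by simp [he])] at key
  have he2 : Real.circleAverage (fun w => ‖e w‖ ^ 2) ζ s ≤ ε ^ 2 * s ^ 2 := by
    apply avg_mono_const (by fun_prop)
    intro w hw
    have h1 := (hball w (hsph hw)).2.2.1
    have h2 : ‖w - ζ‖ = s := by simpa [abs_of_pos hs0, dist_eq_norm] using hw
    rw [h2] at h1
    rw [← mul_pow]
    exact pow_le_pow_left₀ (norm_nonneg _) h1 2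
  have h5 : k * Real.circleAverage (fun w => ‖e w‖ ^ 2) ζ s ≤ k * (ε ^ 2 * s ^ 2) := by gcongr
  have h6 : k * ε ^ 2 * s ^ 2 < η * s ^ 2 := by gcongr
  simp only [smul_eq_mul] at key
  have : Real.circleAverage (fun w => h w) ζ s = Real.circleAverage h ζ s := rfl
  nlinarith

lemma comparison {E : Type*} [NormedAddCommGroup E] [InnerProductSpace ℂ E] [CompleteSpace E]
    [ProperSpace E] (v : E → ℝ) (D : Set E) (hD : IsOpen D) (husc : UpperSemicontinuousOn v D)
    (hv0 : ∀ x ∈ D, v x ≤ 0)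
    (hline : ∀ a ∈ D, ∀ b : E, ∀ r : ℝ, 0 < r → (∀ t : ℂ, ‖t‖ ≤ r → a + t • b ∈ D) →
      ∀ g : ℝ → ℝ, Continuous g →
      (∀ θ : ℝ, v (a + ((r : ℂ) * Complex.exp (θ * Complex.I)) • b) ≤ g θ) →
      v a ≤ (1 / (2 * Real.pi)) * ∫ θ in (0:ℝ)..(2 * Real.pi), g θ)
    (f : ℂ → E) (V : Set ℂ) (hV : IsOpen V) (hf : DifferentiableOn ℂ f V) (hfD : MapsTo f V D)
    (A : Set ℂ) (hA : IsCompact A) (hAV : A ⊆ V) (h : ℂ → ℝ) (hh : ContinuousOn h A)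
    (η : ℝ) (hη : 0 < η)
    (hgood : ∀ ζ ∈ A, v (f ζ) ≤ h ζ ∨ ∀ᶠ w in 𝓝 ζ, w ∈ A ∧
      ∀ᶠ s in 𝓝[>] (0:ℝ), Real.circleAverage h w s ≤ h w - η * s ^ 2) :
    ∀ ζ ∈ A, v (f ζ) ≤ h ζ := by
  intro ζ0 hζ0
  by_contra hcon
  push Not at hcon
  set m0 := v (f ζ0) - h ζ0 with hm0
  have hm0pos : 0 < m0 := by linarith
  have hfc : ContinuousOn f A := hf.continuousOn.mono hAV
  obtain ⟨ρ, hρ, hthick⟩ := (hA.image_of_continuousOn hfc).exists_cthickening_subset_open hD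
    (by rintro _ ⟨w, hw, rfl⟩; exact hfD (hAV hw))
  set K : Set (E × ℂ) := {q | q.2 ∈ A ∧ ‖q.1 - f q.2‖ ≤ ρ} with hK
  have hKc : IsCompact K := by
    have h1 : IsCompact ((closedBall (0:E) ρ) ×ˢ A) := (isCompact_closedBall _ _).prod hA
    have h2 : ContinuousOn (fun q : E × ℂ => (q.1 + f q.2, q.2)) ((closedBall (0:E) ρ) ×ˢ A) := by
      apply ContinuousOn.prodMk _ continuousOn_snd
      exact continuousOn_fst.add (hfc.comp continuousOn_snd (fun q hq => hq.2))
    have h3 := h1.image_of_continuousOn h2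
    convert h3 using 1
    ext ⟨x, w⟩
    constructor
    · rintro ⟨h4, h5⟩
      exact ⟨(x - f w, w), ⟨by simpa using h5, h4⟩, by simp⟩
    · rintro ⟨⟨x', w'⟩, ⟨h4, h5⟩, h6⟩
      simp only [Prod.mk.injEq] at h6
      obtain ⟨rfl, rfl⟩ := h6
      exact ⟨h5, by simpa using h4⟩
  have hKD : ∀ q ∈ K, q.1 ∈ D := fun q hq => hthick
    (mem_cthickening_of_dist_le q.1 (f q.2) ρ _ (mem_image_of_mem f hq.1)
      (by rw [dist_eq_norm]; exact hq.2))
  have hdc : ContinuousOn (fun q : E × ℂ => ‖q.1 - f q.2‖ ^ 2) K := by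
    have : ContinuousOn (fun q : E × ℂ => f q.2) K := hfc.comp continuousOn_snd (fun q hq => hq.1)
    exact (continuousOn_fst.sub this).norm.pow 2
  have hhc : ContinuousOn (fun q : E × ℂ => - h q.2) K :=
    (hh.comp continuousOn_snd (fun q hq => hq.1)).neg
  have hvu : UpperSemicontinuousOn (fun q : E × ℂ => v q.1) K := by
    intro q hq y hy
    have h1 := husc q.1 (hKD q hq) y hy
    have h2 : Tendsto Prod.fst (𝓝[K] q) (𝓝[D] q.1) :=
      tendsto_nhdsWithin_of_tendsto_nhds_of_eventually_within _
        (continuous_fst.continuousAt.mono_left nhdsWithin_le_nhds)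
        (eventually_nhdsWithin_of_forall hKD)
    exact h2.eventually h1
  have hvh : UpperSemicontinuousOn (fun q : E × ℂ => v q.1 + - h q.2) K :=
    hvu.add hhc.upperSemicontinuousOn
  have h0K : (f ζ0, ζ0) ∈ K := ⟨hζ0, by simpa using hρ.le⟩
  have hmaxex : ∀ k : ℕ, ∃ q ∈ K, IsMaxOn
      (fun q : E × ℂ => (v q.1 + - h q.2) + -(k * ‖q.1 - f q.2‖ ^ 2)) K q := by
    intro k
    apply UpperSemicontinuousOn.exists_isMaxOn ⟨_, h0K⟩ hKc
    apply hvh.add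
    apply ContinuousOn.upperSemicontinuousOn
    exact (continuousOn_const.mul hdc).neg
  choose q hqK hqmax using hmaxex
  have hqm0 : ∀ k, m0 ≤ (v (q k).1 + - h (q k).2) + -(k * ‖(q k).1 - f (q k).2‖ ^ 2) := by
    intro k
    have := hqmax k h0K
    simp at this
    linarith
  obtain ⟨B, hB⟩ := hA.exists_bound_of_continuousOn hh
  obtain ⟨qi, hqi, σ, hσ, hlim⟩ := hKc.tendsto_subseq hqK
  have hlim' : Tendsto (q ∘ σ) atTop (𝓝[K] qi) :=
    tendsto_nhdsWithin_of_tendsto_nhds_of_eventually_within _ hlim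
      (Eventually.of_forall fun k => hqK _)
  have hd0 : ‖qi.1 - f qi.2‖ ^ 2 = 0 := by
    have t1 : Tendsto (fun k => ‖(q (σ k)).1 - f (q (σ k)).2‖ ^ 2) atTop
      (𝓝 (‖qi.1 - f qi.2‖ ^ 2)) := (hdc qi hqi).tendsto.comp hlim'
    have t2 : Tendsto (fun k : ℕ => B / (σ k : ℝ)) atTop (𝓝 0) :=
      tendsto_const_nhds.div_atTop (tendsto_natCast_atTop_atTop.comp hσ.tendsto_atTop)
    have t3 : Tendsto (fun k => ‖(q (σ k)).1 - f (q (σ k)).2‖ ^ 2) atTop (𝓝 0) := by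
      apply squeeze_zero' (Eventually.of_forall fun k => by positivity) _ t2
      filter_upwards [eventually_gt_atTop 0] with k hk
      have hσk : 0 < (σ k : ℝ) := by
        exact_mod_cast lt_of_lt_of_le hk (hσ.id_le k)
      rw [le_div_iff₀ hσk]
      have a1 := hqm0 (σ k)
      have a2 := hv0 _ (hKD _ (hqK (σ k)))
      have a3 := hB _ (hqK (σ k)).1
      rw [Real.norm_eq_abs] at a3
      have a4 := (abs_le.1 a3).1
      linarith
    exact tendsto_nhds_unique t1 t3
  have hxi : qi.1 = f qi.2 := by
    have := pow_eq_zero_iff (two_ne_zero) |>.1 hd0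
    rwa [norm_eq_zero, sub_eq_zero] at this
  have hvi : m0 ≤ v qi.1 + - h qi.2 := by
    by_contra hlt
    push Not at hlt
    obtain ⟨k, hk⟩ := (hlim'.eventually (hvh qi hqi m0 hlt)).exists
    have a1 := hqm0 (σ k)
    simp only [Function.comp] at hk
    have : 0 ≤ (σ k : ℝ) * ‖(q (σ k)).1 - f (q (σ k)).2‖ ^ 2 := by positivity
    linarith
  rcases hgood qi.2 hqi.1 with hbad | hgd
  · rw [← hxi] at hbad; linarith
  have hgd2 := eventually_eventually_nhds.2 hgd
  have l2 : Tendsto (fun k => (q (σ k)).2) atTop (𝓝 qi.2) :=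
    (continuous_snd.tendsto qi).comp hlim
  have hlt : ∀ᶠ k in atTop, ‖(q (σ k)).1 - f (q (σ k)).2‖ ^ 2 < ρ ^ 2 := by
    have t1 : Tendsto (fun k => ‖(q (σ k)).1 - f (q (σ k)).2‖ ^ 2) atTop
      (𝓝 (‖qi.1 - f qi.2‖ ^ 2)) := (hdc qi hqi).tendsto.comp hlim'
    rw [hd0] at t1
    exact t1.eventually (gt_mem_nhds (by positivity))
  obtain ⟨k, hk1, hk2⟩ := ((l2.eventually hgd2).and hlt).exists
  set x := (q (σ k)).1 with hx
  set ζ := (q (σ k)).2 with hζ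
  have hlt' : ‖x - f ζ‖ < ρ := lt_of_pow_lt_pow_left₀ 2 hρ.le hk2
  have hζA : ζ ∈ A := (hqK (σ k)).1
  have hfat : ContinuousAt f ζ := (hf.differentiableAt (hV.mem_nhds (hAV hζA))).continuousAt
  refine no_local_max v D hline f h x ζ (σ k) η (by positivity) hη ?_ ?_ ?_ ?_ ?_
  · filter_upwards [hV.mem_nhds (hAV hζA)] with w hw
    exact hf.differentiableAt (hV.mem_nhds hw)
  · exact hD.mem_nhds (hKD _ (hqK (σ k)))
  · filter_upwards [eventually_eventually_nhds.2 hk1] with w hw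
    exact hh.continuousAt (hw.mono fun _ h => h.1)
  · exact hk1.self_of_nhds.2
  · have c1 : ContinuousAt (fun q : E × ℂ => ‖q.1 - f q.2‖) (x, ζ) := by
      have : ContinuousAt (fun q : E × ℂ => f q.2) (x, ζ) :=
        ContinuousAt.comp (f := Prod.snd) (x := (x, ζ)) hfat continuousAt_snd
      exact (continuousAt_fst.sub this).norm
    have e1 : ∀ᶠ q' in 𝓝 (x, ζ), ‖q'.1 - f q'.2‖ < ρ := c1.eventually (gt_mem_nhds hlt')
    have e2 : ∀ᶠ q' : E × ℂ in 𝓝 (x, ζ), q'.2 ∈ A :=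
      (continuous_snd.tendsto (x, ζ)).eventually (hk1.mono fun _ h => h.1)
    filter_upwards [e1, e2] with q' h1 h2
    have := hqmax (σ k) (show q' ∈ K from ⟨h2, h1.le⟩)
    simp only [mem_ofPred_eq] at this
    linarith

lemma sum_T_le (n : ℕ) : ∑ i ∈ Finset.range n, 1 / Real.sqrt (max 1 (i : ℝ)) ≤ 3 * Real.sqrt n := by
  induction n with
  | zero => simp
  | succ n ih =>
    rw [Finset.sum_range_succ]
    rcases Nat.eq_zero_or_pos n with rfl | hn
    · simp
    · have h1 : (1:ℝ) ≤ n := by exact_mod_cast hn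
      rw [max_eq_right h1]
      have ha : 0 < Real.sqrt n := Real.sqrt_pos.2 (by linarith)
      have hb : 0 < Real.sqrt ((n + 1 : ℕ) : ℝ) := Real.sqrt_pos.2 (by push_cast; linarith)
      set a := Real.sqrt n
      set b := Real.sqrt ((n + 1 : ℕ) : ℝ)
      have ha2 : a ^ 2 = n := Real.sq_sqrt (by linarith)
      have hb2 : b ^ 2 = n + 1 := by
        have := Real.sq_sqrt (show (0:ℝ) ≤ ((n + 1 : ℕ) : ℝ) by positivity)
        push_cast at this; exact_mod_cast this
      have hba : b ≤ 2 * a := by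
        apply le_of_sq_le_sq _ (by positivity)
        nlinarith
      have : 1 / a ≤ 3 * (b - a) := by
        rw [div_le_iff₀ ha]
        have : (b - a) * (b + a) = 1 := by nlinarith
        have hpos : 0 < b - a := by nlinarith
        nlinarith
      linarith

lemma sum_T_dist_le (N m : ℕ) (hm : m ≤ N) :
    ∑ j ∈ Finset.range N, 1 / Real.sqrt (max 1 |(j : ℝ) - m|) ≤ 6 * Real.sqrt N := by
  rw [← Finset.sum_range_add_sum_Ico _ hm]
  have h1 : ∑ j ∈ Finset.range m, 1 / Real.sqrt (max 1 |(j : ℝ) - m|) ≤ 3 * Real.sqrt m := by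
    refine le_trans ?_ (sum_T_le m)
    rw [← Finset.sum_range_reflect]
    apply Finset.sum_le_sum
    intro i hi
    have hi' := Finset.mem_range.1 hi
    have : ((m - 1 - i : ℕ) : ℝ) - m = -(i + 1) := by
      have : (m - 1 - i) + (i + 1) = m := by omega
      have h' : ((m - 1 - i : ℕ) : ℝ) + (i + 1) = m := by exact_mod_cast this
      linarith
    rw [this, abs_neg, abs_of_nonneg (by positivity)]
    gcongr
    linarith
  have h2 : ∑ j ∈ Finset.Ico m N, 1 / Real.sqrt (max 1 |(j : ℝ) - m|) ≤ 3 * Real.sqrt N := by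
    rw [Finset.sum_Ico_eq_sum_range]
    refine le_trans (le_of_eq ?_) ((sum_T_le (N - m)).trans ?_)
    · apply Finset.sum_congr rfl
      intro i _
      congr 3
      push_cast
      rw [add_sub_cancel_left, abs_of_nonneg (by positivity)]
    · gcongr
      omega
  have h3 : Real.sqrt m ≤ Real.sqrt N := by gcongr
  linarith

lemma sum_log_lower (r : ℝ) (hr1 : r < 1) (N : ℕ) (hN : 0 < N) (ρ : ℝ) (hρ1 : ρ ≤ 1)
    (a : ℕ → ℝ) (h1 : ∀ j < N, (1 - r) / N ≤ a j)
    (h2 : ∀ j < N, |ρ - (r + j * ((1 - r) / N))| ≤ a j) :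
    -(24 / Real.sqrt (1 - r)) * N ≤ ∑ j ∈ Finset.range N, Real.log (a j / 2) := by
  have hN' : (0:ℝ) < N := by exact_mod_cast hN
  set d := (1 - r) / N with hd
  have hdpos : 0 < d := div_pos (by linarith) hN'
  set t := (ρ - r) / d with ht
  set m := ⌊t⌋₊ with hm
  have htN : t ≤ N := by
    rw [ht, div_le_iff₀ hdpos, hd, mul_div_cancel₀ _ hN'.ne']; linarith
  have hmN : m ≤ N := by
    apply Nat.floor_le_of_le htN
  have hdist : ∀ j : ℕ, max 1 |(j:ℝ) - m| ≤ 2 * max 1 |t - j| := by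
    intro j
    have hl := le_max_left 1 |t - j|
    have hr := le_max_right 1 |t - j|
    apply max_le (by linarith)
    rcases le_or_gt 0 t with h0 | h0
    · have e1 := Nat.floor_le h0
      have e2 := Nat.lt_floor_add_one t
      have e3 : |t - m| ≤ 1 := by rw [abs_le]; constructor <;> linarith
      calc |(j:ℝ) - m| = |(t - m) - (t - j)| := by congr 1; ring
        _ ≤ |t - m| + |t - j| := abs_sub _ _
        _ ≤ _ := by linarith
    · have e1 : m = 0 := Nat.floor_of_nonpos h0.le
      have : |t - j| = j - t := by
        have h0j : (0:ℝ) ≤ j := by positivity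
        rw [abs_of_neg (by linarith)]; ring
      rw [e1, Nat.cast_zero, sub_zero, abs_of_nonneg (by positivity)]
      linarith
  have hterm : ∀ j ∈ Finset.range N, -(4 / Real.sqrt d) * (1 / Real.sqrt (max 1 |(j : ℝ) - m|))
      ≤ Real.log (a j / 2) := by
    intro j hj
    have hj' := Finset.mem_range.1 hj
    have ha1 := h1 j hj'
    have ha2 := h2 j hj'
    have hmx : d * max 1 |t - j| ≤ a j := by
      rw [mul_max_of_nonneg _ _ hdpos.le]
      apply max_le (by linarith)
      have : d * |t - j| = |ρ - (r + j * d)| := by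
        rw [← abs_of_pos hdpos, ← abs_mul, abs_of_pos hdpos]
        congr 1
        rw [ht]; field_simp; ring
      rw [this]; exact ha2
    set M := max 1 |(j:ℝ) - m| with hM
    have hMpos : 0 < M := lt_of_lt_of_le one_pos (le_max_left _ _)
    have hq : d * M / 4 ≤ a j / 2 := by nlinarith [hdist j]
    have hqpos : 0 < d * M / 4 := by positivity
    have hlog : Real.log (d * M / 4) ≤ Real.log (a j / 2) := Real.log_le_log hqpos hq
    refine le_trans ?_ hlog
    set q := d * M / 4 with hqdef
    have hsq : 0 < Real.sqrt q := Real.sqrt_pos.2 hqpos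
    have hl1 : Real.log q = 2 * Real.log (Real.sqrt q) := by
      rw [Real.log_sqrt hqpos.le]; ring
    have hl2 := Real.one_sub_inv_le_log_of_pos hsq
    have hs : Real.sqrt q = Real.sqrt d * Real.sqrt M / 2 := by
      rw [hqdef, Real.sqrt_div (by positivity), Real.sqrt_mul hdpos.le]
      congr 1
      rw [show (4:ℝ) = 2 ^ 2 by norm_num, Real.sqrt_sq (by norm_num)]
    rw [hl1]
    have : -(4 / Real.sqrt d) * (1 / Real.sqrt M) = 2 * (-(Real.sqrt q)⁻¹) := by
      rw [hs]
      have := Real.sqrt_pos.2 hdpos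
      have := Real.sqrt_pos.2 hMpos
      field_simp
      norm_num
    rw [this]
    linarith
  refine le_trans ?_ (Finset.sum_le_sum hterm)
  rw [← Finset.mul_sum]
  have hS := sum_T_dist_le N m hmN
  have hsd : 0 < Real.sqrt d := Real.sqrt_pos.2 hdpos
  have hfin : -(4 / Real.sqrt d) * (6 * Real.sqrt N) = -(24 / Real.sqrt (1 - r)) * N := by
    rw [hd, Real.sqrt_div (by linarith)]
    have h1 := Real.sqrt_pos.2 hN'
    have h2 : 0 < Real.sqrt (1 - r) := Real.sqrt_pos.2 (by linarith)
    have h3 : Real.sqrt N * Real.sqrt N = N := Real.mul_self_sqrt hN'.le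
    field_simp
    nlinarith
  rw [← hfin]
  have : 0 ≤ 4 / Real.sqrt d := by positivity
  nlinarith
/-- Green potential of finitely many points of the unit disc. -/
def greenSum (e : ℕ → ℂ) (N : ℕ) (ζ : ℂ) : ℝ :=
  ∑ j ∈ Finset.range N, (Real.log ‖ζ - e j‖ - Real.log ‖1 - (starRingEnd ℂ) (e j) * ζ‖)

lemma one_sub_conj_ne {e ζ : ℂ} (he : ‖e‖ < 1) (hζ : ‖ζ‖ ≤ 1) :
    1 - (starRingEnd ℂ) e * ζ ≠ 0 := by
  intro h
  have : ‖(starRingEnd ℂ) e * ζ‖ = 1 := by rw [← sub_eq_zero.1 h]; simp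
  rw [norm_mul, RCLike.norm_conj] at this
  nlinarith [norm_nonneg e, norm_nonneg ζ]

lemma norm_blaschke_circle {e ζ : ℂ} (hζ : ‖ζ‖ = 1) :
    ‖1 - (starRingEnd ℂ) e * ζ‖ = ‖ζ - e‖ := by
  have h : (starRingEnd ℂ) ζ * ζ = 1 := by
    rw [mul_comm, Complex.mul_conj, Complex.normSq_eq_norm_sq, hζ]; simp
  calc ‖1 - (starRingEnd ℂ) e * ζ‖ = ‖(starRingEnd ℂ) (ζ - e) * ζ‖ := by
        rw [map_sub, sub_mul, h]
    _ = _ := by rw [norm_mul, RCLike.norm_conj, hζ, mul_one]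

lemma greenSum_harmonicAt (e : ℕ → ℂ) (N : ℕ) (he : ∀ j < N, ‖e j‖ < 1) (ζ : ℂ) (hζ : ‖ζ‖ ≤ 1)
    (hne : ∀ j < N, ζ ≠ e j) : InnerProductSpace.HarmonicAt (greenSum e N) ζ := by
  induction N with
  | zero =>
    have : greenSum e 0 = fun _ => 0 := by funext w; simp [greenSum]
    rw [this]; exact InnerProductSpace.harmonicAt_const _
  | succ N ih =>
    have h1 := ih (fun j hj => he j (by omega)) (fun j hj => hne j (by omega))
    have h2 : InnerProductSpace.HarmonicAt (fun w => Real.log ‖w - e N‖) ζ :=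
      AnalyticAt.harmonicAt_log_norm (f := fun w => w - e N) (by fun_prop)
        (sub_ne_zero.2 (hne N (by omega)))
    have h3 : InnerProductSpace.HarmonicAt
        (fun w => Real.log ‖1 - (starRingEnd ℂ) (e N) * w‖) ζ :=
      AnalyticAt.harmonicAt_log_norm (f := fun w => 1 - (starRingEnd ℂ) (e N) * w) (by fun_prop)
        (one_sub_conj_ne (he N (by omega)) hζ)
    have : greenSum e (N + 1) = greenSum e N + ((fun w => Real.log ‖w - e N‖) -
      (fun w => Real.log ‖1 - (starRingEnd ℂ) (e N) * w‖)) := by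
      funext w; simp [greenSum, Finset.sum_range_succ]; ring
    rw [this]
    exact h1.add (h2.sub h3)

lemma barrier_avg (H : ℂ → ℝ) (w : ℂ) (η lam : ℝ) (hH : InnerProductSpace.HarmonicAt H w) :
    ∀ᶠ s in 𝓝[>] (0:ℝ),
      Real.circleAverage (fun ζ => lam * H ζ + η * (1 - ‖ζ‖ ^ 2)) w s ≤
        (lam * H w + η * (1 - ‖w‖ ^ 2)) - η * s ^ 2 := by
  obtain ⟨δ, hδ, hball⟩ := Metric.eventually_nhds_iff_ball.1 hH.eventually
  filter_upwards [Ioo_mem_nhdsGT hδ] with s ⟨hs0, hsδ⟩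
  have hcb : closedBall w |s| ⊆ ball w δ := by
    rw [abs_of_pos hs0]; exact closedBall_subset_ball hsδ
  have hHon : InnerProductSpace.HarmonicOnNhd H (closedBall w |s|) := fun x hx => hball x (hcb hx)
  have hHc : ContinuousOn H (sphere w |s|) := hHon.continuousOn.mono sphere_subset_closedBall
  have c2 : ContinuousOn (fun _ : ℂ => η) (sphere w |s|) := continuousOn_const
  have c3 : ContinuousOn (fun ζ : ℂ => ‖ζ‖ ^ 2) (sphere w |s|) := by fun_prop
  have e1 : (fun ζ => lam * H ζ + η * (1 - ‖ζ‖ ^ 2)) =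
      lam • H + ((fun _ => η) + (-η) • (fun ζ : ℂ => ‖ζ‖ ^ 2)) := by
    funext ζ; simp; ring
  have e2 : Real.circleAverage (fun ζ : ℂ => ‖ζ‖ ^ 2) w s = ‖w‖ ^ 2 + s ^ 2 := by
    have := avg_norm_sub_sq w (fun ζ : ℂ => w - ζ) w s hs0
      (Differentiable.diffContOnCl (by fun_prop)) (by simp)
    simp only [sub_sub_cancel] at this
    rw [this]
    congr 1
    have h2 : Real.circleAverage (fun ζ : ℂ => ‖w - ζ‖ ^ 2) w s
        = Real.circleAverage (fun _ : ℂ => s ^ 2) w s := by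
      apply Real.circleAverage_congr_sphere
      intro x hx
      rw [mem_sphere, dist_comm, dist_eq_norm] at hx
      simp only [hx, sq_abs]
    rw [h2, Real.circleAverage_const]
  rw [e1, Real.circleAverage_add (hHc.const_smul lam).circleIntegrable'
      (c2.add (c3.const_smul _)).circleIntegrable',
    Real.circleAverage_add c2.circleIntegrable' (c3.const_smul _).circleIntegrable',
    Real.circleAverage_smul, Real.circleAverage_smul, Real.circleAverage_const, e2,
    hHon.circleAverage_eq]
  simp only [smul_eq_mul]
  linarith

lemma exists_on_circle {E : Type*} [NormedAddCommGroup E] [InnerProductSpace ℂ E]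
    (f : ℂ → E) (V : Set ℂ) (hV1 : closedBall (0:ℂ) 1 ⊆ V)
    (hf : DifferentiableOn ℂ f V) (p : E) (R : ℝ) (ζ0 : ℂ) (s : ℝ) (hs0 : 0 < s) (hs1 : s ≤ 1)
    (hζ0 : ‖ζ0‖ ≤ s) (hR : R ≤ ‖f ζ0 - p‖) : ∃ e : ℂ, ‖e‖ = s ∧ R ≤ ‖f e - p‖ := by
  have hd : DiffContOnCl ℂ (fun w => f w - p) (ball (0:ℂ) s) := by
    apply DifferentiableOn.diffContOnCl
    rw [closure_ball _ hs0.ne']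
    exact (hf.mono ((closedBall_subset_closedBall hs1).trans hV1)).sub_const p
  obtain ⟨e, he, hmax⟩ := Complex.exists_mem_frontier_isMaxOn_norm isBounded_ball
    ⟨0, mem_ball_self hs0⟩ hd
  rw [frontier_ball _ hs0.ne'] at he
  refine ⟨e, by simpa using he, hR.trans ?_⟩
  have := hmax (show ζ0 ∈ closure (ball (0:ℂ) s) by
    rw [closure_ball _ hs0.ne']; simpa using hζ0)
  simpa using this

lemma disc_bound {E : Type*} [NormedAddCommGroup E] [InnerProductSpace ℂ E] [CompleteSpace E]
    [ProperSpace E] (v : E → ℝ) (D : Set E) (hD : IsOpen D) (husc : UpperSemicontinuousOn v D)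
    (hv0 : ∀ x ∈ D, v x ≤ 0)
    (hline : ∀ a ∈ D, ∀ b : E, ∀ r : ℝ, 0 < r → (∀ t : ℂ, ‖t‖ ≤ r → a + t • b ∈ D) →
      ∀ g : ℝ → ℝ, Continuous g →
      (∀ θ : ℝ, v (a + ((r : ℂ) * Complex.exp (θ * Complex.I)) • b) ≤ g θ) →
      v a ≤ (1 / (2 * Real.pi)) * ∫ θ in (0:ℝ)..(2 * Real.pi), g θ)
    (p : E) (R c : ℝ) (hR : 0 < R) (hc : 0 < c)
    (hvc : ∀ x ∈ D, R / 2 ≤ ‖x - p‖ → v x ≤ -c)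
    (r : ℝ) (hr0 : 0 < r) (hr1 : r < 1)
    (f : ℂ → E) (V : Set ℂ) (hV : IsOpen V) (hV1 : closedBall (0:ℂ) 1 ⊆ V)
    (hf : DifferentiableOn ℂ f V) (hfD : MapsTo f V D)
    (ζ0 : ℂ) (hζ0 : ‖ζ0‖ ≤ r) (hRζ : R ≤ ‖f ζ0 - p‖) :
    v (f 0) ≤ -(c * Real.sqrt (1 - r) / 24 * ((1 - r) / 2)) := by
  have hB : IsCompact (closedBall (0:ℂ) 1) := isCompact_closedBall _ _
  have huc := hB.uniformContinuousOn_of_continuous (hf.continuousOn.mono hV1)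
  obtain ⟨τ', hτ'0, hτ'⟩ := Metric.uniformContinuousOn_iff.1 huc (R / 2) (by linarith)
  set τ := min (τ' / 2) r with hτ
  have hτ0 : 0 < τ := lt_min (by linarith) hr0
  have hττ' : τ < τ' := lt_of_le_of_lt (min_le_left _ _) (by linarith)
  have hτr : τ ≤ r := min_le_right _ _
  obtain ⟨N, hN⟩ := exists_nat_gt ((1 - r) / τ)
  have hNpos' : (0:ℝ) < N := lt_trans (div_pos (by linarith) hτ0) hN
  have hNpos : 0 < N := by exact_mod_cast hNpos'
  set d := (1 - r) / N with hd
  have hd0 : 0 < d := div_pos (by linarith) hNpos'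
  have hdτ : d ≤ τ := by
    rw [div_lt_iff₀ hτ0] at hN
    rw [hd, div_le_iff₀ hNpos']; linarith
  have hdN : d * N = 1 - r := by rw [hd]; field_simp
  have hs1 : ∀ j : ℕ, j < N → r + j * d < 1 := by
    intro j hj
    have : (j:ℝ) < N := by exact_mod_cast hj
    nlinarith
  have hsr : ∀ j : ℕ, r ≤ r + j * d := fun j => by
    have : 0 ≤ (j:ℝ) * d := by positivity
    linarith
  have hex : ∀ j : ℕ, ∃ e : ℂ, j < N → ‖e‖ = r + j * d ∧ R ≤ ‖f e - p‖ := by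
    intro j
    by_cases hj : j < N
    · obtain ⟨e, he⟩ := exists_on_circle f V hV1 hf p R ζ0 (r + j * d)
        (lt_of_lt_of_le hr0 (hsr j)) (hs1 j hj).le (hζ0.trans (hsr j)) hRζ
      exact ⟨e, fun _ => he⟩
    · exact ⟨0, fun h => absurd h hj⟩
  choose e he using hex
  have he1 : ∀ j < N, ‖e j‖ < 1 := fun j hj => by rw [(he j hj).1]; exact hs1 j hj
  set A : Set ℂ := closedBall (0:ℂ) 1 ∩ ⋂ j ∈ Finset.range N, {w | τ ≤ ‖w - e j‖} with hA
  have memA : ∀ w, w ∈ A ↔ ‖w‖ ≤ 1 ∧ ∀ j < N, τ ≤ ‖w - e j‖ := by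
    intro w; simp [hA]
  have hAc : IsCompact A := by
    apply hB.inter_right
    apply isClosed_biInter
    intro j _
    exact isClosed_le continuous_const (by fun_prop)
  set C := 24 / Real.sqrt (1 - r) with hC
  have hsq : 0 < Real.sqrt (1 - r) := Real.sqrt_pos.2 (by linarith)
  have hCpos : 0 < C := by positivity
  set lam := c / C / N with hlam
  have hlam0 : 0 < lam := by positivity
  have hharm : ∀ w, ‖w‖ ≤ 1 → (∀ j < N, τ ≤ ‖w - e j‖) →
      InnerProductSpace.HarmonicAt (greenSum e N) w := by
    intro w hw1 hw2
    apply greenSum_harmonicAt e N he1 w hw1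
    rintro j hj rfl
    have := hw2 j hj
    simp at this
    linarith
  have hlow : ∀ w ∈ A, -C * N ≤ greenSum e N w := by
    intro w hw
    obtain ⟨hw1, hw2⟩ := (memA w).1 hw
    have h1 := sum_log_lower r hr1 N hNpos ‖w‖ hw1 (fun j => ‖w - e j‖)
      (fun j hj => hdτ.trans (hw2 j hj)) (fun j hj => by
        rw [← hd, ← (he j hj).1]
        exact abs_norm_sub_norm_le _ _)
    refine h1.trans ?_
    apply Finset.sum_le_sum
    intro j hj
    have hj' := Finset.mem_range.1 hj
    have hpos : 0 < ‖w - e j‖ := lt_of_lt_of_le hτ0 (hw2 j hj')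
    have hpos2 : 0 < ‖1 - (starRingEnd ℂ) (e j) * w‖ :=
      norm_pos_iff.2 (one_sub_conj_ne (he1 j hj') hw1)
    have hle2 : ‖1 - (starRingEnd ℂ) (e j) * w‖ ≤ 2 := by
      refine (norm_sub_le _ _).trans ?_
      rw [norm_mul, RCLike.norm_conj, norm_one]
      nlinarith [he1 j hj', norm_nonneg w, norm_nonneg (e j)]
    rw [Real.log_div hpos.ne' two_ne_zero]
    have := Real.log_le_log hpos2 hle2
    linarith
  have h0A : (0:ℂ) ∈ A := by
    rw [memA]
    refine ⟨by simp, fun j hj => ?_⟩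
    rw [zero_sub, norm_neg, (he j hj).1]
    exact hτr.trans (hsr j)
  have hmain : ∀ η : ℝ, 0 < η → v (f 0) ≤ lam * greenSum e N 0 + η := by
    intro η hη
    have hcmp := comparison v D hD husc hv0 hline f V hV hf hfD A hAc
      (fun w hw => hV1 hw.1) (fun ζ => lam * greenSum e N ζ + η * (1 - ‖ζ‖ ^ 2))
      (by
        intro w hw
        obtain ⟨hw1, hw2⟩ := (memA w).1 hw
        have := (hharm w hw1 hw2).1.continuousAt
        exact ((continuousAt_const.mul this).add (by fun_prop)).continuousWithinAt)
      η hη (by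
        intro w hw
        obtain ⟨hw1, hw2⟩ := (memA w).1 hw
        have hwD : f w ∈ D := hfD (hV1 hw.1)
        by_cases h1 : ‖w‖ = 1
        · left
          have : greenSum e N w = 0 := by
            apply Finset.sum_eq_zero
            intro j _
            rw [norm_blaschke_circle h1, sub_self]
          simp only [this, h1]
          have := hv0 _ hwD
          linarith
        by_cases h2 : ∃ j < N, ‖w - e j‖ = τ
        · left
          obtain ⟨j, hj, hjτ⟩ := h2
          have hd1 := hτ' w hw.1 (e j) (by simpa using (he1 j hj).le)
            (by rw [dist_eq_norm, hjτ]; exact hττ')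
          rw [dist_eq_norm] at hd1
          have hd2 := (he j hj).2
          have hd3 : ‖f (e j) - p‖ ≤ ‖f w - p‖ + ‖f w - f (e j)‖ := by
            rw [show f (e j) - p = (f w - p) - (f w - f (e j)) by abel]
            exact norm_sub_le _ _
          have hvw := hvc _ hwD (by linarith)
          have hl := mul_le_mul_of_nonneg_left (hlow w hw) hlam0.le
          have : lam * (-C * N) = -c := by
            rw [hlam]; field_simp
          have h5 : 0 ≤ η * (1 - ‖w‖ ^ 2) := by
            apply mul_nonneg hη.le
            nlinarith [norm_nonneg w]
          linarith
        · right
          push Not at h2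
          have ev1 : ∀ᶠ x : ℂ in 𝓝 w, ‖x‖ < 1 :=
            continuous_norm.continuousAt.eventually (gt_mem_nhds (lt_of_le_of_ne hw1 h1))
          have ev2 : ∀ᶠ x : ℂ in 𝓝 w, ∀ j ∈ Finset.range N, τ < ‖x - e j‖ := by
            rw [Filter.eventually_all_finset]
            intro j hj
            have hj' := Finset.mem_range.1 hj
            have : ContinuousAt (fun x : ℂ => ‖x - e j‖) w := by fun_prop
            exact this.eventually (lt_mem_nhds (lt_of_le_of_ne (hw2 j hj') (h2 j hj').symm))
          filter_upwards [ev1, ev2] with x hx1 hx2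
          have hx3 : ∀ j < N, τ ≤ ‖x - e j‖ := fun j hj => (hx2 j (Finset.mem_range.2 hj)).le
          exact ⟨(memA x).2 ⟨hx1.le, hx3⟩, barrier_avg _ _ _ _ (hharm x hx1.le hx3)⟩)
    have := hcmp 0 h0A
    simpa using this
  have h1 : v (f 0) ≤ lam * greenSum e N 0 := le_of_forall_pos_le_add hmain
  have h2 : greenSum e N 0 ≤ -((1 - r) / 2 * N) := by
    have h3 : greenSum e N 0 ≤ ∑ j ∈ Finset.range N, (-(d * (N - j))) := by
      apply Finset.sum_le_sum
      intro j hj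
      have hj' := Finset.mem_range.1 hj
      have hpos : 0 < r + j * d := lt_of_lt_of_le hr0 (hsr j)
      have := Real.log_le_sub_one_of_pos hpos
      simp only [zero_sub, norm_neg, mul_zero, sub_zero, norm_one, Real.log_one, (he j hj').1]
      nlinarith
    have h4 : ∑ j ∈ Finset.range N, (j:ℝ) ≤ N * N / 2 := by
      have : ∀ n : ℕ, ∑ j ∈ Finset.range n, (j:ℝ) ≤ n * n / 2 := by
        intro n
        induction n with
        | zero => simp
        | succ n ih =>
          rw [Finset.sum_range_succ]
          push_cast
          nlinarith
      exact this N
    refine h3.trans ?_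
    rw [Finset.sum_neg_distrib, ← Finset.mul_sum, Finset.sum_sub_distrib]
    simp only [Finset.sum_const, Finset.card_range, nsmul_eq_mul]
    rw [← hdN]
    nlinarith
  have h3 := mul_le_mul_of_nonneg_left h2 hlam0.le
  have h4 : lam * -((1 - r) / 2 * N) = -(c * Real.sqrt (1 - r) / 24 * ((1 - r) / 2)) := by
    rw [hlam, hC]; field_simp
  linarith
/-- The truncated, real-valued version of a psh function. -/
def truncFn {n : ℕ} (φ : Cn n → EReal) (x : Cn n) : ℝ := (max (φ x) ((-1 : ℝ) : EReal)).toReal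

lemma coe_truncFn {n : ℕ} (φ : Cn n → EReal) (x : Cn n) (hx : φ x < 0) :
    ((truncFn φ x : ℝ) : EReal) = max (φ x) ((-1 : ℝ) : EReal) := by
  apply EReal.coe_toReal
  · apply ne_of_lt
    apply max_lt (hx.trans (EReal.coe_lt_top 0)) (EReal.coe_lt_top _)
  · apply ne_of_gt
    exact lt_of_lt_of_le (EReal.bot_lt_coe _) (le_max_right _ _)

lemma peak_neg {n : ℕ} {D : Set (Cn n)} (hD : IsOpen D) {p : Cn n} (hp : p ∈ frontier D)
    {φ : Cn n → EReal} (hφ : IsPshPeakFn D p φ) (x : Cn n) (hx : x ∈ D) : φ x < 0 := by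
  have hpD : p ∉ D := by
    rw [hD.frontier_eq] at hp; exact hp.2
  have hne : x ≠ p := fun h => hpD (h ▸ hx)
  obtain ⟨c, hc, h⟩ := hφ.2.2 (ball p (dist x p)) (ball_mem_nhds _ (dist_pos.2 hne))
  exact lt_of_le_of_lt (h x ⟨hx, by simp⟩) (by exact_mod_cast hc)

lemma trunc_line {n : ℕ} {D : Set (Cn n)} {φ : Cn n → EReal} (hφ : PSHOn φ D)
    (hneg : ∀ x ∈ D, φ x < 0) : ∀ a ∈ D, ∀ b : Cn n, ∀ r : ℝ, 0 < r →
      (∀ t : ℂ, ‖t‖ ≤ r → a + t • b ∈ D) → ∀ g : ℝ → ℝ, Continuous g →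
      (∀ θ : ℝ, truncFn φ (a + ((r : ℂ) * Complex.exp (θ * Complex.I)) • b) ≤ g θ) →
      truncFn φ a ≤ (1 / (2 * Real.pi)) * ∫ θ in (0:ℝ)..(2 * Real.pi), g θ := by
  intro a ha b r hr hdisc g hg hle
  have hin : ∀ θ : ℝ, a + ((r : ℂ) * Complex.exp (θ * Complex.I)) • b ∈ D := by
    intro θ
    apply hdisc
    rw [norm_mul, Complex.norm_exp_ofReal_mul_I, Complex.norm_real, Real.norm_eq_abs,
      abs_of_pos hr, mul_one]
  have hle2 : ∀ θ : ℝ, max (φ (a + ((r : ℂ) * Complex.exp (θ * Complex.I)) • b))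
      ((-1 : ℝ) : EReal) ≤ (g θ : EReal) := by
    intro θ
    rw [← coe_truncFn φ _ (hneg _ (hin θ))]
    exact_mod_cast hle θ
  rw [← EReal.coe_le_coe_iff, coe_truncFn φ a (hneg a ha)]
  apply max_le
  · exact hφ.2 a ha b r hr hdisc g hg (fun θ => (le_max_left _ _).trans (hle2 θ))
  · rw [EReal.coe_le_coe_iff]
    have hg1 : ∀ θ, -1 ≤ g θ := fun θ =>
      EReal.coe_le_coe_iff.1 ((le_max_right _ _).trans (hle2 θ))
    have h2 : ∫ θ in (0:ℝ)..(2 * Real.pi), (-1:ℝ) ≤ ∫ θ in (0:ℝ)..(2 * Real.pi), g θ :=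
      intervalIntegral.integral_mono_on (by positivity) (by simp) (hg.intervalIntegrable _ _)
        (fun θ _ => hg1 θ)
    rw [intervalIntegral.integral_const] at h2
    have hpi := Real.pi_pos
    rw [one_div, ← div_eq_inv_mul, le_div_iff₀ (by positivity)]
    simp only [smul_eq_mul] at h2
    linarith

lemma trunc_usc {n : ℕ} {D : Set (Cn n)} {φ : Cn n → EReal} (hφ : PSHOn φ D)
    (hneg : ∀ x ∈ D, φ x < 0) : UpperSemicontinuousOn (truncFn φ) D := by
  intro x hx y hy
  have hy' : max (φ x) ((-1 : ℝ) : EReal) < (y : EReal) := by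
    rw [← coe_truncFn φ x (hneg x hx)]; exact_mod_cast hy
  have h1 := hφ.1 x hx y ((le_max_left _ _).trans_lt hy')
  filter_upwards [h1, self_mem_nhdsWithin] with w hw hwD
  rw [← EReal.coe_lt_coe_iff, coe_truncFn φ w (hneg w hwD)]
  exact max_lt hw ((le_max_right _ _).trans_lt hy')

lemma disc_localization {n : ℕ} {D : Set (Cn n)} (hD : IsOpen D) {p : Cn n}
    (hp : p ∈ frontier D) {φ : Cn n → EReal} (hφ : IsPshPeakFn D p φ)
    {U : Set (Cn n)} (hU : U ∈ 𝓝 p) (r : ℝ) (hr0 : 0 < r) (hr1 : r < 1) :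
    ∃ W ∈ 𝓝 p, ∀ z ∈ D ∩ W, ∀ f : ℂ → Cn n, DifferentiableOn ℂ f (ball (0:ℂ) 1) →
      MapsTo f (ball (0:ℂ) 1) D → f 0 = z → ∀ ζ : ℂ, ‖ζ‖ < 1 → f (r * ζ) ∈ U := by
  have hneg := peak_neg hD hp hφ
  obtain ⟨R, hR, hRU⟩ := Metric.mem_nhds_iff.1 hU
  obtain ⟨c0, hc0, hc0'⟩ := hφ.2.2 (ball p (R / 2)) (ball_mem_nhds _ (by linarith))
  set c := min (-c0) 1 with hc
  have hcpos : 0 < c := lt_min (by linarith) one_pos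
  set q := Real.sqrt r with hq
  have hq0 : 0 < q := Real.sqrt_pos.2 hr0
  have hqq : q * q = r := Real.mul_self_sqrt hr0.le
  have hq1 : q < 1 := by nlinarith
  set δ := c * Real.sqrt (1 - q) / 24 * ((1 - q) / 2) with hδ
  have hsq : 0 < Real.sqrt (1 - q) := Real.sqrt_pos.2 (by linarith)
  have h1q : 0 < 1 - q := by linarith
  have hδ0 : 0 < δ := by positivity
  have hev : ∀ᶠ z in 𝓝[D] p, ((-δ : ℝ) : EReal) < φ z :=
    hφ.2.1.eventually (lt_mem_nhds (by
      have : -δ < 0 := by linarith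
      exact_mod_cast this))
  rw [eventually_nhdsWithin_iff] at hev
  refine ⟨_, hev, ?_⟩
  rintro z ⟨hzD, hzW⟩ f hf hfD hfz ζ hζ
  have hzW' : ((-δ : ℝ) : EReal) < φ z := hzW hzD
  by_contra hout
  have hRf : R ≤ ‖f (r * ζ) - p‖ := by
    by_contra hlt
    push Not at hlt
    exact hout (hRU (by rwa [mem_ball, dist_eq_norm]))
  have hmaps : MapsTo (fun w : ℂ => (q : ℂ) * w) (ball (0:ℂ) (1 / q)) (ball (0:ℂ) 1) := by
    intro w hw
    rw [mem_ball_zero_iff] at hw ⊢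
    rw [norm_mul, Complex.norm_real, Real.norm_eq_abs, abs_of_pos hq0]
    rw [lt_div_iff₀ hq0] at hw
    linarith
  have key := disc_bound (truncFn φ) D hD (trunc_usc hφ.1 hneg)
    (fun x hx => by
      rw [← EReal.coe_le_coe_iff, coe_truncFn φ x (hneg x hx)]
      apply max_le (hneg x hx).le
      exact_mod_cast (by norm_num : (-1:ℝ) ≤ 0))
    (trunc_line hφ.1 hneg) p R c hR hcpos
    (fun x hx hxR => by
      rw [← EReal.coe_le_coe_iff, coe_truncFn φ x (hneg x hx)]
      apply max_le
      · refine (hc0' x ⟨hx, by simpa [dist_eq_norm] using hxR⟩).trans ?_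
        rw [EReal.coe_le_coe_iff]
        have := min_le_left (-c0) 1
        linarith
      · rw [EReal.coe_le_coe_iff]
        have := min_le_right (-c0) 1
        linarith)
    q hq0 hq1 (fun w => f (q * w)) (ball 0 (1 / q)) isOpen_ball
    (closedBall_subset_ball (by rw [lt_div_iff₀ hq0]; linarith))
    (hf.comp (by fun_prop) hmaps) (hfD.comp hmaps) (q * ζ)
    (by
      rw [norm_mul, Complex.norm_real, Real.norm_eq_abs, abs_of_pos hq0]
      nlinarith [norm_nonneg ζ])
    (by
      have : (q : ℂ) * (q * ζ) = r * ζ := by rw [← hqq]; push_cast; ring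
      simpa only [this] using hRf)
  simp only [mul_zero, hfz] at key
  have h5 : ((truncFn φ z : ℝ) : EReal) ≤ ((-δ : ℝ) : EReal) := by exact_mod_cast key
  rw [coe_truncFn φ z (hneg z hzD)] at h5
  exact absurd ((le_max_left _ _).trans h5) (not_le.2 hzW')

lemma kobayashi_nonneg {n : ℕ} (D : Set (Cn n)) (z X : Cn n) : 0 ≤ kobayashi D z X := by
  apply Real.sInf_nonneg
  rintro _ ⟨α, rfl, _⟩
  exact norm_nonneg _

lemma kobayashi_set_nonempty {n : ℕ} {D : Set (Cn n)} (hD : IsOpen D) {z : Cn n} (hz : z ∈ D)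
    (X : Cn n) : {c : ℝ | ∃ α : ℂ, c = ‖α‖ ∧ ∃ f : ℂ → Cn n,
    DifferentiableOn ℂ f (ball (0:ℂ) 1) ∧ MapsTo f (ball (0:ℂ) 1) D ∧
    f 0 = z ∧ α • deriv f 0 = X}.Nonempty := by
  obtain ⟨R, hR, hball⟩ := Metric.isOpen_iff.1 hD z hz
  set t : ℝ := R / (‖X‖ + 1) with ht
  have ht0 : 0 < t := by positivity
  refine ⟨_, ((t⁻¹ : ℝ) : ℂ), rfl, fun w => z + w • ((t : ℂ) • X), by fun_prop, ?_, by simp, ?_⟩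
  · intro w hw
    apply hball
    rw [mem_ball_zero_iff] at hw
    rw [mem_ball, dist_eq_norm, add_sub_cancel_left, norm_smul, norm_smul, Complex.norm_real,
      Real.norm_eq_abs, abs_of_pos ht0]
    have h1 : t * ‖X‖ < R := by
      rw [ht, div_mul_eq_mul_div, div_lt_iff₀ (by positivity)]
      nlinarith
    have h2 : 0 ≤ t * ‖X‖ := by positivity
    nlinarith [norm_nonneg w]
  · have : HasDerivAt (fun w : ℂ => z + w • ((t : ℂ) • X)) ((1:ℂ) • ((t : ℂ) • X)) 0 :=
      ((hasDerivAt_id (0:ℂ)).smul_const _).const_add z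
    rw [this.deriv, one_smul, smul_smul]
    have h3 : (t : ℂ) ≠ 0 := by exact_mod_cast ht0.ne'
    push_cast
    rw [inv_mul_cancel₀ h3, one_smul]

lemma kobayashi_bddBelow {n : ℕ} (D : Set (Cn n)) (z X : Cn n) :
    BddBelow {c : ℝ | ∃ α : ℂ, c = ‖α‖ ∧ ∃ f : ℂ → Cn n,
    DifferentiableOn ℂ f (ball (0:ℂ) 1) ∧ MapsTo f (ball (0:ℂ) 1) D ∧
    f 0 = z ∧ α • deriv f 0 = X} :=
  ⟨0, by rintro _ ⟨α, rfl, _⟩; exact norm_nonneg _⟩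

/-- Strong localization of the Kobayashi metric near a psh peak boundary
point: `K_D(z;X)/K_{D∩U}(z;X) → 1` as `z → p`, uniformly in `X ≠ 0`. -/
theorem kobayashi_strong_localization_peak {n : ℕ} (D : Set (Cn n)) (hD : IsOpen D)
    (hDconn : IsConnected D) (p : Cn n) (hp : p ∈ frontier D)
    (hφ : ∃ φ : Cn n → EReal, IsPshPeakFn D p φ)
    (U : Set (Cn n)) (hU : IsOpen U) (hUb : Bornology.IsBounded U) (hpU : p ∈ U) :
    ∀ ε : ℝ, 0 < ε → ∃ W ∈ 𝓝 p, ∀ z ∈ D ∩ W, ∀ X : Cn n,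
      (1 - ε) * kobayashi (D ∩ U) z X ≤ kobayashi D z X ∧
      kobayashi D z X ≤ kobayashi (D ∩ U) z X := by
  
  intro ε hε
  obtain ⟨φ, hφ⟩ := hφ
  have hmono : ∀ z ∈ D ∩ U, ∀ X : Cn n, kobayashi D z X ≤ kobayashi (D ∩ U) z X := by
    intro z hz X
    apply csInf_le_csInf (kobayashi_bddBelow D z X) (kobayashi_set_nonempty (hD.inter hU) hz X)
    rintro _ ⟨α, rfl, f, h1, h2, h3, h4⟩
    exact ⟨α, rfl, f, h1, fun w hw => (h2 hw).1, h3, h4⟩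
  by_cases hε1 : 1 ≤ ε
  · refine ⟨U, hU.mem_nhds hpU, fun z hz X => ⟨?_, hmono z hz X⟩⟩
    have h1 := kobayashi_nonneg D z X
    have h2 := kobayashi_nonneg (D ∩ U) z X
    nlinarith
  push Not at hε1
  obtain ⟨W, hW, hloc⟩ := disc_localization hD hp hφ (hU.mem_nhds hpU) (1 - ε)
    (by linarith) (by linarith)
  refine ⟨W ∩ U, inter_mem hW (hU.mem_nhds hpU), ?_⟩
  rintro z ⟨hzD, hzW, hzU⟩ X
  refine ⟨?_, hmono z ⟨hzD, hzU⟩ X⟩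
  apply le_csInf (kobayashi_set_nonempty hD hzD X)
  rintro _ ⟨α, rfl, f, h1, h2, h3, h4⟩
  have hl := hloc z ⟨hzD, hzW⟩ f h1 h2 h3
  set r := 1 - ε with hr
  have hr0 : 0 < r := by linarith
  have hr1 : r < 1 := by linarith
  have hmaps : MapsTo (fun w : ℂ => (r : ℂ) * w) (ball (0:ℂ) 1) (ball (0:ℂ) 1) := by
    intro w hw
    rw [mem_ball_zero_iff] at hw ⊢
    rw [norm_mul, Complex.norm_real, Real.norm_eq_abs, abs_of_pos hr0]
    nlinarith [norm_nonneg w]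
  have hrc : (r : ℂ) ≠ 0 := by exact_mod_cast hr0.ne'
  have hle : kobayashi (D ∩ U) z X ≤ ‖α / (r : ℂ)‖ := by
    apply csInf_le (kobayashi_bddBelow (D ∩ U) z X)
    refine ⟨α / r, rfl, fun w => f (r * w), h1.comp (by fun_prop) hmaps, ?_, by simpa using h3, ?_⟩
    · intro w hw
      exact ⟨h2 (hmaps hw), hl w (mem_ball_zero_iff.1 hw)⟩
    · have hd : HasDerivAt f (deriv f 0) ((r : ℂ) * 0) := by
        rw [mul_zero]
        exact (h1.differentiableAt (ball_mem_nhds _ one_pos)).hasDerivAt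
      have hd2 : HasDerivAt (fun w : ℂ => (r : ℂ) * w) (r : ℂ) 0 := by
        simpa using (hasDerivAt_id (0:ℂ)).const_mul (r : ℂ)
      have hd3 := HasDerivAt.scomp (0:ℂ) hd hd2
      have : deriv (fun w : ℂ => f (r * w)) 0 = (r : ℂ) • deriv f 0 := hd3.deriv
      rw [this, smul_smul, div_mul_cancel₀ _ hrc, h4]
  rw [norm_div, Complex.norm_real, Real.norm_eq_abs, abs_of_pos hr0, le_div_iff₀ hr0] at hle
  linarith
end
end

section
/- Let D be a domain in ℂⁿ admitting a psh peak function for a point p ∈ ∂D, and let U be a bounded open neighborhood of p. If lim_{z→p} σ_D(z) = 1, then lim_{z→p} σ_{D∩U}(z) = 1. -/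
open Set Metric Filter Topology
open scoped Classical

noncomputable section

/-- The squeezing function of `D`: the supremum of all `r > 0` such that some holomorphic
embedding `f : D → 𝔹ₙ` with `f z = 0` satisfies `r𝔹ₙ ⊆ f(D)` (equal to `0` if no such
embedding exists, by the convention `sSup ∅ = 0` in `ℝ`). -/
def squeezing {n : ℕ} (D : Set (Cn n)) (z : Cn n) : ℝ :=
  sSup {r : ℝ | 0 < r ∧ ∃ f : Cn n → Cn n, DifferentiableOn ℂ f D ∧ InjOn f D ∧
    MapsTo f D (ball (0 : Cn n) 1) ∧ f z = 0 ∧ ball (0 : Cn n) r ⊆ f '' D}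



section SQ
variable {n : ℕ}

lemma sq_line_hasDerivAt {F : Type*} [NormedAddCommGroup F] [NormedSpace ℂ F]
    {f : Cn n → F} {x b : Cn n} {t : ℂ} (hf : DifferentiableAt ℂ f (x + t • b)) :
    HasDerivAt (fun t : ℂ => f (x + t • b)) (fderiv ℂ f (x + t • b) b) t := by
  have h1 : HasDerivAt (fun t : ℂ => x + t • b) b t := by
    simpa using ((hasDerivAt_id t).smul_const b).const_add x
  exact hf.hasFDerivAt.comp_hasDerivAt t h1

lemma sq_cauchy_bound {f : Cn n → Cn n} {y : Cn n} {s M : ℝ} (hs : 0 < s)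
    {D : Set (Cn n)} (hD : IsOpen D) (hf : DifferentiableOn ℂ f D)
    (hsub : closedBall y s ⊆ D) (hM : ∀ x ∈ closedBall y s, ‖f x‖ ≤ M) :
    ‖fderiv ℂ f y‖ ≤ M / s := by
  have hM0 : 0 ≤ M := (norm_nonneg _).trans (hM y (mem_closedBall_self hs.le))
  refine ContinuousLinearMap.opNorm_le_bound _ (by positivity) fun v => ?_
  by_cases hv : v = 0
  · simp [hv]
  have hv' : 0 < ‖v‖ := norm_pos_iff.2 hv
  have hmem : ∀ t : ℂ, ‖t‖ ≤ s / ‖v‖ → y + t • v ∈ closedBall y s := by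
    intro t ht
    rw [mem_closedBall, dist_eq_norm]
    simp only [add_sub_cancel_left, norm_smul]
    calc ‖t‖ * ‖v‖ ≤ s / ‖v‖ * ‖v‖ := by gcongr
      _ = s := by field_simp
  have hd : ∀ t : ℂ, ‖t‖ ≤ s / ‖v‖ → HasDerivAt (fun t : ℂ => f (y + t • v))
      (fderiv ℂ f (y + t • v) v) t := fun t ht =>
    sq_line_hasDerivAt (hf.differentiableAt (hD.mem_nhds (hsub (hmem t ht))))
  have h0 := hd 0 (by simp; positivity)
  have key := Complex.norm_deriv_le_of_forall_mem_sphere_norm_le (c := 0) (R := s / ‖v‖) (C := M)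
    (f := fun t : ℂ => f (y + t • v)) (by positivity) ?_ ?_
  · rw [h0.deriv] at key
    simp only [zero_smul, add_zero] at key
    calc _ ≤ _ := key
      _ = _ := by field_simp
  · apply DifferentiableOn.diffContOnCl
    intro t ht
    have ht' := closure_ball_subset_closedBall ht
    rw [mem_closedBall_zero_iff] at ht'
    exact (hd t ht').differentiableAt.differentiableWithinAt
  · intro t ht
    rw [mem_sphere_zero_iff_norm] at ht
    exact hM _ (hmem t ht.le)

lemma sq_fderiv_apply_diff {f : Cn n → Cn n} {D : Set (Cn n)} (hD : IsOpen D)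
    (hf : DifferentiableOn ℂ f D) (b : Cn n) :
    DifferentiableOn ℂ (fun x => fderiv ℂ f x b) D := by
  intro x0 hx0
  apply DifferentiableAt.differentiableWithinAt
  obtain ⟨s0, hs0, hsD0⟩ := Metric.isOpen_iff.1 hD x0 hx0
  obtain ⟨s, hs, hs3⟩ : ∃ s : ℝ, 0 < s ∧ 3 * s < s0 := ⟨s0 / 4, by positivity, by linarith⟩
  have hsD : closedBall x0 (3 * s) ⊆ D := (closedBall_subset_ball hs3).trans hsD0
  obtain ⟨M, hM⟩ := (isCompact_closedBall x0 (3 * s)).exists_bound_of_continuousOn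
    (hf.continuousOn.mono hsD)
  obtain ⟨ρ, hρ, hρb⟩ : ∃ ρ : ℝ, 0 < ρ ∧ ρ * ‖b‖ ≤ s := by
    refine ⟨s / (‖b‖ + 1), by positivity, ?_⟩
    rw [div_mul_eq_mul_div, div_le_iff₀ (by positivity)]
    nlinarith [norm_nonneg b]
  have hin : ∀ x ∈ ball x0 s, ∀ t : ℂ, ‖t‖ ≤ ρ → x + t • b ∈ closedBall x0 (2 * s) := by
    intro x hx t ht
    rw [mem_ball, dist_eq_norm] at hx
    rw [mem_closedBall, dist_eq_norm]
    calc ‖x + t • b - x0‖ = ‖(x - x0) + t • b‖ := by congr 1; abel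
      _ ≤ ‖x - x0‖ + ‖t‖ * ‖b‖ := by rw [← norm_smul]; exact norm_add_le _ _
      _ ≤ s + ρ * ‖b‖ := by gcongr
      _ ≤ 2 * s := by linarith
  have h23 : closedBall x0 (2 * s) ⊆ D :=
    (closedBall_subset_closedBall (by linarith)).trans hsD
  have hbd : ∀ y ∈ closedBall x0 (2 * s), ‖fderiv ℂ f y‖ ≤ M / s := by
    intro y hy
    have : closedBall y s ⊆ closedBall x0 (3 * s) := by
      apply closedBall_subset_closedBall'
      rw [mem_closedBall] at hy; linarith
    exact sq_cauchy_bound hs hD hf (this.trans hsD) fun x hx => hM x (this hx)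
  set κ : ℝ → ℂ := fun θ => deriv (circleMap 0 ρ) θ * ((circleMap 0 ρ θ - 0) ^ 2)⁻¹ with hκ
  have hne : ∀ θ, circleMap 0 ρ θ ≠ 0 := fun θ => circleMap_ne_center hρ.ne'
  have hκc : Continuous κ := by
    have : κ = fun θ => circleMap 0 ρ θ * Complex.I * ((circleMap 0 ρ θ - 0) ^ 2)⁻¹ := by
      funext θ; simp [hκ, deriv_circleMap]
    rw [this]
    refine Continuous.mul ((continuous_circleMap 0 ρ).mul continuous_const) ?_
    refine Continuous.inv₀ ((continuous_circleMap 0 ρ).sub continuous_const |>.pow 2) fun θ => ?_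
    simpa using hne θ
  have hcn : ∀ θ, ‖circleMap 0 ρ θ‖ ≤ ρ := fun θ => by simp [abs_of_pos hρ]
  have hform : ∀ x ∈ ball x0 s, fderiv ℂ f x b =
      (2 * Real.pi * Complex.I : ℂ)⁻¹ • ∫ θ in (0:ℝ)..2 * Real.pi,
        κ θ • f (x + circleMap 0 ρ θ • b) := by
    intro x hx
    have hxD : x ∈ D := by
      have := hin x hx 0 (by simpa using hρ.le)
      simpa using h23 this
    have h0 : HasDerivAt (fun t : ℂ => f (x + t • b)) (fderiv ℂ f x b) 0 := by
      simpa using sq_line_hasDerivAt (f := f) (x := x) (b := b) (t := 0)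
        (by simpa using hf.differentiableAt (hD.mem_nhds hxD))
    have hopen : IsOpen {t : ℂ | x + t • b ∈ D} :=
      hD.preimage (by fun_prop)
    rw [← h0.deriv, ← Complex.cderiv_eq_deriv hopen (r := ρ) (z := 0) _ hρ]
    · rw [Complex.cderiv, circleIntegral]
      simp only [hκ, smul_smul]
    · intro t ht
      exact h23 (hin x hx t (by simpa using ht))
    · intro t ht
      exact (sq_line_hasDerivAt (hf.differentiableAt (hD.mem_nhds ht))).differentiableAt.differentiableWithinAt
  have hcont : ∀ x ∈ ball x0 s, Continuous fun θ => κ θ • f (x + circleMap 0 ρ θ • b) := by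
    intro x hx
    refine hκc.smul ?_
    refine (hf.continuousOn).comp_continuous (by fun_prop) fun θ => h23 (hin x hx _ (hcn θ))
  have hev : (fun x => fderiv ℂ f x b) =ᶠ[𝓝 x0] fun x => (2 * Real.pi * Complex.I : ℂ)⁻¹ •
      ∫ θ in (0:ℝ)..2 * Real.pi, κ θ • f (x + circleMap 0 ρ θ • b) := by
    filter_upwards [ball_mem_nhds x0 hs] with x hx using hform x hx
  refine DifferentiableAt.congr_of_eventuallyEq ?_ hev
  refine DifferentiableAt.fun_const_smul ?_ _
  obtain ⟨K, hK⟩ := (isCompact_uIcc (a := (0:ℝ)) (b := 2 * Real.pi)).exists_bound_of_continuousOn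
    hκc.continuousOn
  have := intervalIntegral.hasFDerivAt_integral_of_dominated_of_fderiv_le
    (𝕜 := ℂ) (μ := MeasureTheory.volume) (s := ball x0 s) (a := 0) (b := 2 * Real.pi)
    (bound := fun _ => K * (M / s)) (F := fun x θ => κ θ • f (x + circleMap 0 ρ θ • b))
    (F' := fun x θ => κ θ • fderiv ℂ f (x + circleMap 0 ρ θ • b)) (x₀ := x0)
    (ball_mem_nhds x0 hs) ?_ ?_ ?_ ?_ ?_ ?_
  · exact this.differentiableAt
  · filter_upwards [ball_mem_nhds x0 hs] with x hx
    exact (hcont x hx).aestronglyMeasurable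
  · exact (hcont x0 (mem_ball_self hs)).intervalIntegrable _ _
  · apply Measurable.aestronglyMeasurable
    refine hκc.measurable.smul ?_
    exact (measurable_fderiv ℂ f).comp (by fun_prop)
  · refine Filter.Eventually.of_forall fun θ hθ x hx => ?_
    rw [norm_smul]
    have h1 := hK θ (uIoc_subset_uIcc hθ)
    have h2 := hbd _ (hin x hx _ (hcn θ))
    have : 0 ≤ K := (norm_nonneg _).trans h1
    gcongr
  · exact intervalIntegrable_const
  · refine Filter.Eventually.of_forall fun θ hθ x hx => ?_
    have hd := (hf.differentiableAt (hD.mem_nhds (h23 (hin x hx _ (hcn θ))))).hasFDerivAt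
    have := hd.comp x ((hasFDerivAt_id x).add_const (circleMap 0 ρ θ • b))
    exact (this.const_smul (κ θ))

lemma sq_prod_diff {ι : Type*} (u : Finset ι) (g : ι → Cn n → ℂ) {D : Set (Cn n)}
    (h : ∀ i, DifferentiableOn ℂ (g i) D) : DifferentiableOn ℂ (fun x => ∏ i ∈ u, g i x) D := by
  induction u using Finset.induction_on with
  | empty => simp
  | insert a s ha ih =>
    simp only [Finset.prod_insert ha]
    exact (h a).mul ih

/-- the complex Jacobian determinant -/
def sqJac (f : Cn n → Cn n) (x : Cn n) : ℂ := (fderiv ℂ f x).det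

lemma sqJac_diff {f : Cn n → Cn n} {D : Set (Cn n)} (hD : IsOpen D)
    (hf : DifferentiableOn ℂ f D) : DifferentiableOn ℂ (sqJac f) D := by
  have : sqJac f = fun x => ∑ σ : Equiv.Perm (Fin n), (Equiv.Perm.sign σ : ℂ) *
      ∏ i, (fderiv ℂ f x (EuclideanSpace.basisFun (Fin n) ℂ i)) (σ i) := by
    funext x
    rw [sqJac, ContinuousLinearMap.det,
      ← LinearMap.det_toMatrix (EuclideanSpace.basisFun (Fin n) ℂ).toBasis, Matrix.det_apply]
    refine Finset.sum_congr rfl fun σ _ => ?_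
    simp [LinearMap.toMatrix_apply, Units.smul_def]
  rw [this]
  refine DifferentiableOn.fun_sum fun σ _ => ?_
  refine DifferentiableOn.const_mul ?_ _
  refine sq_prod_diff _ _ fun i => ?_
  have h := sq_fderiv_apply_diff hD hf (EuclideanSpace.basisFun (Fin n) ℂ i)
  exact (EuclideanSpace.proj (𝕜 := ℂ) (σ i)).differentiable.comp_differentiableOn h

lemma sq_strict {f : Cn n → Cn n} {D : Set (Cn n)} (hD : IsOpen D)
    (hf : DifferentiableOn ℂ f D) {x : Cn n} (hx : x ∈ D) :
    HasStrictFDerivAt f (fderiv ℂ f x) x := by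
  have hc : ContinuousOn (fderiv ℂ f) D :=
    continuousOn_clm_apply.2 fun b => (sq_fderiv_apply_diff hD hf b).continuousOn
  refine hasStrictFDerivAt_of_hasFDerivAt_of_continuousAt ?_ (hc.continuousAt (hD.mem_nhds hx))
  filter_upwards [hD.mem_nhds hx] with y hy
  exact (hf.differentiableAt (hD.mem_nhds hy)).hasFDerivAt

/-- local inverse -/
lemma sq_local_inv {f : Cn n → Cn n} {D : Set (Cn n)} (hD : IsOpen D)
    (hf : DifferentiableOn ℂ f D) {x : Cn n} (hx : x ∈ D) (hj : sqJac f x ≠ 0) :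
    ∃ e : Cn n → Cn n, DifferentiableAt ℂ e (f x) ∧ e (f x) = x ∧ ∀ᶠ y in 𝓝 (f x), f (e y) = y := by
  set A := ContinuousLinearMap.toContinuousLinearEquivOfDetNeZero (fderiv ℂ f x) hj with hA
  have hs : HasStrictFDerivAt f (A : Cn n →L[ℂ] Cn n) x := by
    have := sq_strict hD hf hx
    convert this using 1
    exact ContinuousLinearMap.coe_toContinuousLinearEquivOfDetNeZero _ _
  refine ⟨hs.localInverse f A x, hs.to_localInverse.hasFDerivAt.differentiableAt, ?_,
    hs.eventually_right_inverse⟩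
  exact hs.localInverse_apply_image


lemma sq_zero_local {H : ℂ → ℂ} {a : ℂ} {R : ℝ} (hR : 0 < R)
    (hc : ContinuousOn H (closedBall a R))
    (hd : ∀ t ∈ ball a R, H t ≠ 0 → DifferentiableAt ℂ H t)
    (h0 : ∀ᶠ t in 𝓝 a, H t = 0) : ∀ t ∈ ball a R, H t = 0 := by
  intro w hw
  by_contra hHw
  obtain ⟨M, hM⟩ := (isCompact_closedBall a R).exists_bound_of_continuousOn hc
  set Ω : Set ℂ := {t | t ∈ ball a R ∧ H t ≠ 0} with hΩ
  have hΩopen : IsOpen Ω :=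
    (hc.mono ball_subset_closedBall).isOpen_inter_preimage isOpen_ball isOpen_ne
  have hcl : closure Ω ⊆ closedBall a R :=
    (closure_mono fun t ht => ht.1).trans closure_ball_subset_closedBall
  have hacl : a ∉ closure Ω := by
    rw [mem_closure_iff_frequently, Filter.not_frequently]
    filter_upwards [h0] with t ht hh using hh.2 ht
  have hbound : ∀ k : ℕ, ‖H w‖ ≤ M * (‖w - a‖ / R) ^ k := by
    intro k
    have hdc : DiffContOnCl ℂ (fun t => H t * ((t - a) ^ k)⁻¹) Ω := by
      constructor
      · intro t ht
        have hta : t - a ≠ 0 := fun h => hacl (by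
          rw [← sub_eq_zero.1 h]; exact subset_closure ht)
        refine DifferentiableAt.differentiableWithinAt ?_
        refine (hd t ht.1 ht.2).mul (DifferentiableAt.fun_inv (by fun_prop) (pow_ne_zero _ hta))
      · refine (hc.mono hcl).mul (ContinuousOn.inv₀ (by fun_prop) fun t ht => ?_)
        exact pow_ne_zero _ fun h => hacl (by rw [← sub_eq_zero.1 h]; exact ht)
    have := Complex.norm_le_of_forall_mem_frontier_norm_le (C := M / R ^ k)
      (isBounded_ball.subset fun t ht => ht.1 : Bornology.IsBounded Ω) hdc ?_
      (subset_closure (show w ∈ Ω from ⟨hw, hHw⟩))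
    · have hwa : 0 < ‖w - a‖ := by
        rw [norm_pos_iff]
        exact fun h => hacl (by rw [← sub_eq_zero.1 h]; exact subset_closure ⟨hw, hHw⟩)
      rw [norm_mul, norm_inv, norm_pow, ← div_eq_mul_inv, div_le_iff₀ (by positivity)] at this
      calc _ ≤ _ := this
        _ = _ := by rw [div_pow]; ring
    · intro t ht
      have htc := hcl ht.1
      have hM0 : 0 ≤ M := (norm_nonneg _).trans (hM t htc)
      rw [frontier, hΩopen.interior_eq] at ht
      by_cases hHt : H t = 0
      · simp [hHt]; positivity
      · have hdist : ‖t - a‖ = R := by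
          rw [← dist_eq_norm]
          refine le_antisymm htc ?_
          by_contra hlt
          exact ht.2 ⟨not_le.1 hlt, hHt⟩
        rw [norm_mul, norm_inv, norm_pow, hdist, ← div_eq_mul_inv]
        have := hM t htc
        gcongr
  have hlim : Tendsto (fun k : ℕ => M * (‖w - a‖ / R) ^ k) atTop (𝓝 (M * 0)) := by
    refine (tendsto_pow_atTop_nhds_zero_of_lt_one (by positivity) ?_).const_mul M
    rw [div_lt_one hR, ← dist_eq_norm]; exact hw
  have := ge_of_tendsto' hlim hbound
  rw [mul_zero] at this
  exact hHw (norm_le_zero_iff.1 this)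

lemma sq_zero_unique {V : Set ℂ} (hV : IsOpen V) (hVc : IsPreconnected V) {H : ℂ → ℂ}
    (hc : ContinuousOn H V) (hd : ∀ t ∈ V, H t ≠ 0 → DifferentiableAt ℂ H t)
    {a : ℂ} (ha : a ∈ V) (h0 : ∀ᶠ t in 𝓝 a, H t = 0) : ∀ t ∈ V, H t = 0 := by
  have hu : IsOpen {b : ℂ | ∀ᶠ t in 𝓝 b, H t = 0} := isOpen_setOfPred_eventually_nhds
  have hsub : V ⊆ {b : ℂ | ∀ᶠ t in 𝓝 b, H t = 0} := by
    refine hVc.subset_of_closure_inter_subset hu ⟨a, ha, h0⟩ ?_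
    rintro b ⟨hb, hbV⟩
    obtain ⟨s, hs, hsV⟩ := Metric.isOpen_iff.1 hV b hbV
    obtain ⟨c, hc', hcb⟩ := Metric.mem_closure_iff.1 hb (s / 4) (by positivity)
    have hsub' : closedBall c (s / 2) ⊆ V := by
      refine subset_trans ?_ hsV
      intro t ht
      rw [mem_closedBall] at ht
      rw [mem_ball]
      have := dist_triangle t c b
      rw [dist_comm b c] at hcb
      linarith
    have := sq_zero_local (a := c) (R := s / 2) (by positivity) (hc.mono hsub')
      (fun t ht => hd t (hsub' (ball_subset_closedBall ht))) hc'
    have hbm : ball c (s / 2) ∈ 𝓝 b := isOpen_ball.mem_nhds (by rw [mem_ball]; linarith)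
    filter_upwards [hbm] with t ht using this t ht
  exact fun t ht => (hsub ht).self_of_nhds

lemma sq_line_convex {a : Cn n} {s : ℝ} (b v : Cn n) :
    IsOpen {t : ℂ | b + t • v ∈ ball a s} ∧ IsPreconnected {t : ℂ | b + t • v ∈ ball a s} := by
  constructor
  · exact isOpen_ball.preimage (by fun_prop)
  · have : Convex ℝ {t : ℂ | b + t • v ∈ ball a s} := by
      intro t ht u hu α β hα hβ hαβ
      have := convex_ball a s ht hu hα hβ hαβ
      simp only [mem_ofPred_eq]
      convert this using 1
      rw [smul_add, smul_add, add_add_add_comm, ← add_smul, hαβ, one_smul, add_smul, smul_assoc,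
        smul_assoc]
    exact this.isPreconnected

lemma sq_dense {f : Cn n → Cn n} {D : Set (Cn n)} (hD : IsOpen D) (hDc : IsPreconnected D)
    (hf : DifferentiableOn ℂ f D) {w : Cn n} {r : ℝ} (hr : 0 < r) (hw : ball w r ⊆ f '' D)
    {x : Cn n} (hx : x ∈ D) : ∃ᶠ y in 𝓝 x, sqJac f y ≠ 0 := by
  intro hcon
  have hcon : ∀ᶠ y in 𝓝 x, sqJac f y = 0 := by
    filter_upwards [hcon] with y hy using not_not.1 hy
  have hJ := sqJac_diff hD hf
  have hu : IsOpen {b : Cn n | ∀ᶠ t in 𝓝 b, sqJac f t = 0} := isOpen_setOfPred_eventually_nhds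
  have hsub : D ⊆ {b : Cn n | ∀ᶠ t in 𝓝 b, sqJac f t = 0} := by
    refine hDc.subset_of_closure_inter_subset hu ⟨x, hx, hcon⟩ ?_
    rintro a ⟨hb, haD⟩
    obtain ⟨s, hs, hsD⟩ := Metric.isOpen_iff.1 hD a haD
    obtain ⟨b, hb', hba⟩ := Metric.mem_closure_iff.1 hb s hs
    filter_upwards [ball_mem_nhds a hs] with y hy
    obtain ⟨hVo, hVc⟩ := sq_line_convex (a := a) (s := s) b (y - b)
    have hdiff : ∀ t ∈ {t : ℂ | b + t • (y - b) ∈ ball a s},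
        DifferentiableAt ℂ (fun t : ℂ => sqJac f (b + t • (y - b))) t := fun t ht =>
      (sq_line_hasDerivAt (hJ.differentiableAt (hD.mem_nhds (hsD ht)))).differentiableAt
    have := sq_zero_unique hVo hVc (H := fun t : ℂ => sqJac f (b + t • (y - b))) (a := 0)
      (fun t ht => (hdiff t ht).continuousAt.continuousWithinAt) (fun t ht _ => hdiff t ht)
      (by simpa [dist_comm] using hba) ?_ 1 (by simpa using hy)
    · simpa using this
    · have hcontl : Tendsto (fun t : ℂ => b + t • (y - b)) (𝓝 0) (𝓝 b) := by
        have : Continuous (fun t : ℂ => b + t • (y - b)) := by fun_prop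
        simpa using this.tendsto 0
      exact hcontl.eventually hb'
  have hz : ∀ y ∈ D, sqJac f y = 0 := fun y hy => (hsub hy).self_of_nhds
  have h0 := MeasureTheory.addHaar_image_eq_zero_of_det_fderivWithin_eq_zero
    (MeasureTheory.volume : MeasureTheory.Measure (Cn n)) (s := D) (f := f)
    (f' := fun y => (fderiv ℂ f y).restrictScalars ℝ)
    (fun y hy => ((hf.differentiableAt (hD.mem_nhds hy)).hasFDerivAt.restrictScalars
      ℝ).hasFDerivWithinAt) ?_
  · have h1 := MeasureTheory.measure_mono_null hw h0
    exact (Metric.measure_ball_pos MeasureTheory.volume w hr).ne' h1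
  · intro y hy
    have := LinearMap.det_restrictScalars (R := ℝ) (f := (fderiv ℂ f y : Cn n →ₗ[ℂ] Cn n))
    have hz' : LinearMap.det (fderiv ℂ f y : Cn n →ₗ[ℂ] Cn n) = 0 := hz y hy
    rw [hz', Algebra.norm_zero] at this
    exact this

lemma sq_open {f : Cn n → Cn n} {D : Set (Cn n)} (hD : IsOpen D)
    (hf : DifferentiableOn ℂ f D) (hinj : InjOn f D)
    (hdense : ∀ x ∈ D, ∃ᶠ y in 𝓝 x, sqJac f y ≠ 0) {a : Cn n} {s : ℝ} (hs : 0 < s)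
    (hsD : closedBall a s ⊆ D) : f '' closedBall a s ∈ 𝓝 (f a) := by
  have hJ := sqJac_diff hD hf
  have haD : a ∈ D := hsD (mem_closedBall_self hs.le)
  have hfc : ContinuousOn f (closedBall a s) := hf.continuousOn.mono hsD
  have hSc : IsCompact (f '' closedBall a s) := (isCompact_closedBall a s).image_of_continuousOn hfc
  have hsph : IsClosed (f '' sphere a s) :=
    ((isCompact_sphere a s).image_of_continuousOn (hfc.mono sphere_subset_closedBall)).isClosed
  have hfa : f a ∉ f '' sphere a s := by
    rintro ⟨y, hy, hya⟩
    have := hinj (hsD (sphere_subset_closedBall hy)) haD hya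
    rw [this, mem_sphere, dist_self] at hy
    exact hs.ne hy
  obtain ⟨ε, hε, hεs⟩ := Metric.isOpen_iff.1 hsph.isOpen_compl (f a) hfa
  refine Filter.mem_of_superset (ball_mem_nhds (f a) hε) ?_
  set g : Cn n → Cn n := Function.invFunOn f (closedBall a s) with hg
  have hgl : ∀ x ∈ closedBall a s, g (f x) = x := fun x hx =>
    (hinj.mono hsD).leftInvOn_invFunOn hx
  set H : Cn n → ℂ := fun w => if w ∈ f '' closedBall a s then sqJac f (g w) else 0 with hH
  have hHf : ∀ x ∈ closedBall a s, H (f x) = sqJac f x := by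
    intro x hx
    simp only [hH]
    rw [if_pos (mem_image_of_mem f hx), hgl x hx]
  have hHn : ∀ w, H w ≠ 0 → ∃ x ∈ closedBall a s, f x = w ∧ sqJac f x ≠ 0 := by
    intro w hw
    by_cases hwm : w ∈ f '' closedBall a s
    · obtain ⟨x, hx, rfl⟩ := hwm
      exact ⟨x, hx, rfl, by rwa [hHf x hx] at hw⟩
    · exact absurd (if_neg hwm) hw
  -- differentiability at nonzero points
  have hHd : ∀ w ∈ ball (f a) ε, H w ≠ 0 → DifferentiableAt ℂ H w := by
    intro w hw hHw
    obtain ⟨x, hx, rfl, hjx⟩ := hHn w hHw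
    have hxb : x ∈ ball a s := by
      rw [mem_ball]
      refine lt_of_le_of_ne hx fun h => hεs hw (mem_image_of_mem f h)
    obtain ⟨e, hed, hex, hfe⟩ := sq_local_inv hD hf (hsD hx) hjx
    have hev : H =ᶠ[𝓝 (f x)] fun w => sqJac f (e w) := by
      have hemem : ∀ᶠ w in 𝓝 (f x), e w ∈ ball a s :=
        hed.continuousAt.eventually (by rw [hex]; exact isOpen_ball.mem_nhds hxb)
      filter_upwards [hfe, hemem] with w h1 h2
      have := hHf (e w) (ball_subset_closedBall h2)
      rwa [h1] at this
    refine DifferentiableAt.congr_of_eventuallyEq ?_ hev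
    refine DifferentiableAt.comp (g := sqJac f) (f x) ?_ hed
    rw [hex]
    exact hJ.differentiableAt (hD.mem_nhds (hsD hx))
  have hHc : ContinuousOn H (ball (f a) ε) := by
    intro w hw
    by_cases hHw : H w = 0
    · refine ContinuousAt.continuousWithinAt ?_
      rw [Metric.continuousAt_iff']
      intro η hη
      have hcomp : IsClosed (f '' {x ∈ closedBall a s | η ≤ ‖sqJac f x‖}) := by
        refine IsCompact.isClosed (IsCompact.image_of_continuousOn ?_ (hfc.mono fun x hx => hx.1))
        refine (isCompact_closedBall a s).of_isClosed_subset ?_ (fun x hx => hx.1)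
        have hc2 : ContinuousOn (fun x => ‖sqJac f x‖) (closedBall a s) :=
          (hJ.continuousOn.mono hsD).norm
        exact hc2.preimage_isClosed_of_isClosed isClosed_closedBall isClosed_Ici
      have hwn : w ∉ f '' {x ∈ closedBall a s | η ≤ ‖sqJac f x‖} := by
        rintro ⟨x, ⟨hx, hxη⟩, rfl⟩
        rw [hHf x hx] at hHw
        rw [hHw, norm_zero] at hxη
        linarith
      filter_upwards [hcomp.isOpen_compl.mem_nhds hwn] with v hv
      rw [hHw, dist_zero_right]
      by_contra hcon
      push Not at hcon
      have hv0 : H v ≠ 0 := by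
        intro h; rw [h, norm_zero] at hcon; linarith
      obtain ⟨x, hx, rfl, hjx⟩ := hHn v hv0
      exact hv ⟨x, ⟨hx, by rwa [hHf x hx] at hcon⟩, rfl⟩
    · exact (hHd w hw hHw).continuousAt.continuousWithinAt
  intro w hw
  by_contra hwS
  have hH0 : ∀ᶠ v in 𝓝 w, H v = 0 := by
    filter_upwards [hSc.isClosed.isOpen_compl.mem_nhds hwS] with v hv
    simp only [hH]; rw [if_neg hv]
  -- a point with nonzero Jacobian
  have hnear : ∀ᶠ y in 𝓝 a, y ∈ closedBall a s ∧ f y ∈ ball (f a) ε := by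
    have hca : ContinuousAt f a := hf.continuousOn.continuousAt (hD.mem_nhds haD)
    have h1 : ∀ᶠ y in 𝓝 a, y ∈ closedBall a s := closedBall_mem_nhds a hs
    exact h1.and (hca.eventually (ball_mem_nhds _ hε))
  obtain ⟨y, hyj, hyS, hyε⟩ := ((hdense a haD).and_eventually hnear).exists
  obtain ⟨hVo, hVc⟩ := sq_line_convex (a := f a) (s := ε) w (f y - w)
  have hline : Continuous (fun t : ℂ => w + t • (f y - w)) := by fun_prop
  have := sq_zero_unique hVo hVc (H := fun t : ℂ => H (w + t • (f y - w))) (a := 0)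
    (hHc.comp hline.continuousOn fun t ht => ht)
    (fun t ht h0 => (sq_line_hasDerivAt (hHd _ ht h0)).differentiableAt)
    (by simpa using hw) ?_ 1 (by simpa using hyε)
  · simp only [one_smul, add_sub_cancel] at this
    rw [hHf y hyS] at this
    exact hyj this
  · have hcontl : Tendsto (fun t : ℂ => w + t • (f y - w)) (𝓝 0) (𝓝 w) := by
      simpa using hline.tendsto 0
    exact hcontl.eventually hH0

/-- package: global inverse. -/
lemma sq_inverse {f : Cn n → Cn n} {D : Set (Cn n)} (hD : IsOpen D)
    (hf : DifferentiableOn ℂ f D) (hinj : InjOn f D)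
    (hdense : ∀ x ∈ D, ∃ᶠ y in 𝓝 x, sqJac f y ≠ 0) :
    ∃ g : Cn n → Cn n, (∀ x ∈ D, g (f x) = x) ∧ (∀ x ∈ D, ContinuousAt g (f x)) ∧
      (∀ x ∈ D, sqJac f x ≠ 0 → DifferentiableAt ℂ g (f x)) := by
  have hgl : ∀ x ∈ D, Function.invFunOn f D (f x) = x := fun x hx => hinj.leftInvOn_invFunOn hx
  refine ⟨Function.invFunOn f D, hgl, ?_, ?_⟩
  · intro x hx
    rw [ContinuousAt, hgl x hx, Metric.nhds_basis_closedBall.tendsto_right_iff]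
    intro s hs
    obtain ⟨s0, hs0, hsD⟩ := Metric.isOpen_iff.1 hD x hx
    have hm : 0 < min s (s0 / 2) := by positivity
    have hsub : closedBall x (min s (s0 / 2)) ⊆ D :=
      (closedBall_subset_ball ((min_le_right _ _).trans_lt (by linarith))).trans hsD
    filter_upwards [sq_open hD hf hinj hdense hm hsub]
    rintro _ ⟨y, hy, rfl⟩
    rw [hgl y (hsub hy)]
    exact closedBall_subset_closedBall (min_le_left _ _) hy
  · intro x hx hj
    obtain ⟨e, hed, hex, hfe⟩ := sq_local_inv hD hf hx hj
    refine hed.congr_of_eventuallyEq ?_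
    have hemem : ∀ᶠ w in 𝓝 (f x), e w ∈ D :=
      hed.continuousAt.eventually (by rw [hex]; exact hD.mem_nhds hx)
    filter_upwards [hfe, hemem] with w h1 h2
    have := hgl (e w) h2
    rwa [h1] at this

lemma sq_pow_bound {a ρ h M : ℝ} (ha : 0 ≤ a) (hρ : 0 < ρ) (hh : 0 < h)
    (H : ∀ k : ℕ, a ^ k * h ≤ ρ ^ k * M) : a ≤ ρ := by
  by_contra hlt
  push Not at hlt
  have h1 : 1 < a / ρ := by rw [lt_div_iff₀ hρ]; linarith
  obtain ⟨k, hk⟩ := pow_unbounded_of_one_lt (M / h) h1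
  have := H k
  rw [div_pow, div_lt_div_iff₀ hh (by positivity)] at hk
  linarith

lemma sq_max {u : ℂ → Cn n} {H : ℂ → ℂ} {s t ρ : ℝ} (ht : 0 < t) (hts : t < s) (hρ : 0 < ρ)
    (hHc : ContinuousOn H (ball 0 s)) (huc : ContinuousOn u (ball 0 s))
    (hHd : ∀ w ∈ ball (0:ℂ) s, H w ≠ 0 → DifferentiableAt ℂ H w)
    (hud : ∀ w ∈ ball (0:ℂ) s, H w ≠ 0 → DifferentiableAt ℂ u w)
    (h0 : H 0 ≠ 0) (hb : ∀ w : ℂ, ‖w‖ = t → ‖u w‖ ≤ ρ) :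
    ∀ w : ℂ, ‖w‖ ≤ t → ‖u w‖ ≤ ρ := by
  have hsub : closedBall (0:ℂ) t ⊆ ball 0 s := closedBall_subset_ball hts
  obtain ⟨M, hM⟩ := (isCompact_closedBall (0:ℂ) t).exists_bound_of_continuousOn
    (hHc.mono hsub)
  -- the set where H ≠ 0
  have key : ∀ w : ℂ, ‖w‖ < t → H w ≠ 0 → ‖u w‖ ≤ ρ := by
    intro w hw hHw
    set Ω : Set ℂ := ball 0 t ∩ {x | H x ≠ 0} with hΩ
    have hΩo : IsOpen Ω := by
      have := (hHc.mono (ball_subset_closedBall.trans hsub)).isOpen_inter_preimage isOpen_ball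
        (isOpen_compl_singleton (x := (0:ℂ)))
      exact this
    have hΩcl : closure Ω ⊆ closedBall 0 t :=
      (closure_mono inter_subset_left).trans closure_ball_subset_closedBall
    obtain ⟨L, hL1, hL2⟩ := exists_dual_vector'' ℂ (u w)
    refine sq_pow_bound (norm_nonneg _) hρ (norm_pos_iff.2 hHw) (M := M) fun k => ?_
    have hd : DiffContOnCl ℂ (fun x => (L (u x)) ^ k * H x) Ω := by
      constructor
      · intro x hx
        have hxs : x ∈ ball (0:ℂ) s := hsub (ball_subset_closedBall hx.1)
        exact (((L.differentiableAt.comp x (hud x hxs hx.2)).pow k).mul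
          (hHd x hxs hx.2)).differentiableWithinAt
      · have hc := hΩcl.trans hsub
        exact ((L.continuous.comp_continuousOn (huc.mono hc)).pow k).mul (hHc.mono hc)
    have := Complex.norm_le_of_forall_mem_frontier_norm_le (U := Ω)
      (isBounded_ball.subset inter_subset_left) hd (C := ρ ^ k * M) ?_
      (z := w) (subset_closure ⟨by simpa using hw, hHw⟩)
    · rw [norm_mul, norm_pow, hL2] at this
      simpa using this
    · intro x hx
      have hxc := hΩcl hx.1
      have hMx := hM x hxc
      have hM0 : 0 ≤ M := (norm_nonneg _).trans hMx
      by_cases hHx : H x = 0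
      · simp only [hHx, mul_zero, norm_zero]; positivity
      · have hxt : ‖x‖ = t := by
          refine le_antisymm (by simpa using hxc) ?_
          by_contra hlt
          push Not at hlt
          have : x ∈ Ω := ⟨by simpa using hlt, hHx⟩
          have h2 := hx.2
          rw [hΩo.interior_eq] at h2
          exact h2 this
        rw [norm_mul, norm_pow]
        have : ‖L (u x)‖ ≤ ρ := by
          calc ‖L (u x)‖ ≤ ‖L‖ * ‖u x‖ := L.le_opNorm _
            _ ≤ 1 * ρ := by gcongr; exact hb x hxt
            _ = ρ := one_mul _
        gcongr
  intro w hw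
  rcases hw.lt_or_eq with hw' | hw'
  swap
  · exact hb w hw'
  have hfr : ∃ᶠ x in 𝓝 w, H x ≠ 0 := by
    intro hcon
    refine h0 (sq_zero_unique (V := ball 0 s) isOpen_ball (convex_ball _ _).isPreconnected hHc
      hHd (a := w) (hsub (by simpa using hw)) ?_ 0 (by simp; linarith))
    filter_upwards [hcon] with x hx
    simpa using hx
  have hcw : ContinuousAt u w := huc.continuousAt (isOpen_ball.mem_nhds (hsub (by simpa using hw)))
  by_contra hlt
  push Not at hlt
  have e1 : ∀ᶠ x in 𝓝 w, ρ < ‖u x‖ := hcw.norm.eventually (lt_mem_nhds hlt)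
  have e2 : ∀ᶠ x in 𝓝 w, ‖x‖ < t := continuous_norm.continuousAt.eventually (gt_mem_nhds hw')
  obtain ⟨x, hx, h1, h2⟩ := (hfr.and_eventually (e1.and e2)).exists
  exact absurd (key x h2 hx) (not_le.2 h1)

lemma sq_posLog_sum {x : ℝ} (hx : 0 < x) (T : Finset ℕ) :
    ∑ k ∈ T, Real.posLog (x / k) ≤ x := by
  have h1 : ∑ k ∈ T, Real.posLog (x / k) ≤ ∑ k ∈ Finset.Icc 1 ⌊x⌋₊, Real.posLog (x / k) := by
    have : ∀ k ∈ T, k ∉ T ∩ Finset.Icc 1 ⌊x⌋₊ → Real.posLog (x / k) = 0 := by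
      intro k hk hk2
      rw [Real.posLog_eq_zero_iff]
      rcases Nat.eq_zero_or_pos k with h0 | h0
      · simp [h0]
      · have : ¬ k ≤ ⌊x⌋₊ := fun h => hk2 (by simp [hk]; omega)
        push Not at this
        have hlt := (Nat.floor_lt hx.le).1 this
        have hk0 : (0:ℝ) < k := by exact_mod_cast h0
        rw [abs_of_pos (by positivity), div_le_one hk0]
        exact hlt.le
    rw [← Finset.sum_subset Finset.inter_subset_left this]
    exact Finset.sum_le_sum_of_subset_of_nonneg Finset.inter_subset_right
      (fun _ _ _ => Real.posLog_nonneg)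
  have h2 : ∀ P : ℕ, (P:ℝ) ≤ x →
      ∑ k ∈ Finset.Icc 1 P, Real.posLog (x / k) = Real.log (x ^ P / P.factorial) := by
    intro P
    induction P with
    | zero => intro _; simp
    | succ P ih =>
      intro hP
      push_cast at hP
      rw [Finset.sum_Icc_succ_top (by omega), ih (by linarith), Nat.factorial_succ, pow_succ,
        Real.posLog_eq_log, ← Real.log_mul]
      · congr 1
        have : (P.factorial : ℝ) ≠ 0 := by exact_mod_cast P.factorial_ne_zero
        push_cast
        field_simp
      · have : (P.factorial : ℝ) ≠ 0 := by exact_mod_cast P.factorial_ne_zero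
        positivity
      · positivity
      · rw [abs_of_pos (by positivity), one_le_div (by positivity)]
        push_cast; exact hP
  refine h1.trans ?_
  rw [h2 _ (Nat.floor_le hx.le)]
  have hf : (0:ℝ) < (⌊x⌋₊.factorial : ℝ) := by exact_mod_cast Nat.factorial_pos _
  rw [Real.log_le_iff_le_exp (by positivity)]
  exact Real.pow_div_factorial_le_exp _ hx.le _

lemma sq_pot_half {X A : ℝ} (hX : 0 < X) (hA : 0 ≤ A) (S : Finset ℕ) (κ : ℕ → ℕ)
    (hκ : InjOn κ S) (a : ℕ → ℝ)
    (ha : ∀ j ∈ S, a j ≤ (if κ j = 0 then A else 0) + Real.posLog (X / κ j)) :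
    ∑ j ∈ S, a j ≤ A + X := by
  refine (Finset.sum_le_sum ha).trans ?_
  rw [← Finset.sum_image (f := fun k : ℕ => (if k = 0 then A else 0) + Real.posLog (X / k)) hκ,
    Finset.sum_add_distrib]
  refine add_le_add ?_ (sq_posLog_sum hX _)
  rw [Finset.sum_ite_eq']
  split_ifs <;> simp [hA]

lemma sq_pot {X A y : ℝ} (hX : 0 < X) (hA : 0 ≤ A) (S : Finset ℕ) (a : ℕ → ℝ)
    (ha : ∀ j ∈ S, a j ≤ (if ⌊|y - j|⌋₊ = 0 then A else 0) + Real.posLog (X / ⌊|y - j|⌋₊)) :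
    ∑ j ∈ S, a j ≤ 2 * (A + X) := by
  have gen : ∀ u v : ℝ, 0 ≤ u → u + 1 ≤ v → ⌊u⌋₊ < ⌊v⌋₊ := by
    intro u v hu huv
    have := Nat.floor_le_floor huv
    rw [Nat.floor_add_one hu] at this
    omega
  rw [← Finset.sum_filter_add_sum_filter_not S (fun j : ℕ => (j:ℝ) ≤ y), two_mul]
  refine add_le_add ?_ ?_
  · refine sq_pot_half hX hA _ (fun j => ⌊|y - j|⌋₊) ?_ a ?_
    · intro i hi j hj hij
      simp only [Finset.coe_filter, Set.mem_ofPred_eq] at hi hj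
      by_contra hne
      have e1 : |y - i| = y - i := abs_of_nonneg (by linarith [hi.2])
      have e2 : |y - j| = y - j := abs_of_nonneg (by linarith [hj.2])
      simp only [e1, e2] at hij
      rcases Nat.lt_or_gt_of_ne hne with h | h
      · have : (i:ℝ) + 1 ≤ j := by exact_mod_cast h
        have := gen (y - j) (y - i) (by linarith [hj.2]) (by linarith)
        omega
      · have : (j:ℝ) + 1 ≤ i := by exact_mod_cast h
        have := gen (y - i) (y - j) (by linarith [hi.2]) (by linarith)
        omega
    · intro j hj; exact ha j (Finset.mem_filter.1 hj).1
  · refine sq_pot_half hX hA _ (fun j => ⌊|y - j|⌋₊) ?_ a ?_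
    · intro i hi j hj hij
      simp only [Finset.coe_filter, Set.mem_ofPred_eq] at hi hj
      by_contra hne
      have e1 : |y - i| = i - y := by rw [abs_sub_comm]; exact abs_of_nonneg (by linarith [hi.2])
      have e2 : |y - j| = j - y := by rw [abs_sub_comm]; exact abs_of_nonneg (by linarith [hj.2])
      simp only [e1, e2] at hij
      rcases Nat.lt_or_gt_of_ne hne with h | h
      · have : (i:ℝ) + 1 ≤ j := by exact_mod_cast h
        have := gen (i - y) (j - y) (by linarith [hi.2]) (by linarith)
        omega
      · have : (j:ℝ) + 1 ≤ i := by exact_mod_cast h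
        have := gen (j - y) (i - y) (by linarith [hj.2]) (by linarith)
        omega
    · intro j hj; exact ha j (Finset.mem_filter.1 hj).1

/-- The Green-type kernel on the disc of radius `R`. -/
def sqG (R : ℝ) (a w : ℂ) : ℝ :=
  Real.log ‖((R:ℂ) ^ 2 - (starRingEnd ℂ) a * w) / (R * (w - a))‖

lemma sq_green_bound {r R η : ℝ} {N : ℕ} (hr : 0 < r) (hrR : r < R) (hR : R ≤ 1) (hη : 0 < η)
    (hη1 : η ≤ 1) (hN0 : 0 < N) (hN : 2 * Real.log (1 / η) ≤ N) (l : ℕ → ℂ)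
    (hl : ∀ j ∈ Finset.range N, ‖l j‖ = r + (R - r) / 2 / N * j) (w : ℂ) (hw : ‖w‖ ≤ R)
    (hwl : ∀ j ∈ Finset.range N, η ≤ ‖w - l j‖) :
    (1 / N : ℝ) * ∑ j ∈ Finset.range N, sqG R (l j) w ≤ Real.log 2 + 4 / (R - r) + 1 := by
  have hNr : (0:ℝ) < N := by exact_mod_cast hN0
  have hRr : 0 < R - r := by linarith
  have hR0 : 0 < R := by linarith
  set d : ℝ := (R - r) / 2 / N with hd
  have hd0 : 0 < d := by positivity
  have hlog2 : 0 ≤ Real.log 2 := Real.log_nonneg (by norm_num)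
  set A := Real.log (1 / η) with hA
  have hA0 : 0 ≤ A := Real.log_nonneg (by rw [le_div_iff₀ hη]; linarith)
  have step : ∑ j ∈ Finset.range N, (sqG R (l j) w - Real.log 2) ≤ 2 * (A + 1 / d) := by
    refine sq_pot (y := (‖w‖ - r) / d) (by positivity) hA0 _ _ fun j hj => ?_
    have hlj := hl j hj
    have hljR : ‖l j‖ ≤ R := by
      have : (j:ℝ) ≤ N := by exact_mod_cast (Finset.mem_range.1 hj).le
      have : d * j ≤ d * N := by gcongr
      have h2 : d * N = (R - r) / 2 := by rw [hd]; field_simp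
      linarith
    have hdist : d * |(‖w‖ - r) / d - j| ≤ ‖w - l j‖ := by
      have h1 := abs_norm_sub_norm_le w (l j)
      rw [hlj] at h1
      refine le_trans (le_of_eq ?_) h1
      rw [← abs_of_pos hd0, ← abs_mul, abs_of_pos hd0]
      congr 1
      field_simp
      ring
    have hpos : 0 < ‖w - l j‖ := hη.trans_le (hwl j hj)
    have hG : sqG R (l j) w - Real.log 2 ≤ Real.log (1 / ‖w - l j‖) := by
      have hle : ‖((R:ℂ) ^ 2 - (starRingEnd ℂ) (l j) * w) / (R * (w - l j))‖
          ≤ 2 * (1 / ‖w - l j‖) := by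
        rw [norm_div, norm_mul, Complex.norm_real, Real.norm_eq_abs, abs_of_pos hR0]
        have : ‖(R:ℂ) ^ 2 - (starRingEnd ℂ) (l j) * w‖ ≤ 2 * R := by
          refine (norm_sub_le _ _).trans ?_
          rw [norm_pow, norm_mul, Complex.norm_conj, Complex.norm_real, Real.norm_eq_abs,
            abs_of_pos hR0]
          have : ‖l j‖ * ‖w‖ ≤ R * R := by gcongr
          nlinarith
        rw [div_le_iff₀ (by positivity)]
        refine this.trans (le_of_eq ?_)
        field_simp
      unfold sqG
      rcases (norm_nonneg (((R:ℂ) ^ 2 - (starRingEnd ℂ) (l j) * w) / (R * (w - l j)))).eq_or_lt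
        with h0 | h0
      · rw [← h0, Real.log_zero]
        have : ‖w - l j‖ ≤ 2 := (norm_sub_le _ _).trans (by linarith)
        have h3 : Real.log ‖w - l j‖ ≤ Real.log 2 := Real.log_le_log hpos this
        rw [one_div, Real.log_inv]; linarith
      · have := Real.log_le_log h0 hle
        rw [Real.log_mul (by norm_num) (by positivity)] at this
        linarith
    refine hG.trans ?_
    split_ifs with hk
    · have : Real.log (1 / ‖w - l j‖) ≤ A := by
        apply Real.log_le_log (by positivity)
        exact one_div_le_one_div_of_le hη (hwl j hj)
      linarith [Real.posLog_nonneg (x := 1 / d / (⌊|(‖w‖ - r) / d - j|⌋₊ : ℝ))]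
    · rw [zero_add]
      refine le_trans ?_ (le_max_right _ _)
      have hkp : (0:ℝ) < (⌊|(‖w‖ - r) / d - j|⌋₊ : ℝ) := by exact_mod_cast Nat.pos_of_ne_zero hk
      apply Real.log_le_log (by positivity)
      rw [div_div]
      apply one_div_le_one_div_of_le (by positivity)
      refine le_trans ?_ hdist
      gcongr
      exact Nat.floor_le (abs_nonneg _)
  rw [Finset.sum_sub_distrib, Finset.sum_const, Finset.card_range, nsmul_eq_mul] at step
  have h1d : 1 / d = 2 * N / (R - r) := by rw [hd]; field_simp
  rw [h1d] at step
  rw [one_div, inv_mul_le_iff₀ hNr]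
  have : (N:ℝ) * (Real.log 2 + 4 / (R - r) + 1) = N * Real.log 2 + 2 * (2 * N / (R - r)) + N := by
    field_simp; ring
  rw [this]
  linarith

lemma sqG_zero {R : ℝ} (hR : 0 < R) {a : ℂ} (ha : a ≠ 0) : sqG R a 0 = Real.log (R / ‖a‖) := by
  unfold sqG
  congr 1
  rw [mul_zero, sub_zero, zero_sub, norm_div, norm_pow, norm_mul, norm_neg, Complex.norm_real,
    Real.norm_eq_abs, abs_of_pos hR]
  have : ‖a‖ ≠ 0 := norm_ne_zero_iff.2 ha
  field_simp

lemma sqG_bdry {R : ℝ} (hR : 0 < R) {a w : ℂ} (hw : ‖w‖ = R) (haw : w ≠ a) : sqG R a w = 0 := by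
  unfold sqG
  have e : (R:ℂ) ^ 2 - (starRingEnd ℂ) a * w = (starRingEnd ℂ) (w - a) * w := by
    rw [map_sub, sub_mul, mul_comm ((starRingEnd ℂ) w) w, Complex.mul_conj, Complex.normSq_eq_norm_sq,
      hw]
    push_cast; rfl
  rw [e, norm_div, norm_mul, norm_mul, Complex.norm_conj, hw, Complex.norm_real, Real.norm_eq_abs,
    abs_of_pos hR]
  have : ‖w - a‖ ≠ 0 := norm_ne_zero_iff.2 (sub_ne_zero.2 haw)
  rw [mul_comm, div_self (by positivity), Real.log_one]

lemma sqG_num_ne {R : ℝ} (hR : 0 < R) {a w : ℂ} (hw : ‖w‖ ≤ R) (ha : ‖a‖ < R) :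
    (R:ℂ) ^ 2 - (starRingEnd ℂ) a * w ≠ 0 := by
  intro h
  have h2 : ‖(R:ℂ)^2‖ = ‖(starRingEnd ℂ) a * w‖ := by rw [sub_eq_zero.1 h]
  rw [norm_pow, norm_mul, Complex.norm_conj, Complex.norm_real, Real.norm_eq_abs,
    abs_of_pos hR] at h2
  have : ‖a‖ * ‖w‖ < R * R := by
    calc ‖a‖ * ‖w‖ ≤ ‖a‖ * R := by gcongr
      _ < R * R := by gcongr
  nlinarith

lemma sq_mean_sq {E : Type*} [NormedAddCommGroup E] [InnerProductSpace ℂ E] [CompleteSpace E]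
    {v : ℂ → E} {s τ : ℝ} (hτ : 0 < τ) (hτs : τ < s) (hv : DifferentiableOn ℂ v (ball 0 s)) :
    Real.circleAverage (fun t => ‖v t‖ ^ 2) 0 τ
      = ‖v 0‖ ^ 2 + Real.circleAverage (fun t => ‖v t - v 0‖ ^ 2) 0 τ := by
  have hsub : closedBall (0:ℂ) τ ⊆ ball 0 s := closedBall_subset_ball hτs
  have hcS : ContinuousOn v (sphere 0 τ) :=
    hv.continuousOn.mono (sphere_subset_closedBall.trans hsub)
  have hvi : CircleIntegrable v 0 τ := hcS.circleIntegrable hτ.le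
  have hcl : DiffContOnCl ℂ v (ball 0 |τ|) := by
    rw [abs_of_pos hτ]
    refine DifferentiableOn.diffContOnCl (hv.mono ?_)
    rw [closure_ball _ hτ.ne']; exact hsub
  have havg := hcl.circleAverage
  let L : E →L[ℝ] ℝ := Complex.reCLM.comp ((innerSL ℂ (v 0)).restrictScalars ℝ)
  have hL : Real.circleAverage (fun t => L (v t)) 0 τ = ‖v 0‖ ^ 2 := by
    have := L.circleAverage_comp_comm hvi
    rw [havg] at this
    change Real.circleAverage (L ∘ v) 0 τ = _
    rw [this]
    change (inner ℂ (v 0) (v 0)).re = _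
    exact inner_self_eq_norm_sq (𝕜 := ℂ) (v 0)
  have hid : ∀ t, ‖v t‖ ^ 2 = (2 * L (v t) + (- ‖v 0‖ ^ 2)) + ‖v t - v 0‖ ^ 2 := by
    intro t
    have h1 := norm_sub_sq (𝕜 := ℂ) (v t) (v 0)
    have h2 : RCLike.re (inner ℂ (v t) (v 0)) = L (v t) := by
      rw [← inner_conj_symm, RCLike.conj_re]; rfl
    rw [h2] at h1
    rw [h1]; ring
  have i1 : CircleIntegrable (fun t => 2 * L (v t)) 0 τ :=
    (continuousOn_const.mul (L.continuous.comp_continuousOn hcS)).circleIntegrable hτ.le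
  have i2 : CircleIntegrable (fun _ : ℂ => - ‖v 0‖ ^ 2) 0 τ := circleIntegrable_const _ _ _
  have i3 : CircleIntegrable (fun t => ‖v t - v 0‖ ^ 2) 0 τ :=
    (((hcS.sub continuousOn_const).norm).pow 2).circleIntegrable hτ.le
  have i12 : CircleIntegrable (fun t => 2 * L (v t) + (- ‖v 0‖ ^ 2)) 0 τ := i1.add i2
  rw [show (fun t => ‖v t‖ ^ 2) = fun t => (2 * L (v t) + (- ‖v 0‖ ^ 2)) + ‖v t - v 0‖ ^ 2 from
    funext hid, Real.circleAverage_fun_add i12 i3, Real.circleAverage_fun_add i1 i2,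
    Real.circleAverage_const]
  have := Real.circleAverage_fun_smul (a := (2:ℝ)) (f := fun t => L (v t)) (c := 0) (R := τ)
  simp only [smul_eq_mul] at this
  rw [this, hL]; ring

lemma sq_strict_mean {ι : Type*} (T : Finset ι) (co : ι → ℝ) (h : ι → ℂ → ℂ) {α : ℂ → ℂ}
    {β : ℂ → Cn n} {a : ℂ} {ε K s : ℝ} (hs : 0 < s) (hε : 0 < ε) (hK : 0 ≤ K)
    (hh : ∀ i ∈ T, DifferentiableOn ℂ (h i) (ball 0 s))
    (hh0 : ∀ i ∈ T, ∀ t ∈ ball (0:ℂ) s, h i t ≠ 0)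
    (hα : DifferentiableOn ℂ α (ball 0 s)) (hβ : DifferentiableOn ℂ β (ball 0 s))
    (hα' : HasDerivAt α a 0) (ha : a ≠ 0) (hβ' : HasDerivAt β 0 0) {q : ℂ → ℝ}
    (hq : ∀ t ∈ ball (0:ℂ) s, q t =
      ∑ i ∈ T, co i * Real.log ‖h i t‖ + ε * ‖α t‖ ^ 2 - K * ‖β t‖ ^ 2) :
    ∃ τ : ℝ, 0 < τ ∧ τ < s ∧ Continuous (fun θ : ℝ => q (circleMap 0 τ θ)) ∧
      q 0 < Real.circleAverage q 0 τ := by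
  have h1 : (fun t => β t - β 0) =o[𝓝 0] fun t => α t - α 0 := by
    have e1 := hβ'.isLittleO
    have e2 := (HasDerivAtFilter.isTheta_sub hα' ha).symm.isBigO
    have e1' : (fun t => β t - β 0) =o[𝓝 0] fun t : ℂ => t - 0 := by
      simpa using e1
    refine e1'.trans_isBigO ?_
    have := e2.comp_tendsto (k := fun t : ℂ => (t, (0:ℂ))) (l' := 𝓝 0)
      (by exact tendsto_id.prodMk (tendsto_const_pure))
    simpa [Function.comp_def] using this
  set c : ℝ := Real.sqrt (ε / (K + 1)) with hc
  have hc0 : 0 < c := Real.sqrt_pos.2 (by positivity)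
  have hc2 : K * c ^ 2 < ε := by
    rw [hc, Real.sq_sqrt (by positivity), ← mul_div_assoc, div_lt_iff₀ (by positivity)]
    nlinarith
  have h2 := h1.def hc0
  have h3 := hα'.eventually_ne ha (c := α 0)
  rw [eventually_nhdsWithin_iff] at h3
  obtain ⟨δ, hδ, hball⟩ := Metric.eventually_nhds_iff_ball.1 (h2.and h3)
  set τ := min δ s / 2 with hτ
  have hm : 0 < min δ s := lt_min hδ hs
  have hτ0 : 0 < τ := by positivity
  have hτs : τ < s := by have := min_le_right δ s; linarith
  have hτδ : τ < δ := by have := min_le_left δ s; linarith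
  have hsub : sphere (0:ℂ) τ ⊆ ball 0 s :=
    sphere_subset_closedBall.trans (closedBall_subset_ball hτs)
  have hcsub : closedBall (0:ℂ) τ ⊆ ball 0 s := closedBall_subset_ball hτs
  have cont : ∀ g : ℂ → ℝ, ContinuousOn g (ball 0 s) → CircleIntegrable g 0 τ :=
    fun g hg => (hg.mono hsub).circleIntegrable hτ0.le
  have clog : ∀ i ∈ T, ContinuousOn (fun t => co i * Real.log ‖h i t‖) (ball 0 s) := by
    intro i hi
    exact continuousOn_const.mul (((hh i hi).continuousOn.norm).log
      (fun t ht => norm_ne_zero_iff.2 (hh0 i hi t ht)))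
  have cA : ContinuousOn (fun t => ε * ‖α t‖ ^ 2) (ball 0 s) :=
    continuousOn_const.mul (hα.continuousOn.norm.pow 2)
  have cB : ContinuousOn (fun t => K * ‖β t‖ ^ 2) (ball 0 s) :=
    continuousOn_const.mul (hβ.continuousOn.norm.pow 2)
  have cA' : ContinuousOn (fun t => ε * ‖α t - α 0‖ ^ 2) (ball 0 s) :=
    continuousOn_const.mul ((hα.continuousOn.sub continuousOn_const).norm.pow 2)
  have cB' : ContinuousOn (fun t => K * ‖β t - β 0‖ ^ 2) (ball 0 s) :=
    continuousOn_const.mul ((hβ.continuousOn.sub continuousOn_const).norm.pow 2)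
  have cL : ContinuousOn (fun t => ∑ i ∈ T, co i * Real.log ‖h i t‖) (ball 0 s) :=
    continuousOn_finsetSum _ clog
  have cq : ContinuousOn q (ball 0 s) := ((cL.add cA).sub cB).congr hq
  have hmem : ∀ θ : ℝ, circleMap 0 τ θ ∈ sphere (0:ℂ) τ := fun θ =>
    circleMap_mem_sphere _ hτ0.le _
  have ccirc : ∀ g : ℂ → ℝ, ContinuousOn g (ball 0 s) →
      Continuous (fun θ : ℝ => g (circleMap 0 τ θ)) := fun g hg =>
    hg.comp_continuous (continuous_circleMap _ _) (fun θ => hsub (hmem θ))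
  refine ⟨τ, hτ0, hτs, ccirc q cq, ?_⟩
  have smulavg : ∀ (x : ℝ) (g : ℂ → ℝ), Real.circleAverage (fun t => x * g t) 0 τ
      = x * Real.circleAverage g 0 τ := by
    intro x g
    have := Real.circleAverage_fun_smul (a := x) (f := g) (c := 0) (R := τ)
    simpa only [smul_eq_mul] using this
  have avlog : ∀ i ∈ T, Real.circleAverage (fun t => co i * Real.log ‖h i t‖) 0 τ
      = co i * Real.log ‖h i 0‖ := by
    intro i hi
    rw [smulavg (co i) (fun t => Real.log ‖h i t‖)]
    congr 1
    have han := (hh i hi).analyticOnNhd isOpen_ball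
    apply AnalyticOnNhd.circleAverage_log_norm_of_ne_zero
    · rw [abs_of_pos hτ0]; exact han.mono hcsub
    · rw [abs_of_pos hτ0]; intro u hu; exact hh0 i hi u (hcsub hu)
  have hA := sq_mean_sq hτ0 hτs hα
  have hB := sq_mean_sq hτ0 hτs hβ
  have hP : 0 < Real.circleAverage (fun t => ε * ‖α t - α 0‖ ^ 2 - K * ‖β t - β 0‖ ^ 2) 0 τ := by
    rw [Real.circleAverage_def, smul_eq_mul]
    refine mul_pos (by positivity) ?_
    refine intervalIntegral.intervalIntegral_pos_of_pos
      ((ccirc _ (cA'.sub cB')).intervalIntegrable _ _) ?_ (by positivity)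
    intro θ
    have hn : ‖circleMap 0 τ θ‖ = τ := by simpa using hmem θ
    have ht := hball (circleMap 0 τ θ) (by rw [mem_ball_zero_iff, hn]; exact hτδ)
    have hne := ht.2 (by
      intro h0
      rw [h0, norm_zero] at hn; linarith)
    have hpos : 0 < ‖α (circleMap 0 τ θ) - α 0‖ := norm_pos_iff.2 (sub_ne_zero.2 hne)
    have hle := ht.1
    have : ‖β (circleMap 0 τ θ) - β 0‖ ^ 2 ≤ (c * ‖α (circleMap 0 τ θ) - α 0‖) ^ 2 := by gcongr
    have h4 : K * ‖β (circleMap 0 τ θ) - β 0‖ ^ 2 ≤ K * c ^ 2 * ‖α (circleMap 0 τ θ) - α 0‖ ^ 2 := by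
      rw [mul_assoc, ← mul_pow]; gcongr
    have h5 : K * c ^ 2 * ‖α (circleMap 0 τ θ) - α 0‖ ^ 2 < ε * ‖α (circleMap 0 τ θ) - α 0‖ ^ 2 := by
      gcongr
    change 0 < ε * ‖α (circleMap 0 τ θ) - α 0‖ ^ 2 - K * ‖β (circleMap 0 τ θ) - β 0‖ ^ 2
    linarith
  rw [Real.circleAverage_fun_sub (cont _ cA') (cont _ cB'), smulavg ε (fun t => ‖α t - α 0‖ ^ 2),
    smulavg K (fun t => ‖β t - β 0‖ ^ 2)] at hP
  have hqavg : Real.circleAverage q 0 τ = Real.circleAverage (fun t =>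
      ∑ i ∈ T, co i * Real.log ‖h i t‖ + ε * ‖α t‖ ^ 2 - K * ‖β t‖ ^ 2) 0 τ := by
    apply Real.circleAverage_congr_sphere
    rw [abs_of_pos hτ0]
    intro t ht; exact hq t (hsub ht)
  have cLA : ContinuousOn (fun t => ∑ i ∈ T, co i * Real.log ‖h i t‖ + ε * ‖α t‖ ^ 2) (ball 0 s) :=
    cL.add cA
  rw [hqavg, Real.circleAverage_fun_sub (cont _ cLA) (cont _ cB),
    Real.circleAverage_fun_add (cont _ cL) (cont _ cA),
    Real.circleAverage_fun_sum (fun i hi => cont _ (clog i hi)), Finset.sum_congr rfl avlog,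
    smulavg ε (fun t => ‖α t‖ ^ 2), smulavg K (fun t => ‖β t‖ ^ 2), hA, hB,
    hq 0 (by simpa using hs)]
  linarith

/-- The auxiliary function of the maximum principle argument. -/
def sqQ (f : Cn n → Cn n) (e : Cn n) (R : ℝ) (l : ℕ → ℂ) (N : ℕ) (k ε K δ M : ℝ) (x : Cn n) : ℝ :=
  k * ∑ j ∈ Finset.range N, sqG R (l j) (inner ℂ e (f x)) + δ * Real.log ‖sqJac f x / (M:ℂ)‖
    + ε * ‖inner ℂ e (f x)‖ ^ 2 - K * ‖f x - inner ℂ e (f x) • e‖ ^ 2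

lemma sq_no_max {f : Cn n → Cn n} {D : Set (Cn n)} (hD : IsOpen D) (hf : DifferentiableOn ℂ f D)
    {φ : Cn n → EReal} (hφ : PSHOn φ D) {x : Cn n} (hx : x ∈ D) (hj : sqJac f x ≠ 0)
    {e : Cn n} (he : ‖e‖ = 1) {R : ℝ} (hR : 0 < R) {l : ℕ → ℂ} {N : ℕ} {k ε K δ M : ℝ}
    (hε : 0 < ε) (hK : 0 ≤ K) (hM : M ≠ 0)
    (hl1 : ∀ j ∈ Finset.range N, inner ℂ e (f x) ≠ l j)
    (hl2 : ∀ j ∈ Finset.range N, (R:ℂ) ^ 2 - (starRingEnd ℂ) (l j) * inner ℂ e (f x) ≠ 0)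
    {m : ℝ} (hmax : ∀ᶠ y in 𝓝 x, φ y ≤ ((m - sqQ f e R l N k ε K δ M y : ℝ) : EReal)) :
    φ x < ((m - sqQ f e R l N k ε K δ M x : ℝ) : EReal) := by
  set q := sqQ f e R l N k ε K δ M with hqdef
  -- direction
  obtain ⟨b, hb⟩ : ∃ b, fderiv ℂ f x b = e := by
    have hu : IsUnit (LinearMap.det (fderiv ℂ f x : Cn n →ₗ[ℂ] Cn n)) := isUnit_iff_ne_zero.2 hj
    have hsurj : Function.Surjective (fderiv ℂ f x) := by
      have := (LinearMap.isUnit_iff_isUnit_det (fderiv ℂ f x : Cn n →ₗ[ℂ] Cn n)).2 hu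
      exact ((Module.End.isUnit_iff _).1 this).2
    exact hsurj e
  have hlinec : Continuous (fun t : ℂ => x + t • b) := by fun_prop
  have hline0 : Tendsto (fun t : ℂ => x + t • b) (𝓝 0) (𝓝 x) := by
    have := hlinec.tendsto 0; simpa using this
  have hcf : ContinuousAt f x := (hf.differentiableAt (hD.mem_nhds hx)).continuousAt
  have hcJ : ContinuousAt (sqJac f) x :=
    ((sqJac_diff hD hf).differentiableAt (hD.mem_nhds hx)).continuousAt
  have hci : ContinuousAt (fun y => (inner ℂ e (f y) : ℂ)) x :=
    ((innerSL ℂ e).continuous.continuousAt).comp hcf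
  have ev : ∀ᶠ y in 𝓝 x, y ∈ D ∧ sqJac f y ≠ 0 ∧
      (∀ j ∈ Finset.range N, inner ℂ e (f y) ≠ l j ∧
        (R:ℂ) ^ 2 - (starRingEnd ℂ) (l j) * inner ℂ e (f y) ≠ 0) ∧
      φ y ≤ ((m - q y : ℝ) : EReal) := by
    refine (hD.eventually_mem hx).and ((hcJ.eventually_ne hj).and (Filter.Eventually.and ?_ hmax))
    rw [Filter.eventually_all_finset]
    intro j hj'
    refine (hci.eventually_ne (hl1 j hj')).and ?_
    have : ContinuousAt (fun y => (R:ℂ) ^ 2 - (starRingEnd ℂ) (l j) * inner ℂ e (f y)) x :=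
      continuousAt_const.sub (continuousAt_const.mul hci)
    exact this.eventually_ne (hl2 j hj')
  obtain ⟨s, hs, hS⟩ := Metric.eventually_nhds_iff_ball.1 (hline0.eventually ev)
  have hfd : ∀ t ∈ ball (0:ℂ) s, HasDerivAt (fun t : ℂ => f (x + t • b))
      (fderiv ℂ f (x + t • b) b) t := fun t ht =>
    sq_line_hasDerivAt (hf.differentiableAt (hD.mem_nhds (hS t ht).1))
  have hFd : DifferentiableOn ℂ (fun t : ℂ => f (x + t • b)) (ball 0 s) := fun t ht =>
    (hfd t ht).differentiableAt.differentiableWithinAt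
  have hJd : DifferentiableOn ℂ (fun t : ℂ => sqJac f (x + t • b)) (ball 0 s) := fun t ht =>
    (sq_line_hasDerivAt ((sqJac_diff hD hf).differentiableAt
      (hD.mem_nhds (hS t ht).1))).differentiableAt.differentiableWithinAt
  have h0s : (0:ℂ) ∈ ball (0:ℂ) s := by simpa using hs
  have hF0 : HasDerivAt (fun t : ℂ => f (x + t • b)) e 0 := by
    have := hfd 0 h0s
    rw [zero_smul, add_zero, hb] at this
    exact this
  have hα0 : HasDerivAt (fun t : ℂ => (inner ℂ e (f (x + t • b)) : ℂ)) 1 0 := by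
    have := ((innerSL ℂ e).hasFDerivAt (x := f (x + (0:ℂ) • b))).comp_hasDerivAt 0 hF0
    have h1 : innerSL ℂ e e = 1 := by
      rw [innerSL_apply_apply, inner_self_eq_norm_sq_to_K, he]; simp
    rw [h1] at this
    exact this
  have hαd : DifferentiableOn ℂ (fun t : ℂ => (inner ℂ e (f (x + t • b)) : ℂ)) (ball 0 s) :=
    (innerSL ℂ e).differentiable.comp_differentiableOn hFd
  have hβ0 : HasDerivAt (fun t : ℂ => f (x + t • b) - (inner ℂ e (f (x + t • b)) : ℂ) • e) 0 0 := by
    have := hF0.sub (hα0.smul_const e)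
    rw [one_smul, sub_self] at this
    exact this
  have hβd : DifferentiableOn ℂ
      (fun t : ℂ => f (x + t • b) - (inner ℂ e (f (x + t • b)) : ℂ) • e) (ball 0 s) :=
    hFd.sub (hαd.smul_const e)
  have hMC : (M:ℂ) ≠ 0 := by exact_mod_cast hM
  have hRC : (R:ℂ) ≠ 0 := by exact_mod_cast hR.ne'
  obtain ⟨τ, hτ0, hτs, hcont, hlt⟩ := sq_strict_mean (n := n) (Finset.insertNone (Finset.range N))
    (fun i => i.elim δ (fun _ => k))
    (fun i t => i.elim (sqJac f (x + t • b) / (M:ℂ)) (fun j =>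
      ((R:ℂ) ^ 2 - (starRingEnd ℂ) (l j) * inner ℂ e (f (x + t • b))) /
        (R * (inner ℂ e (f (x + t • b)) - l j))))
    (q := fun t => q (x + t • b))
    hs hε hK (by
      intro i hi
      cases i with
      | none => exact hJd.div_const _
      | some j =>
        have hj' : j ∈ Finset.range N := by simpa using hi
        refine ((differentiableOn_const _).sub ((differentiableOn_const _).mul hαd)).div
          ((differentiableOn_const _).mul (hαd.sub (differentiableOn_const _))) ?_
        intro t ht
        exact mul_ne_zero hRC (sub_ne_zero.2 ((hS t ht).2.2.1 j hj').1)) (by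
      intro i hi t ht
      cases i with
      | none => exact div_ne_zero (hS t ht).2.1 hMC
      | some j =>
        have hj' : j ∈ Finset.range N := by simpa using hi
        exact div_ne_zero ((hS t ht).2.2.1 j hj').2
          (mul_ne_zero hRC (sub_ne_zero.2 ((hS t ht).2.2.1 j hj').1)))
    hαd hβd hα0 one_ne_zero hβ0 (by
      intro t ht
      simp only [Finset.sum_insertNone, hqdef, sqQ, sqG, Option.elim, Finset.mul_sum]
      ring)
  have hP := hφ.2 x hx b τ hτ0 (fun t ht => (hS t (by
      rw [mem_ball_zero_iff]; linarith)).1) (fun θ => m - q (x + circleMap 0 τ θ • b))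
    (continuous_const.sub hcont) (by
      intro θ
      have e1 : (τ:ℂ) * Complex.exp (θ * Complex.I) = circleMap 0 τ θ := by simp [circleMap]
      rw [e1]
      refine (hS _ ?_).2.2.2
      rw [mem_ball_zero_iff, norm_circleMap_zero, abs_of_pos hτ0]
      exact hτs)
  refine hP.trans_lt ?_
  rw [EReal.coe_lt_coe_iff, intervalIntegral.integral_sub (by simp)
    (hcont.intervalIntegrable _ _), intervalIntegral.integral_const]
  rw [Real.circleAverage_def, smul_eq_mul] at hlt
  simp only [zero_smul, add_zero] at hlt
  have hpi : (0:ℝ) < 2 * Real.pi := by positivity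
  rw [mul_sub, sub_zero, smul_eq_mul, one_div, inv_mul_cancel_left₀ hpi.ne']
  linarith

lemma sqQ_cont {f : Cn n → Cn n} {D : Set (Cn n)} (hD : IsOpen D) (hf : DifferentiableOn ℂ f D)
    {x : Cn n} (hx : x ∈ D) (hj : sqJac f x ≠ 0)
    {e : Cn n} {R : ℝ} (hR : 0 < R) {l : ℕ → ℂ} {N : ℕ} {k ε K δ M : ℝ} (hM : M ≠ 0)
    (hl1 : ∀ j ∈ Finset.range N, inner ℂ e (f x) ≠ l j)
    (hl2 : ∀ j ∈ Finset.range N, (R:ℂ) ^ 2 - (starRingEnd ℂ) (l j) * inner ℂ e (f x) ≠ 0) :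
    ContinuousAt (sqQ f e R l N k ε K δ M) x := by
  have hcf : ContinuousAt f x := (hf.differentiableAt (hD.mem_nhds hx)).continuousAt
  have hcJ : ContinuousAt (sqJac f) x :=
    ((sqJac_diff hD hf).differentiableAt (hD.mem_nhds hx)).continuousAt
  have hci : ContinuousAt (fun y => (inner ℂ e (f y) : ℂ)) x :=
    ((innerSL ℂ e).continuous.continuousAt).comp hcf
  have hMC : (M:ℂ) ≠ 0 := by exact_mod_cast hM
  have hRC : (R:ℂ) ≠ 0 := by exact_mod_cast hR.ne'
  unfold sqQ
  refine ContinuousAt.sub (ContinuousAt.add (ContinuousAt.add ?_ ?_) ?_) ?_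
  · refine continuousAt_const.mul (tendsto_finsetSum _ fun j hj' => ?_)
    have hden : (R:ℂ) * (inner ℂ e (f x) - l j) ≠ 0 :=
      mul_ne_zero hRC (sub_ne_zero.2 (hl1 j hj'))
    have c1 : ContinuousAt (fun y => ((R:ℂ) ^ 2 - (starRingEnd ℂ) (l j) * inner ℂ e (f y)) /
        (R * (inner ℂ e (f y) - l j))) x :=
      (continuousAt_const.sub (continuousAt_const.mul hci)).div
        (continuousAt_const.mul (hci.sub continuousAt_const)) hden
    exact c1.norm.log (norm_ne_zero_iff.2 (div_ne_zero (hl2 j hj') hden))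
  · exact continuousAt_const.mul ((hcJ.div_const _).norm.log
      (norm_ne_zero_iff.2 (div_ne_zero hj hMC)))
  · exact continuousAt_const.mul (hci.norm.pow 2)
  · exact continuousAt_const.mul ((hcf.sub (hci.smul continuousAt_const)).norm.pow 2)

lemma sq_ereal_aux {v : EReal} {q m : ℝ} (h : v + (q : EReal) ≤ (m : EReal)) :
    v ≤ ((m - q : ℝ) : EReal) := by
  induction v with
  | bot => exact bot_le
  | top => simp at h
  | coe v =>
    rw [← EReal.coe_add, EReal.coe_le_coe_iff] at h
    rw [EReal.coe_le_coe_iff]; linarith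

lemma sq_core {f g : Cn n → Cn n} {D : Set (Cn n)} (hD : IsOpen D) (hf : DifferentiableOn ℂ f D)
    {φ : Cn n → EReal} (hφ : PSHOn φ D) (hφ0 : ∀ x ∈ D, φ x ≤ 0) {R R1 κ η c k : ℝ}
    (hg : ∀ ζ ∈ closedBall (0 : Cn n) R, g ζ ∈ D ∧ f (g ζ) = ζ ∧ ContinuousAt g ζ)
    (hgf : ∀ x ∈ D, g (f x) = x) {e : Cn n} (he : ‖e‖ = 1) (hR1 : 0 < R1) (hR11 : R1 ≤ 1)
    (hκ : 0 < κ) (hκR : R1 + κ ≤ R) (hη : 0 < η) (hc : 0 < c) {l : ℕ → ℂ} {N : ℕ}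
    (hl : ∀ j ∈ Finset.range N, ‖l j‖ < R1) (hlη : ∀ j ∈ Finset.range N, η ≤ ‖l j‖)
    (hG : ∀ w : ℂ, ‖w‖ ≤ R1 → (∀ j ∈ Finset.range N, η ≤ ‖w - l j‖) →
      k * ∑ j ∈ Finset.range N, sqG R1 (l j) w ≤ c)
    (hesc : ∀ x ∈ D, ‖f x‖ ≤ R → ‖f x - inner ℂ e (f x) • e‖ ≤ κ → ∀ j ∈ Finset.range N,
      ‖inner ℂ e (f x) - l j‖ = η → φ x ≤ ((-c : ℝ) : EReal))
    {z : Cn n} (hz : z ∈ D) (hfz : f z = 0) (hjz : sqJac f z ≠ 0)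
    (hφz : ((-(k * ∑ j ∈ Finset.range N, sqG R1 (l j) 0) : ℝ) : EReal) < φ z) : False := by
  -- constants
  have hcJ : ContinuousOn (sqJac f) D := (sqJac_diff hD hf).continuousOn
  have hHc : ContinuousOn (fun ζ => sqJac f (g ζ)) (closedBall 0 R) := by
    intro ζ hζ
    have h1 := hg ζ hζ
    exact ((hcJ.continuousAt (hD.mem_nhds h1.1)).comp h1.2.2).continuousWithinAt
  obtain ⟨M', hM'⟩ := (isCompact_closedBall (0 : Cn n) R).exists_bound_of_continuousOn hHc
  set M : ℝ := max M' 1 with hMdef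
  have hM0 : 0 < M := lt_of_lt_of_le one_pos (le_max_right _ _)
  have hMb : ∀ x ∈ D, ‖f x‖ ≤ R → ‖sqJac f x‖ ≤ M := by
    intro x hx hfx
    have := hM' (f x) (by simpa using hfx)
    simp only [hgf x hx] at this
    exact this.trans (le_max_left _ _)
  obtain ⟨vz, hvz⟩ : ∃ v : ℝ, φ z = v := by
    have h0 := hφ0 z hz
    refine ⟨(φ z).toReal, (EReal.coe_toReal ?_ ?_).symm⟩
    · intro h; rw [h] at h0; simp at h0
    · intro h; rw [h] at hφz; simp at hφz
  set S0 := k * ∑ j ∈ Finset.range N, sqG R1 (l j) 0 with hS0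
  rw [hvz, EReal.coe_lt_coe_iff] at hφz
  set m1 := vz + S0 with hm1
  have hm1p : 0 < m1 := by linarith
  set m0 := m1 / 2 with hm0
  have hm0p : 0 < m0 := by positivity
  set Lz := Real.log ‖sqJac f z / (M:ℂ)‖ with hLz
  set δ := m0 / (|Lz| + 1) with hδ
  have hδ0 : 0 < δ := by positivity
  have hδL : -m0 ≤ δ * Lz := by
    have h1 : δ * |Lz| ≤ m0 := by
      rw [hδ, div_mul_eq_mul_div, div_le_iff₀ (by positivity)]
      nlinarith [abs_nonneg Lz]
    have := neg_abs_le Lz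
    nlinarith
  set ε := m0 / 2 with hε
  have hε0 : 0 < ε := by positivity
  set K := (c + m0) / κ ^ 2 with hK
  have hK0 : 0 ≤ K := by positivity
  set ν := min ‖sqJac f z‖ (M * Real.exp (-(c + m0) / δ)) with hν
  have hν0 : 0 < ν := lt_min (norm_pos_iff.2 hjz) (by positivity)
  set q := sqQ f e R1 l N k ε K δ M with hq
  -- compact set
  set A' : Set (Cn n) := {ζ | ζ ∈ closedBall (0 : Cn n) R ∧ (‖inner ℂ e ζ‖ ≤ R1 ∧
      ‖ζ - inner ℂ e ζ • e‖ ≤ κ ∧ ∀ j ∈ Finset.range N, η ≤ ‖inner ℂ e ζ - l j‖) ∧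
      ν ≤ ‖sqJac f (g ζ)‖} with hA'
  have hcinn : Continuous (fun ζ : Cn n => (inner ℂ e ζ : ℂ)) := (innerSL ℂ e).continuous
  have hA'c : IsCompact A' := by
    have hclosed1 : IsClosed {ζ : Cn n | ‖inner ℂ e ζ‖ ≤ R1 ∧
      ‖ζ - inner ℂ e ζ • e‖ ≤ κ ∧ ∀ j ∈ Finset.range N, η ≤ ‖inner ℂ e ζ - l j‖} := by
      refine (isClosed_le hcinn.norm continuous_const).inter
        ((isClosed_le (continuous_id.sub (hcinn.smul continuous_const)).norm
          continuous_const).inter ?_)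
      have hset : {ζ : Cn n | ∀ j ∈ Finset.range N, η ≤ ‖inner ℂ e ζ - l j‖} =
          ⋂ j, ⋂ (_ : j ∈ Finset.range N), {ζ : Cn n | η ≤ ‖inner ℂ e ζ - l j‖} := by
        ext ζ; simp
      change IsClosed {ζ : Cn n | ∀ j ∈ Finset.range N, η ≤ ‖inner ℂ e ζ - l j‖}
      rw [hset]
      exact isClosed_iInter fun j => isClosed_iInter fun _ =>
        isClosed_le continuous_const (hcinn.sub continuous_const).norm
    have hclosed2 : IsClosed (closedBall (0 : Cn n) R ∩
        (fun ζ => ‖sqJac f (g ζ)‖) ⁻¹' Ici ν) :=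
      hHc.norm.preimage_isClosed_of_isClosed isClosed_closedBall isClosed_Ici
    refine (isCompact_closedBall (0 : Cn n) R).of_isClosed_subset
      ?_ (fun ζ h => h.1)
    have : A' = {ζ : Cn n | ‖inner ℂ e ζ‖ ≤ R1 ∧
      ‖ζ - inner ℂ e ζ • e‖ ≤ κ ∧ ∀ j ∈ Finset.range N, η ≤ ‖inner ℂ e ζ - l j‖} ∩
      (closedBall (0 : Cn n) R ∩ (fun ζ => ‖sqJac f (g ζ)‖) ⁻¹' Ici ν) := by
      ext ζ
      simp only [hA', Set.mem_ofPred_eq, Set.mem_inter_iff, Set.mem_preimage, Set.mem_Ici]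
      tauto
    rw [this]
    exact hclosed1.inter hclosed2
  have hgA : ContinuousOn g A' := fun ζ h => (hg ζ h.1).2.2.continuousWithinAt
  have hAc : IsCompact (g '' A') := hA'c.image_of_continuousOn hgA
  have hR0 : 0 ≤ R := by linarith
  have hAiff : ∀ x ∈ g '' A', x ∈ D ∧ f x ∈ A' := by
    rintro x ⟨ζ, hζ, rfl⟩
    have := hg ζ hζ.1
    exact ⟨this.1, by rw [this.2.1]; exact hζ⟩
  have hAmem : ∀ x ∈ D, f x ∈ A' → x ∈ g '' A' := fun x hx h => ⟨f x, h, hgf x hx⟩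
  have hzA : z ∈ g '' A' := by
    refine hAmem z hz ?_
    rw [hfz]
    refine ⟨by simpa using hR0, ⟨by simpa using hR1.le, by simpa using hκ.le, ?_⟩, ?_⟩
    · intro j hj; simpa using hlη j hj
    · have : g 0 = z := by rw [← hfz]; exact hgf z hz
      rw [this]; exact min_le_left _ _
  have hAprop : ∀ x ∈ g '' A', x ∈ D ∧ sqJac f x ≠ 0 ∧
      (∀ j ∈ Finset.range N, inner ℂ e (f x) ≠ l j) ∧
      (∀ j ∈ Finset.range N, (R1:ℂ) ^ 2 - (starRingEnd ℂ) (l j) * inner ℂ e (f x) ≠ 0) := by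
    intro x hx
    obtain ⟨hxD, hfx⟩ := hAiff x hx
    refine ⟨hxD, ?_, ?_, ?_⟩
    · have := hfx.2.2
      rw [hgf x hxD] at this
      exact norm_pos_iff.1 (hν0.trans_le this)
    · intro j hj h
      have := hfx.2.1.2.2 j hj
      rw [h, sub_self, norm_zero] at this
      linarith
    · intro j hj
      exact sqG_num_ne hR1 hfx.2.1.1 (hl j hj)
  have hqc : ContinuousOn q (g '' A') := by
    intro x hx
    obtain ⟨h1, h2, h3, h4⟩ := hAprop x hx
    exact (sqQ_cont hD hf h1 h2 hR1 hM0.ne' h3 h4).continuousWithinAt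
  have husc : UpperSemicontinuousOn (fun x => φ x + (q x : EReal)) (g '' A') := by
    refine UpperSemicontinuousOn.add' (hφ.1.mono fun x hx => (hAiff x hx).1) ?_ ?_
    · exact (continuous_coe_real_ereal.comp_continuousOn hqc).upperSemicontinuousOn
    · intro x _
      exact EReal.continuousAt_add (Or.inr (EReal.coe_ne_bot _)) (Or.inr (EReal.coe_ne_top _))
  obtain ⟨x, hxA, hxmax⟩ := husc.exists_isMaxOn ⟨z, hzA⟩ hAc
  obtain ⟨hxD, hfx⟩ := hAiff x hxA
  obtain ⟨-, hjx, hx1, hx2⟩ := hAprop x hxA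
  have hqz : m0 ≤ vz + q z := by
    have : q z = S0 + δ * Lz := by
      simp only [hq, sqQ, hfz, inner_zero_right, hS0, hLz]
      simp
    rw [this]; linarith
  have hxz : ((vz + q z : ℝ) : EReal) ≤ φ x + (q x : EReal) := by
    have := hxmax hzA
    simp only [Set.mem_ofPred_eq, hvz] at this
    rw [EReal.coe_add]; exact this
  obtain ⟨vx, hvx⟩ : ∃ v : ℝ, φ x = v := by
    have h0 := hφ0 x hxD
    refine ⟨(φ x).toReal, (EReal.coe_toReal ?_ ?_).symm⟩
    · intro h; rw [h] at h0; simp at h0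
    · intro h; rw [h] at hxz; simp at hxz
  rw [hvx, ← EReal.coe_add, EReal.coe_le_coe_iff] at hxz
  have hvx0 : vx ≤ 0 := by
    have := hφ0 x hxD
    rw [hvx] at this
    exact_mod_cast this
  have hval : m0 ≤ vx + q x := hqz.trans hxz
  have hfxR : ‖f x‖ ≤ R := by simpa using hfx.1
  -- bounds of q
  have b1 : k * ∑ j ∈ Finset.range N, sqG R1 (l j) (inner ℂ e (f x)) ≤ c :=
    hG _ hfx.2.1.1 hfx.2.1.2.2
  have hJle : ‖sqJac f x / (M:ℂ)‖ ≤ 1 := by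
    rw [norm_div, Complex.norm_real, Real.norm_eq_abs, abs_of_pos hM0, div_le_one hM0]
    exact hMb x hxD hfxR
  have b2 : δ * Real.log ‖sqJac f x / (M:ℂ)‖ ≤ 0 :=
    mul_nonpos_of_nonneg_of_nonpos hδ0.le (Real.log_nonpos (norm_nonneg _) hJle)
  have b3 : ε * ‖inner ℂ e (f x)‖ ^ 2 ≤ ε := by
    have h1 : ‖inner ℂ e (f x)‖ ≤ 1 := hfx.2.1.1.trans hR11
    have h2 : ‖inner ℂ e (f x)‖ ^ 2 ≤ 1 := pow_le_one₀ (norm_nonneg _) h1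
    nlinarith
  have b4 : 0 ≤ K * ‖f x - inner ℂ e (f x) • e‖ ^ 2 := by positivity
  have hqx : q x = k * ∑ j ∈ Finset.range N, sqG R1 (l j) (inner ℂ e (f x))
    + δ * Real.log ‖sqJac f x / (M:ℂ)‖
    + ε * ‖inner ℂ e (f x)‖ ^ 2 - K * ‖f x - inner ℂ e (f x) • e‖ ^ 2 := rfl
  have s1 : ‖inner ℂ e (f x)‖ < R1 := by
    refine lt_of_le_of_ne hfx.2.1.1 fun h => ?_
    have : ∑ j ∈ Finset.range N, sqG R1 (l j) (inner ℂ e (f x)) = 0 :=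
      Finset.sum_eq_zero fun j hj => sqG_bdry hR1 h (hx1 j hj)
    rw [this, mul_zero] at hqx
    linarith
  have s2 : ‖f x - inner ℂ e (f x) • e‖ < κ := by
    refine lt_of_le_of_ne hfx.2.1.2.1 fun h => ?_
    have : K * ‖f x - inner ℂ e (f x) • e‖ ^ 2 = c + m0 := by
      rw [h, hK]; field_simp
    linarith
  have s3 : ∀ j ∈ Finset.range N, η < ‖inner ℂ e (f x) - l j‖ := by
    intro j hj
    refine lt_of_le_of_ne (hfx.2.1.2.2 j hj) fun h => ?_
    have := hesc x hxD hfxR hfx.2.1.2.1 j hj h.symm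
    rw [hvx, EReal.coe_le_coe_iff] at this
    linarith
  have s4 : ν < ‖sqJac f x‖ := by
    have h4 := hfx.2.2
    rw [hgf x hxD] at h4
    refine lt_of_le_of_ne h4 fun h => ?_
    have : δ * Real.log ‖sqJac f x / (M:ℂ)‖ ≤ -(c + m0) := by
      rw [norm_div, ← h, Complex.norm_real, Real.norm_eq_abs, abs_of_pos hM0]
      have h5 : ν / M ≤ Real.exp (-(c + m0) / δ) := by
        rw [div_le_iff₀ hM0, mul_comm]; exact min_le_right _ _
      have h6 := Real.log_le_log (by positivity) h5
      rw [Real.log_exp, le_div_iff₀ hδ0] at h6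
      linarith
    linarith
  -- interior maximum
  have hcf : ContinuousAt f x := (hf.differentiableAt (hD.mem_nhds hxD)).continuousAt
  have hci : ContinuousAt (fun y => (inner ℂ e (f y) : ℂ)) x := hcinn.continuousAt.comp hcf
  have evA : ∀ᶠ y in 𝓝 x, y ∈ g '' A' := by
    have e0 := hD.eventually_mem hxD
    have e1 := hci.norm.eventually (gt_mem_nhds s1)
    have e2 := (hcf.sub (hci.smul (continuousAt_const (y := e)))).norm.eventually (gt_mem_nhds s2)
    have e3 : ∀ᶠ y in 𝓝 x, ∀ j ∈ Finset.range N, η < ‖inner ℂ e (f y) - l j‖ := by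
      rw [Filter.eventually_all_finset]
      intro j hj
      exact (hci.sub continuousAt_const).norm.eventually (lt_mem_nhds (s3 j hj))
    have e4 := (hcJ.continuousAt (hD.mem_nhds hxD)).norm.eventually (lt_mem_nhds s4)
    filter_upwards [e0, e1, e2, e3, e4] with y y0 y1 y2 y3 y4
    have y2' : ‖f y - inner ℂ e (f y) • e‖ < κ := y2
    refine hAmem y y0 ⟨?_, ⟨y1.le, y2'.le, fun j hj => (y3 j hj).le⟩, ?_⟩
    · rw [mem_closedBall_zero_iff]
      calc ‖f y‖ = ‖(f y - inner ℂ e (f y) • e) + inner ℂ e (f y) • e‖ := by rw [sub_add_cancel]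
        _ ≤ ‖f y - inner ℂ e (f y) • e‖ + ‖inner ℂ e (f y) • e‖ := norm_add_le _ _
        _ ≤ κ + R1 := by
          rw [norm_smul, he, mul_one]; exact add_le_add y2'.le y1.le
        _ ≤ R := by linarith
    · rw [hgf y y0]; exact y4.le
  have hfin := sq_no_max hD hf hφ hxD hjx he hR1 (k := k) (δ := δ) hε0 hK0 hM0.ne' hx1 hx2
    (m := vx + q x) (by
      filter_upwards [evA] with y hy
      apply sq_ereal_aux
      have := hxmax hy
      simp only [Set.mem_ofPred_eq, hvx] at this
      rw [EReal.coe_add]; exact this)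
  change φ x < ((vx + q x - q x : ℝ) : EReal) at hfin
  rw [hvx, EReal.coe_lt_coe_iff] at hfin
  linarith

lemma sq_escape {f g : Cn n → Cn n} {D : Set (Cn n)} (hD : IsOpen D) (hf : DifferentiableOn ℂ f D)
    {R0 : ℝ} (hg : ∀ ζ ∈ ball (0 : Cn n) R0, g ζ ∈ D ∧ f (g ζ) = ζ ∧ ContinuousAt g ζ)
    (hgd : ∀ x ∈ D, sqJac f x ≠ 0 → DifferentiableAt ℂ g (f x)) {e p : Cn n} (he : ‖e‖ = 1)
    (h0 : sqJac f (g 0) ≠ 0) {ρ t : ℝ} (hρ : 0 < ρ) {w1 : ℂ} (ht : 0 < t) (hw1 : ‖w1‖ ≤ t)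
    (htR : t < R0) (hx1 : ρ < ‖g (w1 • e) - p‖) :
    ∃ w : ℂ, ‖w‖ = t ∧ ρ < ‖g (w • e) - p‖ := by
  by_contra hcon
  push Not at hcon
  have hmem : ∀ w ∈ ball (0:ℂ) R0, w • e ∈ ball (0 : Cn n) R0 := by
    intro w hw
    rw [mem_ball_zero_iff] at *
    rwa [norm_smul, he, mul_one]
  have hlin : Differentiable ℂ (fun w : ℂ => w • e) := differentiable_id.smul_const e
  have hgc : ContinuousOn (fun w : ℂ => g (w • e)) (ball 0 R0) := fun w hw =>
    (ContinuousAt.comp (f := fun w : ℂ => w • e) (hg _ (hmem w hw)).2.2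
      hlin.continuous.continuousAt).continuousWithinAt
  have hgd' : ∀ w ∈ ball (0:ℂ) R0, sqJac f (g (w • e)) ≠ 0 →
      DifferentiableAt ℂ (fun w : ℂ => g (w • e)) w := by
    intro w hw hj
    obtain ⟨h1, h2, _⟩ := hg _ (hmem w hw)
    have := hgd _ h1 hj
    rw [h2] at this
    exact DifferentiableAt.comp w this (hlin w)
  have := sq_max (u := fun w : ℂ => g (w • e) - p) (H := fun w : ℂ => sqJac f (g (w • e)))
    ht htR hρ
    ((sqJac_diff hD hf).continuousOn.comp hgc fun w hw => (hg _ (hmem w hw)).1)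
    (hgc.sub continuousOn_const)
    (fun w hw hj => DifferentiableAt.comp (f := fun w : ℂ => g (w • e)) (g := sqJac f) w
      ((sqJac_diff hD hf).differentiableAt (hD.mem_nhds (hg _ (hmem w hw)).1)) (hgd' w hw hj))
    (fun w hw hj => (hgd' w hw hj).sub_const p) (by simpa using h0) hcon w1 hw1
  exact absurd this (not_le.2 hx1)

/-- The constant in the localization lemma. -/
def sqDelta (c r R : ℝ) : ℝ :=
  min c (c / (Real.log 2 + 4 / (R - r) + 1) * Real.log (R / ((r + R) / 2)))

lemma sqDelta_pos {c r R : ℝ} (hc : 0 < c) (hr : 0 < r) (hrR : r < R) : 0 < sqDelta c r R := by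
  have h1 : 0 < R - r := by linarith
  have h2 : 0 ≤ Real.log 2 := Real.log_nonneg (by norm_num)
  refine lt_min hc (mul_pos (by positivity) (Real.log_pos ?_))
  rw [lt_div_iff₀ (by linarith)]; linarith

lemma sq_local {f : Cn n → Cn n} {D : Set (Cn n)} (hD : IsOpen D) (hf : DifferentiableOn ℂ f D)
    (hinj : InjOn f D) (hdense : ∀ x ∈ D, ∃ᶠ y in 𝓝 x, sqJac f y ≠ 0)
    {φ : Cn n → EReal} (hφ : PSHOn φ D) (hφ0 : ∀ x ∈ D, φ x ≤ 0) {p : Cn n} {c ρ r R1 R0 : ℝ}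
    (hc : 0 < c) (hρ : 0 < ρ) (hφc : ∀ x ∈ D, ρ ≤ ‖x - p‖ → φ x ≤ ((-c : ℝ) : EReal))
    (hr : 0 < r) (hrR1 : r < R1) (hR1R0 : R1 < R0) (hR1 : R1 ≤ 1)
    (hball : ball (0 : Cn n) R0 ⊆ f '' D) {z : Cn n} (hz : z ∈ D) (hfz : f z = 0)
    (hjz : sqJac f z ≠ 0) (hφz : ((-sqDelta c r R1 : ℝ) : EReal) < φ z) :
    ∀ x ∈ D, ‖f x‖ < r → ‖x - p‖ ≤ ρ := by
  intro x1 hx1D hx1r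
  by_contra hbad
  push Not at hbad
  obtain ⟨g, hgf, hgc, hgd⟩ := sq_inverse hD hf hinj hdense
  have hg : ∀ ζ ∈ ball (0 : Cn n) R0, g ζ ∈ D ∧ f (g ζ) = ζ ∧ ContinuousAt g ζ := by
    intro ζ hζ
    obtain ⟨x, hx, rfl⟩ := hball hζ
    rw [hgf x hx]
    exact ⟨hx, rfl, hgc x hx⟩
  have hg0 : g 0 = z := by rw [← hfz]; exact hgf z hz
  set w1 : ℝ := ‖f x1‖ with hw1
  have hw1pos : 0 < w1 := by
    rw [hw1, norm_pos_iff]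
    intro h
    have : x1 = z := hinj hx1D hz (by rw [h, hfz])
    have h2 := hφc x1 hx1D hbad.le
    rw [this] at h2
    have h3 := hφz.trans_le h2
    rw [EReal.coe_lt_coe_iff] at h3
    have := min_le_left c (c / (Real.log 2 + 4 / (R1 - r) + 1) * Real.log (R1 / ((r + R1) / 2)))
    unfold sqDelta at h3
    linarith
  set e : Cn n := ((w1:ℂ))⁻¹ • f x1 with he_def
  have hw1C : (w1:ℂ) ≠ 0 := by exact_mod_cast hw1pos.ne'
  have he : ‖e‖ = 1 := by
    rw [he_def, norm_smul, norm_inv, Complex.norm_real, Real.norm_eq_abs, abs_of_pos hw1pos]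
    exact inv_mul_cancel₀ hw1pos.ne'
  have hwe : (w1:ℂ) • e = f x1 := by rw [he_def, smul_inv_smul₀ hw1C]
  have hgx1 : g ((w1:ℂ) • e) = x1 := by rw [hwe]; exact hgf x1 hx1D
  set ρ2 := (ρ + ‖x1 - p‖) / 2 with hρ2
  have hρ2a : ρ < ρ2 := by linarith
  have hρ2b : ρ2 < ‖x1 - p‖ := by linarith
  set R := (R1 + R0) / 2 with hR
  have hcl : closedBall (0 : Cn n) R ⊆ ball 0 R0 := closedBall_subset_ball (by linarith)
  have huc : UniformContinuousOn g (closedBall 0 R) :=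
    (isCompact_closedBall (0 : Cn n) R).uniformContinuousOn_of_continuous
      fun ζ hζ => (hg ζ (hcl hζ)).2.2.continuousWithinAt
  obtain ⟨η0, hη0, hηu⟩ := Metric.uniformContinuousOn_iff.1 huc (ρ2 - ρ) (by linarith)
  set η := min (η0 / 3) r with hη
  have hηpos : 0 < η := lt_min (by positivity) hr
  have hη3 : η ≤ η0 / 3 := min_le_left _ _
  have hηr : η ≤ r := min_le_right _ _
  have hη1 : η ≤ 1 := by linarith
  set κ := min η (R - R1) with hκ
  have hκpos : 0 < κ := lt_min hηpos (by linarith)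
  have hκη : κ ≤ η := min_le_left _ _
  have hκR : κ ≤ R - R1 := min_le_right _ _
  obtain ⟨N', hN'⟩ := exists_nat_ge (2 * Real.log (1 / η))
  set N := N' + 1 with hNdef
  have hN0 : 0 < N := Nat.succ_pos _
  have hNr : (0:ℝ) < N := by exact_mod_cast hN0
  have hN : 2 * Real.log (1 / η) ≤ N := hN'.trans (by exact_mod_cast Nat.le_succ _)
  have hRr : 0 < R1 - r := by linarith
  have htj : ∀ j ∈ Finset.range N, r ≤ r + (R1 - r) / 2 / N * j ∧
      r + (R1 - r) / 2 / N * j ≤ (r + R1) / 2 := by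
    intro j hj
    have h1 : (j:ℝ) ≤ N := by exact_mod_cast (Finset.mem_range.1 hj).le
    have h2 : (R1 - r) / 2 / N * j ≤ (R1 - r) / 2 / N * N := by gcongr
    have h3 : (R1 - r) / 2 / N * N = (R1 - r) / 2 := by field_simp
    have h4 : 0 ≤ (R1 - r) / 2 / N * j := by positivity
    constructor <;> linarith
  have hex : ∀ j : ℕ, ∃ w : ℂ, j ∈ Finset.range N →
      ‖w‖ = r + (R1 - r) / 2 / N * j ∧ ρ2 < ‖g (w • e) - p‖ := by
    intro j
    by_cases hj : j ∈ Finset.range N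
    · obtain ⟨h1, h2⟩ := htj j hj
      obtain ⟨w, hw⟩ := sq_escape hD hf hg hgd (p := p) he (by rw [hg0]; exact hjz)
        (ρ := ρ2) (t := r + (R1 - r) / 2 / N * j) (w1 := (w1:ℂ)) (by linarith) (by linarith)
        (by rw [Complex.norm_real, Real.norm_eq_abs, abs_of_pos hw1pos]; linarith)
        (by linarith) (by rw [hgx1]; exact hρ2b)
      exact ⟨w, fun _ => hw⟩
    · exact ⟨0, fun h => absurd h hj⟩
  choose l hl using hex
  have hlog2 : 0 ≤ Real.log 2 := Real.log_nonneg (by norm_num)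
  set K' := Real.log 2 + 4 / (R1 - r) + 1 with hK'
  have hK'0 : 0 < K' := by positivity
  have hlR : ∀ j ∈ Finset.range N, ‖l j‖ < R1 := by
    intro j hj; rw [(hl j hj).1]; linarith [(htj j hj).2]
  refine sq_core hD hf hφ hφ0 (R := R) (R1 := R1) (κ := κ) (η := η) (c := c)
    (k := c / K' * (1 / N)) (g := g) (fun ζ hζ => hg ζ (hcl hζ)) hgf he (by linarith) hR1 hκpos
    (by linarith) hηpos hc (l := l) (N := N) hlR ?_ ?_ ?_ hz hfz hjz ?_
  · intro j hj; rw [(hl j hj).1]; linarith [(htj j hj).1]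
  · intro w hw hwl
    have := sq_green_bound hr hrR1 hR1 hηpos hη1 hN0 hN l (fun j hj => (hl j hj).1) w hw hwl
    rw [mul_assoc]
    calc c / K' * (1 / N * ∑ j ∈ Finset.range N, sqG R1 (l j) w) ≤ c / K' * K' := by gcongr
      _ = c := by field_simp
  · intro x hx hfxR hperp j hj hdist
    refine hφc x hx ?_
    have hljmem : l j • e ∈ closedBall (0 : Cn n) R := by
      rw [mem_closedBall_zero_iff, norm_smul, he, mul_one]
      linarith [hlR j hj]
    have hdst : dist (f x) (l j • e) < η0 := by
      rw [dist_eq_norm]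
      calc ‖f x - l j • e‖ = ‖(f x - inner ℂ e (f x) • e) + (inner ℂ e (f x) - l j) • e‖ := by
            congr 1; rw [sub_smul]; abel
        _ ≤ ‖f x - inner ℂ e (f x) • e‖ + ‖(inner ℂ e (f x) - l j) • e‖ := norm_add_le _ _
        _ ≤ κ + η := by rw [norm_smul, he, mul_one, hdist]; exact add_le_add hperp le_rfl
        _ < η0 := by linarith
    have h1 := hηu (f x) (by simpa using hfxR) (l j • e) hljmem hdst
    rw [hgf x hx, dist_eq_norm] at h1
    have h2 := (hl j hj).2
    have h3 : ‖g (l j • e) - p‖ ≤ ‖x - g (l j • e)‖ + ‖x - p‖ := by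
      rw [norm_sub_rev x]
      calc ‖g (l j • e) - p‖ = ‖(g (l j • e) - x) + (x - p)‖ := by congr 1; abel
        _ ≤ _ := norm_add_le _ _
    linarith
  · refine lt_of_le_of_lt ?_ hφz
    rw [EReal.coe_le_coe_iff]
    apply neg_le_neg
    refine (min_le_right _ _).trans ?_
    rw [mul_assoc]
    refine mul_le_mul_of_nonneg_left ?_ (by positivity)
    rw [one_div, ← div_eq_inv_mul, le_div_iff₀ hNr]
    have : ∀ j ∈ Finset.range N, Real.log (R1 / ((r + R1) / 2)) ≤ sqG R1 (l j) 0 := by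
      intro j hj
      obtain ⟨h1, h2⟩ := htj j hj
      have hpos : 0 < ‖l j‖ := by rw [(hl j hj).1]; linarith
      rw [sqG_zero (by linarith) (norm_pos_iff.1 hpos)]
      have hR1p : 0 < R1 := by linarith
      apply Real.log_le_log (by positivity)
      gcongr
      rw [(hl j hj).1]; exact h2
    have h := Finset.card_nsmul_le_sum _ _ _ this
    rw [Finset.card_range, nsmul_eq_mul] at h
    linarith

lemma sq_bdd [Nonempty (Fin n)] (D : Set (Cn n)) (z : Cn n) :
    ∀ r ∈ {r : ℝ | 0 < r ∧ ∃ f : Cn n → Cn n, DifferentiableOn ℂ f D ∧ InjOn f D ∧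
      MapsTo f D (ball (0 : Cn n) 1) ∧ f z = 0 ∧ ball (0 : Cn n) r ⊆ f '' D}, r ≤ 1 := by
  rintro r ⟨hr, f, -, -, hm, -, hb⟩
  by_contra hlt
  push Not at hlt
  obtain ⟨e, he⟩ := exists_norm_eq (Cn n) (zero_le_one (α := ℝ))
  obtain ⟨x, hx, hfx⟩ := hb (show e ∈ ball (0 : Cn n) r by rw [mem_ball_zero_iff, he]; exact hlt)
  have := hm hx
  rw [hfx, mem_ball_zero_iff, he] at this
  exact lt_irrefl _ this

lemma sq_le_one [Nonempty (Fin n)] (D : Set (Cn n)) (z : Cn n) : squeezing D z ≤ 1 :=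
  Real.sSup_le (sq_bdd D z) zero_le_one

lemma sqJac_sub_const (f : Cn n → Cn n) (a x : Cn n) :
    sqJac (fun y => f y - a) x = sqJac f x := by
  unfold sqJac
  rw [fderiv_sub_const]

lemma sq_main (D : Set (Cn n)) (hD : IsOpen D)
    (hDconn : IsConnected D) (p : Cn n) (hp : p ∈ frontier D)
    (hφ : ∃ φ : Cn n → EReal, IsPshPeakFn D p φ)
    (U : Set (Cn n)) (hU : IsOpen U) (hpU : p ∈ U)
    (hlim : Tendsto (squeezing D) (𝓝[D] p) (𝓝 1)) :
    Tendsto (squeezing (D ∩ U)) (𝓝[D] p) (𝓝 1) := by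
  have hpD : p ∉ D := by
    have := hp.2
    rwa [hD.interior_eq] at this
  have hne : Nonempty (Fin n) := by
    by_contra hemp
    rw [not_nonempty_iff] at hemp
    obtain ⟨x, hx⟩ := hDconn.nonempty
    have : x = p := Subsingleton.elim _ _
    exact hpD (this ▸ hx)
  obtain ⟨φ, hpsh, hφlim, hφneg⟩ := hφ
  have hφ0 : ∀ x ∈ D, φ x ≤ 0 := by
    intro x hx
    have hxp : x ≠ p := fun h => hpD (h ▸ hx)
    obtain ⟨c, hc, hcx⟩ := hφneg {x}ᶜ (isOpen_compl_singleton.mem_nhds (Ne.symm hxp))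
    have := hcx x ⟨hx, by simp⟩
    refine this.trans ?_
    exact_mod_cast hc.le
  rw [tendsto_order]
  constructor
  swap
  · intro a ha
    exact Eventually.of_forall fun z => (sq_le_one _ _).trans_lt ha
  intro a ha
  set ρ0 : ℝ := max ((a + 1) / 2) (1 / 2) with hρ0
  have hρ0a : a < ρ0 := lt_of_lt_of_le (by linarith) (le_max_left _ _)
  have hρ0p : 0 < ρ0 := lt_of_lt_of_le (by norm_num) (le_max_right _ _)
  have hρ01 : ρ0 < 1 := max_lt (by linarith) (by norm_num)
  set s := (1 - ρ0) / 4 with hs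
  have hs0 : 0 < s := by linarith
  set r := ρ0 + s with hr
  set R1 := ρ0 + 2 * s with hR1
  set R0 := ρ0 + 3 * s with hR0
  obtain ⟨ρ, hρ, hρU⟩ := Metric.nhds_basis_closedBall.mem_iff.1 (hU.mem_nhds hpU)
  obtain ⟨c', hc', hφc'⟩ := hφneg (ball p ρ) (ball_mem_nhds p hρ)
  set c := -c' with hc
  have hcpos : 0 < c := by linarith
  have hφc : ∀ x ∈ D, ρ ≤ ‖x - p‖ → φ x ≤ ((-c : ℝ) : EReal) := by
    intro x hx hxp
    have := hφc' x ⟨hx, by rw [mem_ball, dist_eq_norm]; exact not_lt.2 hxp⟩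
    rwa [hc, neg_neg]
  have hδ := sqDelta_pos (c := c) (r := r) (R := R1) hcpos (by linarith) (by linarith)
  have hev1 : ∀ᶠ z in 𝓝[D] p, ((-sqDelta c r R1 : ℝ) : EReal) < φ z := by
    refine hφlim.eventually (lt_mem_nhds ?_)
    have : -sqDelta c r R1 < 0 := by linarith
    exact_mod_cast this
  obtain ⟨V, hV, hpV, hVD⟩ := mem_nhdsWithin.1 hev1
  have hev2 : ∀ᶠ z in 𝓝[D] p, R0 < squeezing D z := hlim.eventually (lt_mem_nhds (by linarith))
  have hev3 : ∀ᶠ z in 𝓝[D] p, z ∈ V := mem_nhdsWithin_of_mem_nhds (hV.mem_nhds hpV)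
  filter_upwards [hev2, hev3, self_mem_nhdsWithin] with z hz2 hzV hzD
  refine hρ0a.trans_le ?_
  have hsetne : {r : ℝ | 0 < r ∧ ∃ f : Cn n → Cn n, DifferentiableOn ℂ f D ∧ InjOn f D ∧
      MapsTo f D (ball (0 : Cn n) 1) ∧ f z = 0 ∧ ball (0 : Cn n) r ⊆ f '' D}.Nonempty := by
    by_contra hemp
    rw [Set.not_nonempty_iff_eq_empty] at hemp
    unfold squeezing at hz2
    rw [hemp, Real.sSup_empty] at hz2
    linarith
  obtain ⟨r2, ⟨hr2, f, hf, hinj, hmaps, hfz, hball⟩, hr2R⟩ := exists_lt_of_lt_csSup hsetne hz2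
  refine le_csSup ⟨1, sq_bdd _ _⟩ ⟨hρ0p, f, hf.mono inter_subset_left,
    hinj.mono inter_subset_left, hmaps.mono_left inter_subset_left, hfz, ?_⟩
  have hdense : ∀ x ∈ D, ∃ᶠ y in 𝓝 x, sqJac f y ≠ 0 := fun x hx =>
    sq_dense hD hDconn.isPreconnected hf hr2 hball hx
  -- choose a nearby regular point
  have hcf : ContinuousAt f z := (hf.differentiableAt (hD.mem_nhds hzD)).continuousAt
  have hsm : ∀ᶠ y in 𝓝 z, ‖f y‖ < min (r2 - R0) s := by
    refine hcf.norm.eventually (gt_mem_nhds ?_)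
    simp only [hfz, norm_zero]
    exact lt_min (by linarith) hs0
  obtain ⟨y, hyj, hysm, hyV, hyD⟩ := ((hdense z hzD).and_eventually
    (hsm.and ((hV.eventually_mem hzV).and (hD.eventually_mem hzD)))).exists
  have hy1 : ‖f y‖ < r2 - R0 := hysm.trans_le (min_le_left _ _)
  have hy2 : ‖f y‖ < s := hysm.trans_le (min_le_right _ _)
  have hloc := sq_local (f := fun x => f x - f y) hD (hf.sub_const _)
    (fun a ha b hb hab => hinj ha hb (sub_left_injective hab))
    (fun x hx => by simpa only [sqJac_sub_const] using hdense x hx) hpsh hφ0 (p := p)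
    (c := c) (ρ := ρ) (r := r) (R1 := R1) (R0 := R0) hcpos hρ hφc (by linarith) (by linarith)
    (by linarith) (by linarith) (by
      intro ζ hζ
      rw [mem_ball_zero_iff] at hζ
      obtain ⟨x, hx, hfx⟩ := hball (show ζ + f y ∈ ball (0 : Cn n) r2 by
        rw [mem_ball_zero_iff]
        refine (norm_add_le _ _).trans_lt ?_
        linarith)
      exact ⟨x, hx, by simp [hfx]⟩) hyD (sub_self _) (by rw [sqJac_sub_const]; exact hyj)
      (hVD ⟨hyV, hyD⟩)
  intro ζ hζ
  rw [mem_ball_zero_iff] at hζ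
  obtain ⟨x, hx, hfx⟩ := hball (show ζ ∈ ball (0 : Cn n) r2 by
    rw [mem_ball_zero_iff]; linarith)
  refine ⟨x, ⟨hx, hρU ?_⟩, hfx⟩
  rw [mem_closedBall, dist_eq_norm]
  refine hloc x hx ?_
  rw [hfx]
  refine (norm_sub_le _ _).trans_lt ?_
  linarith

end SQ

/-- Near a psh peak boundary point, if the squeezing function of `D`
tends to `1`, then so does the squeezing function of `D ∩ U`. -/
theorem squeezing_tendsto_one_localization {n : ℕ} (D : Set (Cn n)) (hD : IsOpen D)
    (hDconn : IsConnected D) (p : Cn n) (hp : p ∈ frontier D)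
    (hφ : ∃ φ : Cn n → EReal, IsPshPeakFn D p φ)
    (U : Set (Cn n)) (hU : IsOpen U) (hUb : Bornology.IsBounded U) (hpU : p ∈ U)
    (hlim : Tendsto (squeezing D) (𝓝[D] p) (𝓝 1)) :
    Tendsto (squeezing (D ∩ U)) (𝓝[D] p) (𝓝 1) := by
  exact sq_main D hD hDconn p hp hφ U hU hpU hlim
end
end

section
/- Let D be a bounded domain in ℂⁿ and let φ be a psh peak function for a point p ∈ ∂D. Then for any bounded open neighborhood U of p and ANY open neighborhood V of p with compact closure contained in U, there exists a constant m > 0 such that K_D(z;X) ≥ e^{mφ(z)} K_{D∩U}(z;X) for all z ∈ D ∩ V and all X ∈ ℂⁿ. -/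
open Set Metric Filter Topology
open scoped Classical

noncomputable section

/-- The real exponential extended to `EReal`, with `exp(-∞) = 0` (the value at `⊤`,
irrelevant here, is also set to `0`). -/
def erexp (x : EReal) : ℝ := if x = ⊥ then 0 else if x = ⊤ then 0 else Real.exp x.toReal

/-- The sub-mean value property for real-valued functions, on discs in complex lines. -/
def SubMean {n : ℕ} (v : Cn n → ℝ) (D : Set (Cn n)) : Prop :=
  ∀ a ∈ D, ∀ b : Cn n, ∀ r : ℝ, 0 < r →
    (∀ t : ℂ, ‖t‖ ≤ r → a + t • b ∈ D) →
    ∀ g : ℝ → ℝ, Continuous g →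
      (∀ θ : ℝ, v (a + ((r : ℂ) * Complex.exp (θ * Complex.I)) • b) ≤ g θ) →
      v a ≤ (1 / (2 * Real.pi)) * ∫ θ in (0:ℝ)..(2 * Real.pi), g θ

lemma SubMean.holo {n : ℕ} {v : Cn n → ℝ} {D : Set (Cn n)} (h : SubMean v D)
    {a b : Cn n} (ha : a ∈ D) {t T : ℝ} (ht : 0 < t) (htT : t < T)
    (hmem : ∀ τ : ℂ, ‖τ‖ ≤ t → a + τ • b ∈ D) {F : ℂ → ℂ} (A : ℝ)
    (hF : DifferentiableOn ℂ F (ball 0 T))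
    (hle : ∀ τ : ℂ, ‖τ‖ = t → v (a + τ • b) ≤ A + (F τ).re) : v a ≤ A + (F 0).re := by
  have hsub : closedBall (0:ℂ) t ⊆ ball 0 T := closedBall_subset_ball htT
  have hG : DiffContOnCl ℂ (fun τ => (A : ℂ) + F τ) (ball 0 |t|) := by
    rw [abs_of_pos ht]
    apply DifferentiableOn.diffContOnCl
    rw [closure_ball _ ht.ne']
    exact (differentiableOn_const _).add (hF.mono hsub)
  have hc : Continuous (fun θ : ℝ => (A : ℂ) + F (circleMap 0 t θ)) := by
    refine continuous_const.add ?_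
    refine hF.continuousOn.comp_continuous (continuous_circleMap 0 t) (fun θ => hsub ?_)
    exact circleMap_mem_closedBall _ ht.le _
  have hav := hG.circleAverage
  rw [Real.circleAverage_def] at hav
  have h2 := h a ha b t ht hmem (fun θ => ((A : ℂ) + F (circleMap 0 t θ)).re)
    (Complex.continuous_re.comp hc) (fun θ => by
      have := hle (circleMap 0 t θ) (by simp [abs_of_pos ht])
      simpa [circleMap] using this)
  have h3 : ∫ θ in (0:ℝ)..(2 * Real.pi), ((A : ℂ) + F (circleMap 0 t θ)).re
      = (∫ θ in (0:ℝ)..(2 * Real.pi), ((A : ℂ) + F (circleMap 0 t θ))).re := by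
    have := Complex.reCLM.intervalIntegral_comp_comm (hc.intervalIntegrable (μ := MeasureTheory.volume) 0 (2 * Real.pi))
    simpa using this
  rw [h3] at h2
  have h4 := congrArg Complex.re hav
  rw [Complex.smul_re] at h4
  simp only [smul_eq_mul] at h4
  rw [one_div, h4] at h2
  simpa using h2

lemma core {n : ℕ} {D : Set (Cn n)} (hD : IsOpen D) {v : Cn n → ℝ}
    (hv : UpperSemicontinuousOn v D) (hsub : SubMean v D) (hv0 : ∀ x ∈ D, v x ≤ 0)
    {c κ δ : ℝ} (hκ : 0 < κ) (hδ : 0 < δ) (hδ1 : δ < 1)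
    (hκδ : κ * Real.log δ = -c) {g : ℂ → Cn n} (hg : DifferentiableOn ℂ g (ball 0 1))
    (hgD : MapsTo g (ball 0 1) D) {ρ : ℝ} (hρ : 0 < ρ)
    (hin : ∀ ζ : ℂ, ‖ζ‖ ≤ δ → ∀ w : Cn n, ‖w‖ ≤ ρ → g ζ + w ∈ D → v (g ζ + w) ≤ -c)
    {ζ₁ : ℂ} (h1 : δ ≤ ‖ζ₁‖) (h2 : ‖ζ₁‖ < 1) : v (g ζ₁) ≤ κ * Real.log ‖ζ₁‖ := by
  by_contra hcon
  push Not at hcon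
  obtain ⟨gap, hgap⟩ : ∃ gap, gap = v (g ζ₁) - κ * Real.log ‖ζ₁‖ := ⟨_, rfl⟩
  have hgap0 : 0 < gap := by linarith
  -- choose the outer radius
  obtain ⟨s, hs1, hsr, hss⟩ : ∃ s : ℝ, s < 1 ∧ ‖ζ₁‖ < s ∧ -(κ * Real.log s) < gap / 4 := by
    have hct : ContinuousAt (fun s : ℝ => -(κ * Real.log s)) 1 :=
      ((Real.continuousAt_log one_ne_zero).const_mul κ).neg
    have e1 : ∀ᶠ s in 𝓝[<] (1:ℝ), -(κ * Real.log s) < gap / 4 := by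
      apply (hct.eventually_lt continuousAt_const ?_).filter_mono nhdsWithin_le_nhds
      simp; linarith
    have e2 : ∀ᶠ s in 𝓝[<] (1:ℝ), ‖ζ₁‖ < s := (lt_mem_nhds h2).filter_mono nhdsWithin_le_nhds
    have e3 : ∀ᶠ s in 𝓝[<] (1:ℝ), s < 1 := self_mem_nhdsWithin
    obtain ⟨s, a1, a2, a3⟩ := (e1.and (e2.and e3)).exists
    exact ⟨s, a3, a2, a1⟩
  have hs0 : 0 < s := hδ.trans_le (h1.trans hsr.le)
  have hcs : closedBall (0:ℂ) s ⊆ ball 0 1 := closedBall_subset_ball hs1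
  -- thickening
  obtain ⟨ρt, hrpos, hrle, hrmem⟩ : ∃ ρt : ℝ, 0 < ρt ∧ ρt ≤ ρ ∧
      ∀ ζ : ℂ, ‖ζ‖ ≤ s → ∀ w : Cn n, ‖w‖ ≤ ρt → g ζ + w ∈ D := by
    have hK : IsCompact (g '' closedBall 0 s) :=
      (isCompact_closedBall _ _).image_of_continuousOn (hg.continuousOn.mono hcs)
    have hKD : g '' closedBall 0 s ⊆ D := by
      rintro _ ⟨ζ, hζ, rfl⟩
      exact hgD (hcs hζ)
    obtain ⟨r, hr, hrD⟩ := hK.exists_cthickening_subset_open hD hKD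
    refine ⟨min r ρ, lt_min hr hρ, min_le_right _ _, fun ζ hζ w hw => hrD ?_⟩
    refine mem_cthickening_of_dist_le _ (g ζ) _ _ ⟨ζ, by simpa using hζ, rfl⟩ ?_
    simpa using hw.trans (min_le_left _ _)
  obtain ⟨η, hη0, hηdef⟩ : ∃ η : ℝ, 0 < η ∧ η = gap / 2 := ⟨gap / 2, by linarith, rfl⟩
  have hc0 : 0 < c := by
    have : Real.log δ < 0 := Real.log_neg hδ hδ1
    nlinarith
  obtain ⟨B, hB0, hB⟩ : ∃ B : ℝ, 0 < B ∧ B * ρt ^ 2 > c + η := by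
    refine ⟨(c + η + 1) / ρt ^ 2, by positivity, ?_⟩
    rw [div_mul_cancel₀ _ (by positivity)]; linarith
  -- the annulus and the maximization
  let A : Set ℂ := {ζ | δ ≤ ‖ζ‖ ∧ ‖ζ‖ ≤ s}
  have hAc : IsCompact A := by
    refine (isCompact_closedBall (0:ℂ) s).of_isClosed_subset ?_ (fun ζ hζ => by simpa using hζ.2)
    exact (isClosed_le continuous_const continuous_norm).inter
      (isClosed_le continuous_norm continuous_const)
  let S : Set (Cn n × ℂ) := closedBall (0 : Cn n) ρt ×ˢ A
  have hSc : IsCompact S := (isCompact_closedBall _ _).prod hAc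
  let Ψ : Cn n × ℂ → ℝ := fun q => v (g q.2 + q.1) +
    (-(κ * Real.log ‖q.2‖) + η * ‖q.2‖ ^ 2 - B * ‖q.1‖ ^ 2)
  have hgS : ContinuousOn (fun q : Cn n × ℂ => g q.2) S := by
    refine hg.continuousOn.comp continuousOn_snd ?_
    rintro ⟨w, ζ⟩ ⟨-, hζ⟩
    exact hcs (by simpa using hζ.2)
  have hΨ : UpperSemicontinuousOn Ψ S := by
    refine UpperSemicontinuousOn.add ?_ (ContinuousOn.upperSemicontinuousOn ?_)
    · refine UpperSemicontinuousOn.comp hv (hgS.add continuousOn_fst) ?_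
      rintro ⟨w, ζ⟩ ⟨hw, hζ⟩
      exact hrmem ζ hζ.2 w (by simpa using hw)
    · have : ContinuousOn (fun q : Cn n × ℂ => Real.log ‖q.2‖) S := by
        refine ContinuousOn.log (by fun_prop) ?_
        rintro ⟨w, ζ⟩ ⟨-, hζ⟩
        exact (hδ.trans_le hζ.1).ne'
      fun_prop
  have hz1S : ((0 : Cn n), ζ₁) ∈ S := ⟨by simp [hrpos.le], h1, hsr.le⟩
  obtain ⟨⟨w, ζ₀⟩, ⟨hwS, hζA⟩, hmax⟩ := hΨ.exists_isMaxOn ⟨_, hz1S⟩ hSc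
  obtain ⟨hζδ, hζs⟩ := hζA
  have hw' : ‖w‖ ≤ ρt := by simpa using hwS
  simp only at hζδ hζs
  have hM : gap ≤ Ψ (w, ζ₀) := by
    have : Ψ (0, ζ₁) ≤ Ψ (w, ζ₀) := hmax hz1S
    refine le_trans ?_ this
    simp only [Ψ, add_zero, norm_zero]
    have : 0 ≤ η * ‖ζ₁‖ ^ 2 := by positivity
    nlinarith
  have hMdef : Ψ (w, ζ₀) = v (g ζ₀ + w) +
    (-(κ * Real.log ‖ζ₀‖) + η * ‖ζ₀‖ ^ 2 - B * ‖w‖ ^ 2) := rfl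
  have hxD : g ζ₀ + w ∈ D := hrmem ζ₀ hζs w hw'
  have hvx : v (g ζ₀ + w) ≤ 0 := hv0 _ hxD
  have hsq1 : η * ‖ζ₀‖ ^ 2 ≤ η := by
    have : ‖ζ₀‖ ^ 2 ≤ 1 := pow_le_one₀ (norm_nonneg _) (by linarith)
    nlinarith
  have hBw : 0 ≤ B * ‖w‖ ^ 2 := by positivity
  have hζ0 : 0 < ‖ζ₀‖ := hδ.trans_le hζδ
  have hlogδ : -(κ * Real.log ‖ζ₀‖) ≤ c := by
    have := Real.log_le_log hδ hζδ
    nlinarith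
  -- interior position
  have hwlt : ‖w‖ < ρt := by
    rcases hw'.lt_or_eq with h | h
    · exact h
    · exfalso; rw [h] at hMdef; linarith
  have hζslt : ‖ζ₀‖ < s := by
    rcases hζs.lt_or_eq with h | h
    · exact h
    · exfalso
      rw [← h] at hss
      linarith
  have hζδlt : δ < ‖ζ₀‖ := by
    rcases hζδ.lt_or_eq with h | h
    · exact h
    · exfalso
      have := hin ζ₀ h.ge w (hw'.trans hrle) hxD
      linarith
  -- the perturbation
  have hζ₀ball : ζ₀ ∈ ball (0:ℂ) 1 := hcs (by simpa using hζs)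
  have hgd : HasDerivAt g (deriv g ζ₀) ζ₀ :=
    (hg.differentiableAt (isOpen_ball.mem_nhds hζ₀ball)).hasDerivAt
  set b := deriv g ζ₀ with hb
  let R : ℂ → Cn n := fun τ => g (ζ₀ + τ) - g ζ₀ - τ • b
  have hR0 : R 0 = 0 := by simp [R]
  obtain ⟨σ, hσ0, hσ⟩ : ∃ σ : ℝ, 0 < σ ∧ B * σ ^ 2 < η := by
    refine ⟨Real.sqrt (η / (2 * B)), Real.sqrt_pos.2 (by positivity), ?_⟩
    rw [Real.sq_sqrt (by positivity)]
    field_simp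
    linarith
  have hRo : ∀ᶠ τ in 𝓝 (0:ℂ), ‖R τ‖ ≤ σ * ‖τ‖ := by
    have := hasDerivAt_iff_isLittleO_nhds_zero.1 hgd
    exact this.bound hσ0
  have hRball : ∀ᶠ τ in 𝓝 (0:ℂ), ‖R τ‖ < ρt - ‖w‖ := by
    have e : ∀ᶠ τ in 𝓝 (0:ℂ), σ * ‖τ‖ < ρt - ‖w‖ := by
      have : ContinuousAt (fun τ : ℂ => σ * ‖τ‖) 0 := by fun_prop
      exact this.eventually_lt continuousAt_const (by simpa using hwlt)
    filter_upwards [hRo, e] with τ a1 a2 using a1.trans_lt a2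
  have hAn : ∀ᶠ τ in 𝓝 (0:ℂ), δ < ‖ζ₀ + τ‖ ∧ ‖ζ₀ + τ‖ < s ∧ ‖τ‖ < ‖ζ₀‖ := by
    have k1 : ContinuousAt (fun τ : ℂ => ‖ζ₀ + τ‖) 0 := by fun_prop
    have k2 : ContinuousAt (fun τ : ℂ => ‖τ‖) 0 := by fun_prop
    exact (continuousAt_const.eventually_lt k1 (by simpa using hζδlt)).and
      ((k1.eventually_lt continuousAt_const (by simpa using hζslt)).and
        (k2.eventually_lt continuousAt_const (by simpa using hζ0)))
  obtain ⟨T, hT0, hT⟩ := Metric.eventually_nhds_iff_ball.1 (hRo.and (hRball.and hAn))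
  have hline : ∀ τ : ℂ, g ζ₀ + w + τ • b = g (ζ₀ + τ) + (w - R τ) := by
    intro τ; simp only [R]; abel
  have hS' : ∀ τ : ℂ, ‖τ‖ < T → (w - R τ, ζ₀ + τ) ∈ S := by
    intro τ hτ
    obtain ⟨-, a2, a3, a4, -⟩ := hT τ (by simpa using hτ)
    refine ⟨?_, a3.le, a4.le⟩
    have := norm_sub_le w (R τ)
    simp only [mem_closedBall, dist_zero_right]
    linarith
  let F : ℂ → ℂ := fun τ => κ * Complex.log (1 + τ / ζ₀) - 2 * η * (starRingEnd ℂ ζ₀ * τ)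
    - 2 * B * inner ℂ w (R τ)
  have hζne : ζ₀ ≠ 0 := norm_pos_iff.1 hζ0
  have hslit : ∀ τ : ℂ, ‖τ‖ < T → 1 + τ / ζ₀ ∈ Complex.slitPlane := by
    intro τ hτ
    obtain ⟨-, -, -, -, a5⟩ := hT τ (by simpa using hτ)
    refine Complex.mem_slitPlane_of_norm_lt_one ?_
    rw [norm_div, div_lt_one hζ0]; exact a5
  have hRd : DifferentiableOn ℂ R (ball 0 T) := by
    have k : DifferentiableOn ℂ (fun τ => g (ζ₀ + τ)) (ball 0 T) := by
      refine hg.comp (by fun_prop) ?_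
      intro τ hτ
      obtain ⟨-, -, -, a4, -⟩ := hT τ hτ
      simpa using a4.trans hs1
    exact (k.sub_const _).sub (by fun_prop)
  have hFd : DifferentiableOn ℂ F (ball 0 T) := by
    have k1 : DifferentiableOn ℂ (fun τ => Complex.log (1 + τ / ζ₀)) (ball 0 T) := by
      refine DifferentiableOn.clog (by fun_prop) ?_
      intro τ hτ
      exact hslit τ (by simpa using hτ)
    have k2 : DifferentiableOn ℂ (fun τ => inner ℂ w (R τ)) (ball 0 T) :=
      (innerSL ℂ w).differentiable.comp_differentiableOn hRd
    exact ((k1.const_mul _).sub (by fun_prop)).sub (k2.const_mul _)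
  have hF0 : F 0 = 0 := by simp [F, hR0]
  have ht0 : 0 < T / 2 := by linarith
  have key := hsub.holo (a := g ζ₀ + w) (b := b) hxD ht0 (half_lt_self hT0) (fun τ hτ => by
      have := hS' τ (by linarith)
      rw [hline]
      exact hrmem _ this.2.2 _ (by simpa using this.1)) (F := F)
      (v (g ζ₀ + w) - η * (T / 2) ^ 2 + B * (σ * (T / 2)) ^ 2) hFd (fun τ hτ => by
    have hτT : ‖τ‖ < T := by linarith
    have hle : Ψ (w - R τ, ζ₀ + τ) ≤ Ψ (w, ζ₀) := hmax (hS' τ hτT)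
    simp only [Ψ] at hle
    rw [hline]
    obtain ⟨a1, -, a3, -, -⟩ := hT τ (by simpa using hτT)
    have hRs : ‖R τ‖ ^ 2 ≤ (σ * (T / 2)) ^ 2 := by
      rw [hτ] at a1
      exact pow_le_pow_left₀ (norm_nonneg _) a1 2
    have e1 : ‖w - R τ‖ ^ 2 = ‖w‖ ^ 2 - 2 * (inner ℂ w (R τ)).re + ‖R τ‖ ^ 2 :=
      norm_sub_sq (𝕜 := ℂ) w (R τ)
    have e2 : ‖ζ₀ + τ‖ ^ 2 = ‖ζ₀‖ ^ 2 + 2 * (starRingEnd ℂ ζ₀ * τ).re + (T / 2) ^ 2 := by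
      rw [← hτ, Complex.sq_norm, Complex.sq_norm, Complex.sq_norm]
      simp [Complex.normSq_apply]
      ring
    have e3 : Real.log ‖ζ₀ + τ‖ = Real.log ‖ζ₀‖ + (Complex.log (1 + τ / ζ₀)).re := by
      rw [Complex.log_re, ← Real.log_mul hζ0.ne', ← norm_mul]
      · congr 2; field_simp
      · exact norm_ne_zero_iff.2 (Complex.slitPlane_ne_zero (hslit τ hτT))
    have e4 : (F τ).re = κ * (Complex.log (1 + τ / ζ₀)).re
        - 2 * η * (starRingEnd ℂ ζ₀ * τ).re - 2 * B * (inner ℂ w (R τ)).re := by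
      have : F τ = ((κ : ℝ) : ℂ) * Complex.log (1 + τ / ζ₀)
        - ((2 * η : ℝ) : ℂ) * (starRingEnd ℂ ζ₀ * τ) - ((2 * B : ℝ) : ℂ) * inner ℂ w (R τ) := by
        simp [F]
      rw [this, Complex.sub_re, Complex.sub_re, Complex.re_ofReal_mul, Complex.re_ofReal_mul,
        Complex.re_ofReal_mul]
    rw [e4]
    rw [e1, e2, e3] at hle
    have : B * ‖R τ‖ ^ 2 ≤ B * (σ * (T / 2)) ^ 2 := mul_le_mul_of_nonneg_left hRs hB0.le
    linarith)
  rw [hF0, Complex.zero_re] at key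
  have : 0 < (T / 2) ^ 2 := by positivity
  have e : B * (σ * (T / 2)) ^ 2 = B * σ ^ 2 * (T / 2) ^ 2 := by ring
  rw [e] at key
  have : B * σ ^ 2 * (T / 2) ^ 2 < η * (T / 2) ^ 2 := by gcongr
  linarith

lemma trunc_coe {x : EReal} {c : ℝ} (hx : x ≤ 0) :
    (((max x (c : EReal)).toReal : ℝ) : EReal) = max x c := by
  refine EReal.coe_toReal ?_ ?_
  · intro h
    rcases max_choice x (c : EReal) with h' | h'
    · rw [h'] at h; rw [h] at hx; simp at hx
    · rw [h'] at h; exact EReal.coe_ne_top _ h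
  · intro h
    have : (c : EReal) ≤ ⊥ := h ▸ le_max_right x (c : EReal)
    simp at this

lemma trunc_props {n : ℕ} {D : Set (Cn n)} {φ : Cn n → EReal} (hφ : PSHOn φ D)
    (h0 : ∀ x ∈ D, φ x ≤ 0) (c : ℝ) :
    UpperSemicontinuousOn (fun x => (max (φ x) (c : EReal)).toReal) D ∧
      SubMean (fun x => (max (φ x) (c : EReal)).toReal) D := by
  constructor
  · intro x hx y hy
    have hy' : max (φ x) (c : EReal) < (y : EReal) := by
      rw [← trunc_coe (h0 x hx)]; exact_mod_cast hy
    have h1 := hφ.1 x hx y ((le_max_left _ _).trans_lt hy')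
    filter_upwards [h1, self_mem_nhdsWithin] with z hz hzD
    have : max (φ z) (c : EReal) < (y : EReal) := max_lt hz ((le_max_right _ _).trans_lt hy')
    rw [← trunc_coe (h0 z hzD)] at this
    exact_mod_cast this
  · intro a ha b r hr hmem g hg hle
    have hle' : ∀ θ : ℝ, max (φ (a + ((r : ℂ) * Complex.exp (θ * Complex.I)) • b)) (c : EReal)
        ≤ (g θ : EReal) := by
      intro θ
      rw [← trunc_coe (h0 _ (hmem _ (by simp [abs_of_pos hr])))]
      exact_mod_cast hle θ
    have h1 := hφ.2 a ha b r hr hmem g hg (fun θ => (le_max_left _ _).trans (hle' θ))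
    have h2 : c ≤ (1 / (2 * Real.pi)) * ∫ θ in (0:ℝ)..(2 * Real.pi), g θ := by
      have : ∫ θ in (0:ℝ)..(2 * Real.pi), c ≤ ∫ θ in (0:ℝ)..(2 * Real.pi), g θ := by
        refine intervalIntegral.integral_mono_on (by positivity)
          (continuous_const.intervalIntegrable _ _) (hg.intervalIntegrable _ _) (fun θ _ => ?_)
        exact_mod_cast (le_max_right _ _).trans (hle' θ)
      simp only [intervalIntegral.integral_const, sub_zero, smul_eq_mul] at this
      rw [one_div, ← div_eq_inv_mul, le_div_iff₀ (by positivity)]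
      linarith
    have h3 := max_le h1 (EReal.coe_le_coe_iff.2 h2)
    rw [← trunc_coe (h0 a ha)] at h3
    exact_mod_cast h3

/-- Disc automorphism exchanging `0` and `a`. -/
lemma mobius_props (a : ℂ) (ha : ‖a‖ < 1) :
    DifferentiableOn ℂ (fun ζ => (a - ζ) / (1 - starRingEnd ℂ a * ζ)) (ball 0 1) ∧
      MapsTo (fun ζ => (a - ζ) / (1 - starRingEnd ℂ a * ζ)) (ball 0 1) (ball 0 1) := by
  have hne : ∀ ζ ∈ ball (0:ℂ) 1, 1 - starRingEnd ℂ a * ζ ≠ 0 := by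
    intro ζ hζ h
    have h1 : starRingEnd ℂ a * ζ = 1 := (sub_eq_zero.1 h).symm
    have h2 : ‖a‖ * ‖ζ‖ = 1 := by
      have := congrArg norm h1
      simpa using this
    have h3 : ‖ζ‖ < 1 := by simpa using hζ
    nlinarith [norm_nonneg a, norm_nonneg ζ]
  refine ⟨DifferentiableOn.div (by fun_prop) (by fun_prop) hne, ?_⟩
  intro ζ hζ
  have h3 : ‖ζ‖ < 1 := by simpa using hζ
  simp only [mem_ball, dist_zero_right, norm_div]
  rw [div_lt_one (norm_pos_iff.2 (hne ζ hζ))]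
  refine lt_of_pow_lt_pow_left₀ 2 (norm_nonneg _) ?_
  have h4 : ‖1 - starRingEnd ℂ a * ζ‖ ^ 2 - ‖a - ζ‖ ^ 2 = (1 - ‖a‖ ^ 2) * (1 - ‖ζ‖ ^ 2) := by
    simp only [Complex.sq_norm, Complex.normSq_apply]
    simp
    ring
  have h5 : ‖a‖ ^ 2 < 1 := pow_lt_one₀ (norm_nonneg _) ha two_ne_zero
  have h6 : ‖ζ‖ ^ 2 < 1 := pow_lt_one₀ (norm_nonneg _) h3 two_ne_zero
  nlinarith

lemma exit_bound {n : ℕ} (D : Set (Cn n)) (hD : IsOpen D)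
    (hDb : Bornology.IsBounded D) (p : Cn n) (hp : p ∈ frontier D)
    (φ : Cn n → EReal) (hφ : IsPshPeakFn D p φ)
    (U : Set (Cn n)) (hU : IsOpen U) (hpU : p ∈ U)
    (V : Set (Cn n)) (hVc : IsCompact (closure V))
    (hVU : closure V ⊆ U) :
    ∃ κ : ℝ, 0 < κ ∧ ∀ f : ℂ → Cn n, DifferentiableOn ℂ f (ball 0 1) →
      MapsTo f (ball 0 1) D → f 0 ∈ V → ∀ ζ ∈ ball (0:ℂ) 1, f ζ ∉ U →
      φ (f 0) ≤ ((κ * Real.log ‖ζ‖ : ℝ) : EReal) := by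
  have hpD : p ∉ D := by
    intro h
    rw [hD.frontier_eq] at hp
    exact hp.2 h
  have h0 : ∀ x ∈ D, φ x ≤ 0 := by
    intro x hx
    have hne : p ≠ x := fun h => hpD (h ▸ hx)
    obtain ⟨c, hc, h⟩ := hφ.2.2 {x}ᶜ (isOpen_compl_singleton.mem_nhds hne)
    exact (h x ⟨hx, by simp⟩).trans (by exact_mod_cast hc.le)
  obtain ⟨ρ, hρ, hρU⟩ := Metric.isOpen_iff.1 hU p hpU
  obtain ⟨c₀, hc₀, hc⟩ := hφ.2.2 (ball p (ρ / 2)) (ball_mem_nhds _ (by linarith))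
  obtain ⟨d, hd, hdU⟩ := hVc.exists_thickening_subset_open hU hVU
  obtain ⟨M, hM0, hM⟩ := hDb.exists_pos_norm_le
  obtain ⟨δ, hδ0, hδ1, hδρ, hδd⟩ : ∃ δ : ℝ, 0 < δ ∧ δ < 1 ∧ 2 * M * δ ≤ ρ / 4 ∧
      2 * M * δ ≤ d := by
    refine ⟨min (1 / 2) (min (ρ / 4 / (2 * M)) (d / (2 * M))), by positivity, ?_, ?_, ?_⟩
    · exact (min_le_left _ _).trans_lt (by norm_num)
    · rw [mul_comm, ← le_div_iff₀ (by positivity)]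
      exact (min_le_right _ _).trans (min_le_left _ _)
    · rw [mul_comm, ← le_div_iff₀ (by positivity)]
      exact (min_le_right _ _).trans (min_le_right _ _)
  have hlog : Real.log δ < 0 := Real.log_neg hδ0 hδ1
  have hκ : 0 < c₀ / Real.log δ := div_pos_of_neg_of_neg hc₀ hlog
  refine ⟨c₀ / Real.log δ, hκ, ?_⟩
  intro f hf hfD hfV ζ₁ hζ₁ hfU
  obtain ⟨husc, hsm⟩ := trunc_props hφ.1 h0 c₀
  obtain ⟨hψd, hψm⟩ := mobius_props ζ₁ (by simpa using hζ₁)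
  set ψ : ℂ → ℂ := fun ζ => (ζ₁ - ζ) / (1 - starRingEnd ℂ ζ₁ * ζ) with hψ
  have hψ0 : ψ 0 = ζ₁ := by simp [hψ]
  have hψ1 : ψ ζ₁ = 0 := by simp [hψ]
  have hgd : DifferentiableOn ℂ (f ∘ ψ) (ball 0 1) := hf.comp hψd hψm
  have hgD : MapsTo (f ∘ ψ) (ball 0 1) D := hfD.comp hψm
  have hdist : ∀ ζ ∈ ball (0:ℂ) 1, dist ((f ∘ ψ) ζ) (f ζ₁) ≤ 2 * M * ‖ζ‖ := by
    intro ζ hζ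
    have := Complex.dist_le_div_mul_dist_of_mapsTo_ball (R₂ := 2 * M) hgd (fun z hz => by
      rw [mem_closedBall, dist_eq_norm]
      have k1 := hM _ (hgD hz)
      have k2 := hM _ (hgD (mem_ball_self one_pos))
      exact (norm_sub_le _ _).trans (by linarith)) hζ
    simpa [hψ0] using this
  have hζn : ‖ζ₁‖ < 1 := by simpa using hζ₁
  have hζδ : δ ≤ ‖ζ₁‖ := by
    by_contra hlt
    push Not at hlt
    have h1 := hdist ζ₁ hζ₁
    simp only [Function.comp, hψ1] at h1
    apply hfU
    apply hdU
    rw [mem_thickening_iff]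
    refine ⟨f 0, subset_closure hfV, ?_⟩
    rw [dist_comm]
    nlinarith
  have hfp : ρ ≤ dist (f ζ₁) p := by
    by_contra hlt
    push Not at hlt
    exact hfU (hρU hlt)
  have hv := core hD husc hsm (c := -c₀) (κ := c₀ / Real.log δ) (δ := δ) (g := f ∘ ψ)
    (ρ := ρ / 8) (ζ₁ := ζ₁)
    (fun x hx => by
      have : max (φ x) (c₀ : EReal) ≤ ((0 : ℝ) : EReal) :=
        max_le (h0 x hx) (by exact_mod_cast hc₀.le)
      rw [← trunc_coe (h0 x hx)] at this
      exact_mod_cast this)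
    hκ hδ0 hδ1 (by rw [div_mul_cancel₀ _ hlog.ne]; simp) hgd hgD (by linarith)
    (fun ζ hζ w hw hD' => by
      have k1 := hdist ζ (by simpa using hζ.trans_lt hδ1)
      have k2 : 2 * M * ‖ζ‖ ≤ ρ / 4 := le_trans (by gcongr) hδρ
      have k3 : dist ((f ∘ ψ) ζ + w) ((f ∘ ψ) ζ) ≤ ρ / 8 := by simpa using hw
      have k4 := dist_triangle4 (f ζ₁) ((f ∘ ψ) ζ) ((f ∘ ψ) ζ + w) p
      have k5 : (f ∘ ψ) ζ + w ∉ ball p (ρ / 2) := by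
        rw [mem_ball]
        rw [dist_comm] at k1 k3
        intro h
        linarith
      have k6 := max_le (hc _ ⟨hD', k5⟩) (le_refl (c₀ : EReal))
      rw [← trunc_coe (h0 _ hD')] at k6
      simp only [neg_neg]
      exact_mod_cast k6) hζδ hζn
  have hz : f 0 ∈ D := hfD (mem_ball_self one_pos)
  simp only [Function.comp, hψ1] at hv
  refine (le_max_left (φ (f 0)) (c₀ : EReal)).trans ?_
  rw [← trunc_coe (h0 _ hz)]
  exact_mod_cast hv

/-- For a bounded domain, the quantitative localization of the Kobayashi
metric near a psh peak point holds for an arbitrary neighborhood `V ⋐ U` of `p`. -/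
theorem kobayashi_localization_peak_bounded {n : ℕ} (D : Set (Cn n)) (hD : IsOpen D)
    (hDconn : IsConnected D) (hDb : Bornology.IsBounded D) (p : Cn n) (hp : p ∈ frontier D)
    (φ : Cn n → EReal) (hφ : IsPshPeakFn D p φ)
    (U : Set (Cn n)) (hU : IsOpen U) (hUb : Bornology.IsBounded U) (hpU : p ∈ U)
    (V : Set (Cn n)) (hV : IsOpen V) (hpV : p ∈ V) (hVc : IsCompact (closure V))
    (hVU : closure V ⊆ U) :
    ∃ m : ℝ, 0 < m ∧ ∀ z ∈ D ∩ V, ∀ X : Cn n,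
      kobayashi D z X ≥ erexp ((m : EReal) * φ z) * kobayashi (D ∩ U) z X := by
  obtain ⟨κ, hκ, hex⟩ := exit_bound D hD hDb p hp φ hφ U hU hpU V hVc hVU
  refine ⟨κ⁻¹, inv_pos.2 hκ, ?_⟩
  rintro z ⟨hzD, hzV⟩ X
  have hpD : p ∉ D := by
    intro h
    rw [hD.frontier_eq] at hp
    exact hp.2 h
  have hneg : φ z < 0 := by
    have hne : p ≠ z := fun h => hpD (h ▸ hzD)
    obtain ⟨c, hc, h⟩ := hφ.2.2 {z}ᶜ (isOpen_compl_singleton.mem_nhds hne)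
    exact (h z ⟨hzD, by simp⟩).trans_lt (by exact_mod_cast hc)
  rw [ge_iff_le]
  induction hy : φ z with
  | bot =>
    rw [EReal.coe_mul_bot_of_pos (inv_pos.2 hκ)]
    simpa [erexp] using kobayashi_nonneg D z X
  | top => rw [hy] at hneg; simp at hneg
  | coe y =>
    have hyneg : y < 0 := by rw [hy] at hneg; exact_mod_cast hneg
    have hE : erexp (((κ⁻¹ : ℝ) : EReal) * (y : EReal)) = Real.exp (κ⁻¹ * y) := by
      rw [← EReal.coe_mul]
      simp only [erexp, EReal.coe_ne_bot, EReal.coe_ne_top, if_false, EReal.toReal_coe]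
    rw [hE]
    have hE0 : 0 < Real.exp (κ⁻¹ * y) := Real.exp_pos _
    have hE1 : Real.exp (κ⁻¹ * y) ≤ 1 :=
      Real.exp_le_one_iff.2 (mul_nonpos_of_nonneg_of_nonpos (inv_pos.2 hκ).le hyneg.le)
    have hElog : Real.log (Real.exp (κ⁻¹ * y)) = κ⁻¹ * y := Real.log_exp _
    generalize Real.exp (κ⁻¹ * y) = E at hE0 hE1 hElog
    refine le_csInf ?_ ?_
    · -- the set of competitors is nonempty
      obtain ⟨ρ, hρ, hρD⟩ := Metric.isOpen_iff.1 hD z hzD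
      have hX : 0 < ‖X‖ + 1 := by positivity
      obtain ⟨s, hs⟩ : ∃ s : ℝ, s = ρ / (‖X‖ + 1) := ⟨_, rfl⟩
      have hs0 : 0 < s := by rw [hs]; positivity
      refine ⟨_, ((s : ℂ))⁻¹, rfl, fun ζ => z + ζ • ((s : ℂ) • X), by fun_prop, ?_, by simp, ?_⟩
      · intro ζ hζ
        apply hρD
        have h1 : ‖ζ‖ < 1 := by simpa using hζ
        simp only [mem_ball, dist_self_add_left, norm_smul, Complex.norm_real, Real.norm_eq_abs,
          abs_of_pos hs0]
        have h2 : s * (‖X‖ + 1) = ρ := by rw [hs]; field_simp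
        have h3 : 0 ≤ s * ‖X‖ := by positivity
        nlinarith
      · have : HasDerivAt (fun ζ : ℂ => z + ζ • ((s : ℂ) • X)) ((1 : ℂ) • ((s : ℂ) • X)) 0 :=
          ((hasDerivAt_id (0:ℂ)).smul_const _).const_add z
        rw [this.deriv, one_smul, smul_smul, inv_mul_cancel₀, one_smul]
        exact_mod_cast hs0.ne'
    · rintro _ ⟨α, rfl, f, hf, hfD, hf0, hfX⟩
      have hsmall : ∀ ζ ∈ ball (0:ℂ) 1, (E : ℂ) * ζ ∈ ball (0:ℂ) 1 ∧ ‖(E : ℂ) * ζ‖ < E := by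
        intro ζ hζ
        have h1 : ‖ζ‖ < 1 := by simpa using hζ
        have h2 : ‖(E : ℂ) * ζ‖ < E := by
          rw [norm_mul, Complex.norm_real, Real.norm_eq_abs, abs_of_pos hE0]
          nlinarith
        exact ⟨by simpa using h2.trans_le hE1, h2⟩
      have hmem : ‖α‖ / E ∈ {c : ℝ | ∃ α : ℂ, c = ‖α‖ ∧ ∃ f : ℂ → Cn n,
          DifferentiableOn ℂ f (ball (0:ℂ) 1) ∧ MapsTo f (ball (0:ℂ) 1) (D ∩ U) ∧
          f 0 = z ∧ α • deriv f 0 = X} := by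
        refine ⟨α / E, by simp [abs_of_pos hE0], fun ζ => f ((E : ℂ) * ζ), ?_, ?_, by simpa, ?_⟩
        · exact hf.comp (by fun_prop) (fun ζ hζ => (hsmall ζ hζ).1)
        · intro ζ hζ
          obtain ⟨k1, k2⟩ := hsmall ζ hζ
          refine ⟨hfD k1, ?_⟩
          by_contra hnU
          change f ((E : ℂ) * ζ) ∉ U at hnU
          have h1 := hex f hf hfD (by rwa [hf0]) _ k1 hnU
          rw [hf0, hy] at h1
          have h2 : y ≤ κ * Real.log ‖(E : ℂ) * ζ‖ := by exact_mod_cast h1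
          have hpos : 0 < ‖(E : ℂ) * ζ‖ := by
            rw [norm_pos_iff]
            intro h
            rw [h, hf0] at hnU
            exact hnU (hVU (subset_closure hzV))
          have h3 := Real.log_lt_log hpos k2
          rw [hElog] at h3
          have h4 : κ * Real.log ‖(E : ℂ) * ζ‖ < κ * (κ⁻¹ * y) := mul_lt_mul_of_pos_left h3 hκ
          rw [mul_inv_cancel_left₀ hκ.ne'] at h4
          linarith
        · have hfd : HasDerivAt f (deriv f 0) ((E : ℂ) * 0) := by
            rw [mul_zero]
            exact (hf.differentiableAt (ball_mem_nhds _ one_pos)).hasDerivAt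
          have h1 : HasDerivAt (fun ζ : ℂ => (E : ℂ) * ζ) (E : ℂ) 0 := by
            simpa using (hasDerivAt_id (0:ℂ)).const_mul (E : ℂ)
          have h2 := hfd.scomp (0:ℂ) h1
          have h3 : deriv (fun ζ => f ((E : ℂ) * ζ)) 0 = (E : ℂ) • deriv f 0 := h2.deriv
          rw [h3, smul_smul, div_mul_cancel₀, hfX]
          exact_mod_cast hE0.ne'
      have hle : kobayashi (D ∩ U) z X ≤ ‖α‖ / E := by
        refine csInf_le ⟨0, ?_⟩ hmem
        rintro _ ⟨β, rfl, -⟩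
        exact norm_nonneg _
      rw [le_div_iff₀ hE0] at hle
      linarith
end
end
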